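/- arXiv:math/0209109 — 4 statements merged into one kernel-verified Lean document; each statement's English description precedes it below -/
import Mathlib

section
/- For every n ≥ 1, the map ρ_* : C_*(P_{n+1}; ℤ/2) → C_*(I^n; ℤ/2) induced by the canonical cellular projection P_{n+1} → I^n is a chain map and commutes with the diagonals: ρ_* ∘ ∂ = ∂ ∘ ρ_* and (ρ_* ⊗ ρ_*) ∘ Δ_P = Δ_{I^n} ∘ ρ_*, where Δ_{I^n} is the Serre diagonal of the cube; that is, ρ_* is a map of differential graded coalgebras over ℤ/2. -/
open scoped Classical

namespace SU

/-- min of a finset of naturals (0 for the empty set). -/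
def fmin (s : Finset ℕ) : ℕ := s.min.untopD 0
/-- max of a finset of naturals (0 for the empty set). -/
def fmax (s : Finset ℕ) : ℕ := s.max.unbotD 0

/-- `L` is an ordered partition of the finite set `S`. -/
def IsOrderedPartition (S : Finset ℕ) (L : List (Finset ℕ)) : Prop :=
  (∀ B ∈ L, B ≠ ∅) ∧ List.Pairwise Disjoint L ∧ L.foldr (· ∪ ·) ∅ = S

def StepIncreasing (L : List (Finset ℕ)) : Prop :=
  ∀ j, j + 1 < L.length → fmin (L.getD j ∅) < fmax (L.getD (j+1) ∅)

def StepDecreasing (L : List (Finset ℕ)) : Prop :=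
  ∀ j, j + 1 < L.length → fmin (L.getD (j+1) ∅) < fmax (L.getD j ∅)

/-- maximal strictly decreasing consecutive subwords, in order of occurrence. -/
def decRuns : List ℕ → List (List ℕ)
  | [] => []
  | a :: l =>
    match decRuns l with
    | [] => [[a]]
    | r :: rs => if r.headD 0 < a then (a :: r) :: rs else [a] :: r :: rs

/-- maximal strictly increasing consecutive subwords, in order of occurrence. -/
def incRuns : List ℕ → List (List ℕ)
  | [] => []
  | a :: l =>
    match incRuns l with
    | [] => [[a]]
    | r :: rs => if a < r.headD 0 then (a :: r) :: rs else [a] :: r :: rs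

/-- The word `σ(1) σ(2) ⋯ σ(n)` of a permutation, with values in `{1,…,n}`. -/
def permWord (n : ℕ) (σ : Equiv.Perm (Fin n)) : List ℕ :=
  List.ofFn (fun k => ((σ k : ℕ) + 1))

def decBlocks (w : List ℕ) : List (Finset ℕ) := (decRuns w).map List.toFinset
def incBlocks (w : List ℕ) : List (Finset ℕ) := (incRuns w).map List.toFinset

end SU


open scoped Classical

namespace SU

def inversions (w : List ℕ) : ℕ :=
  ((Finset.range w.length ×ˢ Finset.range w.length).filter
    (fun ab => ab.1 < ab.2 ∧ w.getD ab.2 0 < w.getD ab.1 0)).card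

/-- Sign of the permutation taking the increasing word to the concatenation of the
blocks of `L`, each listed in increasing order. -/
def psgn (L : List (Finset ℕ)) : ℤ :=
  (-1) ^ inversions ((L.map (fun s => s.sort (· ≤ ·))).flatten)

def shuffSgn (M N : Finset ℕ) : ℤ := psgn [M, N]

/-- degree of an ordered partition: `Σ (#block − 1)`. -/
def degp (L : List (Finset ℕ)) : ℕ := (L.map (fun s => s.card - 1)).sum

def eps1 (L : List (Finset ℕ)) : ℕ :=
  ∑ k ∈ Finset.range L.length, (L.length - 1 - k) * (L.getD k ∅).card

def sgn1 (L : List (Finset ℕ)) : ℤ := (-1) ^ eps1 L * psgn L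
def sgn2 (L : List (Finset ℕ)) : ℤ :=
  (-1) ^ (eps1 L + Nat.choose (L.length - 1) 2) * psgn L
def rsgn (L : List (Finset ℕ)) : ℤ :=
  (-1) ^ (∑ k ∈ Finset.range L.length, (L.getD k ∅).card * ((L.getD k ∅).card - 1) / 2)

/-- Entry of a matrix, with `0` outside the index range; `i` counts rows from the top,
`j` counts columns from the left, both 0-based. -/
def entry {q p : ℕ} (M : Matrix (Fin q) (Fin p) ℕ) (i j : ℕ) : ℕ :=
  if h : i < q ∧ j < p then M ⟨i, h.1⟩ ⟨j, h.2⟩ else 0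

def colBlock {q p : ℕ} (M : Matrix (Fin q) (Fin p) ℕ) (j : ℕ) : Finset ℕ :=
  ((Finset.range q).image (fun i => entry M i j)).erase 0

def rowBlock {q p : ℕ} (M : Matrix (Fin q) (Fin p) ℕ) (i : ℕ) : Finset ℕ :=
  ((Finset.range p).image (fun j => entry M i j)).erase 0

/-- column face `c(O) = U_1|⋯|U_p`. -/
def colFace {q p : ℕ} (M : Matrix (Fin q) (Fin p) ℕ) : List (Finset ℕ) :=
  (List.range p).map (colBlock M)

/-- row face `r(O) = V_q|⋯|V_1` (rows listed from bottom to top). -/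
def rowFace {q p : ℕ} (M : Matrix (Fin q) (Fin p) ℕ) : List (Finset ℕ) :=
  ((List.range q).map (rowBlock M)).reverse

/-- set of nonzero entries of a matrix. -/
def entrySet {q p : ℕ} (M : Matrix (Fin q) (Fin p) ℕ) : Finset ℕ :=
  (((Finset.range q) ×ˢ (Finset.range p)).image (fun ij => entry M ij.1 ij.2)).erase 0

def IsOrderedMatrix {q p : ℕ} (M : Matrix (Fin q) (Fin p) ℕ) : Prop :=
  0 < q ∧ 0 < p ∧
  entrySet M = Finset.Icc 1 (p + q - 1) ∧
  (∀ i < q, ∃ j < p, entry M i j ≠ 0) ∧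
  (∀ j < p, ∃ i < q, entry M i j ≠ 0) ∧
  (∀ i₁ j₁ i₂ j₂, entry M i₁ j₁ ≠ 0 → entry M i₂ j₂ ≠ 0 →
      entry M i₁ j₁ = entry M i₂ j₂ → i₁ = i₂ ∧ j₁ = j₂) ∧
  (∀ i j₁ j₂, j₁ < j₂ → entry M i j₁ ≠ 0 → entry M i j₂ ≠ 0 → entry M i j₁ < entry M i j₂) ∧
  (∀ j i₁ i₂, i₁ < i₂ → entry M i₁ j ≠ 0 → entry M i₂ j ≠ 0 → entry M i₁ j < entry M i₂ j)

def IsStepMatrix {q p : ℕ} (M : Matrix (Fin q) (Fin p) ℕ) : Prop :=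
  IsOrderedMatrix M ∧
  (∀ i j₁ j₂ j₃, j₁ ≤ j₂ → j₂ ≤ j₃ → entry M i j₁ ≠ 0 → entry M i j₃ ≠ 0 → entry M i j₂ ≠ 0) ∧
  (∀ j i₁ i₂ i₃, i₁ ≤ i₂ → i₂ ≤ i₃ → entry M i₁ j ≠ 0 → entry M i₃ j ≠ 0 → entry M i₂ j ≠ 0) ∧
  (∃! i, entry M i i ≠ 0) ∧
  (∀ i₁ i₂, entry M (i₁+1) i₁ ≠ 0 → entry M (i₂+1) i₂ ≠ 0 → i₁ = i₂) ∧
  (∀ i₁ i₂, entry M i₁ (i₁+1) ≠ 0 → entry M i₂ (i₂+1) ≠ 0 → i₁ = i₂)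

def DCond {q p : ℕ} (M : Matrix (Fin q) (Fin p) ℕ) (i j : ℕ) : Prop :=
  i + 1 < q ∧ j < p ∧ entry M (i+1) j = 0 ∧ entry M i j ≠ 0 ∧
  (∃ k < p, k ≠ j ∧ entry M i k ≠ 0) ∧
  (∀ ℓ < j, entry M (i+1) ℓ < entry M i j) ∧
  (∀ ℓ, j < ℓ → ℓ < p → entry M (i+1) ℓ ≠ 0 → entry M i j < entry M (i+1) ℓ)

/-- the down-shift operator `D_{i,j}` (0-based indices). -/
noncomputable def Dop {q p : ℕ} (M : Matrix (Fin q) (Fin p) ℕ) (i j : ℕ) :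
    Matrix (Fin q) (Fin p) ℕ :=
  if DCond M i j then
    Matrix.of fun a b =>
      if (a : ℕ) = i ∧ (b : ℕ) = j then 0
      else if (a : ℕ) = i + 1 ∧ (b : ℕ) = j then entry M i j
      else M a b
  else M

def RCond {q p : ℕ} (M : Matrix (Fin q) (Fin p) ℕ) (i j : ℕ) : Prop :=
  j + 1 < p ∧ i < q ∧ entry M i (j+1) = 0 ∧ entry M i j ≠ 0 ∧
  (∃ k < q, k ≠ i ∧ entry M k j ≠ 0) ∧
  (∀ ℓ < i, entry M ℓ (j+1) < entry M i j) ∧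
  (∀ ℓ, i < ℓ → ℓ < q → entry M ℓ (j+1) ≠ 0 → entry M i j < entry M ℓ (j+1))

/-- the right-shift operator `R_{i,j}` (0-based indices). -/
noncomputable def Rop {q p : ℕ} (M : Matrix (Fin q) (Fin p) ℕ) (i j : ℕ) :
    Matrix (Fin q) (Fin p) ℕ :=
  if RCond M i j then
    Matrix.of fun a b =>
      if (a : ℕ) = i ∧ (b : ℕ) = j then 0
      else if (a : ℕ) = i ∧ (b : ℕ) = j + 1 then entry M i j
      else M a b
  else M

inductive Shift
  | D (i j : ℕ)
  | R (i j : ℕ)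

noncomputable def applyShift {q p : ℕ} (g : Shift) (M : Matrix (Fin q) (Fin p) ℕ) :
    Matrix (Fin q) (Fin p) ℕ :=
  match g with
  | .D i j => Dop M i j
  | .R i j => Rop M i j

/-- `F` is obtained from `E` by a sequence of shift operators in which the down-shifts
occur with nondecreasing row indices and the right-shifts with nondecreasing column
indices (the list records the operators in order of application). -/
def DerivedFrom {q p : ℕ} (E F : Matrix (Fin q) (Fin p) ℕ) : Prop :=
  ∃ L : List Shift,
    (∀ i₁ j₁ i₂ j₂, List.Sublist [Shift.D i₁ j₁, Shift.D i₂ j₂] L → i₁ ≤ i₂) ∧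
    (∀ i₁ j₁ i₂ j₂, List.Sublist [Shift.R i₁ j₁, Shift.R i₂ j₂] L → j₁ ≤ j₂) ∧
    F = L.foldl (fun M g => applyShift g M) E

def IsConfigMatrix {q p : ℕ} (F : Matrix (Fin q) (Fin p) ℕ) : Prop :=
  IsOrderedMatrix F ∧ ∃ E, IsStepMatrix E ∧ DerivedFrom E F

/-- configuration sign of `F` derived from the step matrix `E`. -/
def csgnFrom {q p : ℕ} (E F : Matrix (Fin q) (Fin p) ℕ) : ℤ :=
  (-1) ^ Nat.choose q 2 * rsgn (colFace E) * sgn1 (rowFace F) * sgn2 (colFace E) *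
    sgn2 (colFace F)

noncomputable def csgn {q p : ℕ} (F : Matrix (Fin q) (Fin p) ℕ) : ℤ :=
  if h : ∃ E, IsStepMatrix E ∧ DerivedFrom E F then csgnFrom h.choose F else 1

end SU
section CoreC
open scoped Classical

namespace SU

/-- the row (0-based) of column `j` containing the value `v`. -/
noncomputable def rowOf {q p : ℕ} (M : Matrix (Fin q) (Fin p) ℕ) (j v : ℕ) : ℕ :=
  if h : ∃ i, i < q ∧ entry M i j = v then h.choose else q

/-- the column (0-based) of row `i` containing the value `v`. -/
noncomputable def colOf {q p : ℕ} (M : Matrix (Fin q) (Fin p) ℕ) (i v : ℕ) : ℕ :=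
  if h : ∃ j, j < p ∧ entry M i j = v then h.choose else p

/-- `R_{M_j}`: right-shifts moving each entry of `S` from column `j` to column `j+1`
(0-based), applied in increasing order of the entries. -/
noncomputable def applyRset {q p : ℕ} (M : Matrix (Fin q) (Fin p) ℕ) (j : ℕ) (S : Finset ℕ) :
    Matrix (Fin q) (Fin p) ℕ :=
  (S.sort (· ≤ ·)).foldl (fun acc v => Rop acc (rowOf acc j v) j) M

/-- `D_{N_i}`: down-shifts moving each entry of `S` from row `i` to row `i+1`
(0-based), applied in increasing order of the entries. -/
noncomputable def applyDset {q p : ℕ} (M : Matrix (Fin q) (Fin p) ℕ) (i : ℕ) (S : Finset ℕ) :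
    Matrix (Fin q) (Fin p) ℕ :=
  (S.sort (· ≤ ·)).foldl (fun acc v => Dop acc i (colOf acc i v)) M

/-- `D_{N_{q−1}} ⋯ D_{N_1} R_{M_{p−1}} ⋯ R_{M_1} E`, where `Mf j` is the set `M_j`
(`1 ≤ j ≤ p−1`) and `Nf i` is the set `N_i` (`1 ≤ i ≤ q−1`). -/
noncomputable def structComposite {q p : ℕ} (E : Matrix (Fin q) (Fin p) ℕ)
    (Mf Nf : ℕ → Finset ℕ) : Matrix (Fin q) (Fin p) ℕ :=
  (List.range (q-1)).foldl (fun acc i => applyDset acc i (Nf (i+1)))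
    ((List.range (p-1)).foldl (fun acc j => applyRset acc j (Mf (j+1))) E)

variable (K : Type) [CommRing K]

/-- boundary of a basis element of `C_*(P)`. -/
noncomputable def bnd (u : List (Finset ℕ)) : (List (Finset ℕ)) →₀ K :=
  ∑ k ∈ Finset.range u.length,
    ∑ M ∈ (u.getD k ∅).powerset,
      if M ≠ ∅ ∧ M ≠ u.getD k ∅ then
        ((((-1 : ℤ) ^ (degp (u.take k) + M.card)) * shuffSgn M (u.getD k ∅ \ M) : ℤ) : K) •
          Finsupp.single (u.take k ++ M :: (u.getD k ∅ \ M) :: u.drop (k+1)) (1 : K)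
      else 0

/-- `Δ_P` on the top cell `{1,…,m}`: the sum of `csgn F · c(F) ⊗ r(F)` over all
configuration matrices `F` with nonzero entry set `{1,…,m}` (with `Δ_P({1}) = {1}⊗{1}`). -/
noncomputable def deltaTop (m : ℕ) : (List (Finset ℕ) × List (Finset ℕ)) →₀ K :=
  if m = 1 then Finsupp.single ([{1}], [{1}]) 1
  else
    ∑ qq ∈ Finset.Icc 1 m, ∑ pp ∈ Finset.Icc 1 m,
      ∑ G : Fin qq → Fin pp → Fin (m+1),
        if IsConfigMatrix (Matrix.of fun i j => ((G i j : ℕ))) ∧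
            entrySet (Matrix.of fun i j => ((G i j : ℕ))) = Finset.Icc 1 m then
          ((csgn (Matrix.of fun i j => ((G i j : ℕ))) : ℤ) : K) •
            Finsupp.single (colFace (Matrix.of fun i j => ((G i j : ℕ))),
                            rowFace (Matrix.of fun i j => ((G i j : ℕ)))) 1
        else 0

/-- relabel a subset of `{1,…,#U}` along the order isomorphism `{1,…,#U} ≅ U`. -/
def relabel (U : Finset ℕ) (s : Finset ℕ) : Finset ℕ :=
  s.image (fun i => (U.sort (· ≤ ·)).getD (i - 1) 0)

/-- `Δ_P` on a basis element, via the standard comultiplicative extension with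
Koszul signs. -/
noncomputable def deltaFun : List (Finset ℕ) → ((List (Finset ℕ) × List (Finset ℕ)) →₀ K)
  | [] => Finsupp.single ([], []) 1
  | U :: L =>
      (deltaTop K U.card).sum fun ab c₁ =>
        (deltaFun L).sum fun ab' c₂ =>
          (c₁ * c₂ * (((-1 : ℤ) ^ (degp ab.2 * degp ab'.1) : ℤ) : K)) •
            Finsupp.single (ab.1.map (relabel U) ++ ab'.1, ab.2.map (relabel U) ++ ab'.2) 1

/-- linear extension of `Δ_P`. -/
noncomputable def deltaChain (f : (List (Finset ℕ)) →₀ K) :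
    (List (Finset ℕ) × List (Finset ℕ)) →₀ K :=
  f.sum fun u c => c • deltaFun K u

/-- `∂⊗1 + 1⊗∂` on the (concrete model of the) tensor square. -/
noncomputable def bndTensor (t : (List (Finset ℕ) × List (Finset ℕ)) →₀ K) :
    (List (Finset ℕ) × List (Finset ℕ)) →₀ K :=
  t.sum fun ab c =>
    c • ((bnd K ab.1).sum (fun a' c' => c' • Finsupp.single (a', ab.2) (1 : K)) +
         (((-1 : ℤ) ^ degp ab.1 : ℤ) : K) •
           (bnd K ab.2).sum (fun b' c' => c' • Finsupp.single (ab.1, b') (1 : K)))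

end SU
end CoreC
section Cube
open scoped Classical

namespace SU

/-- `s` is a set of consecutive integers. -/
def IsInterval (s : Finset ℕ) : Prop :=
  ∀ a ∈ s, ∀ b ∈ s, ∀ x, a ≤ x → x ≤ b → x ∈ s

/-- index of the block of `u` containing `x`. -/
def blockIdx (u : List (Finset ℕ)) (x : ℕ) : ℕ :=
  u.findIdx (fun s => decide (x ∈ s))

/-- The cube cell associated to a partition whose blocks are intervals.  Coordinates:
`0 = [0]`, `1 = [1]`, `2 = [I]`; coordinate `i` (0-based, comparing `i+1` and `i+2`)
is `[I]` if `i+1` and `i+2` lie in the same block, `[0]` if the block of `i+1` precedes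
the block of `i+2`, and `[1]` otherwise. -/
def rhoCode (n : ℕ) (u : List (Finset ℕ)) : Fin n → Fin 3 := fun i =>
  if blockIdx u ((i : ℕ) + 1) = blockIdx u ((i : ℕ) + 2) then 2
  else if blockIdx u ((i : ℕ) + 1) < blockIdx u ((i : ℕ) + 2) then 0 else 1

/-- `ρ_*` on a basis element: the corresponding cube cell if all blocks are intervals,
and `0` otherwise. -/
noncomputable def rhoBasis (n : ℕ) (u : List (Finset ℕ)) : (Fin n → Fin 3) →₀ ZMod 2 :=
  if ∀ s ∈ u, IsInterval s then Finsupp.single (rhoCode n u) 1 else 0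

noncomputable def rhoMap (n : ℕ) (f : (List (Finset ℕ)) →₀ ZMod 2) :
    (Fin n → Fin 3) →₀ ZMod 2 :=
  f.sum fun u c => c • rhoBasis n u

/-- mod 2 cubical boundary: `∂[I] = [0] + [1]`, extended multiplicatively. -/
noncomputable def cubeBnd (n : ℕ) (c : Fin n → Fin 3) : (Fin n → Fin 3) →₀ ZMod 2 :=
  ∑ i : Fin n,
    if c i = 2 then
      Finsupp.single (Function.update c i 0) (1 : ZMod 2) +
        Finsupp.single (Function.update c i 1) 1
    else 0

noncomputable def cubeBndMap (n : ℕ) (f : (Fin n → Fin 3) →₀ ZMod 2) :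
    (Fin n → Fin 3) →₀ ZMod 2 :=
  f.sum fun c k => k • cubeBnd n c

/-- Serre diagonal of the cube:  `Δ[I] = [0]⊗[I] + [I]⊗[1]`, extended
multiplicatively (mod 2). -/
noncomputable def cubeDiag (n : ℕ) (c : Fin n → Fin 3) :
    ((Fin n → Fin 3) × (Fin n → Fin 3)) →₀ ZMod 2 :=
  ∑ S ∈ (Finset.univ.filter (fun i => c i = 2)).powerset,
    Finsupp.single
      ((fun i => if c i = 2 then (if i ∈ S then 2 else 0) else c i),
       (fun i => if c i = 2 then (if i ∈ S then 1 else 2) else c i)) 1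

noncomputable def cubeDiagMap (n : ℕ) (f : (Fin n → Fin 3) →₀ ZMod 2) :
    ((Fin n → Fin 3) × (Fin n → Fin 3)) →₀ ZMod 2 :=
  f.sum fun c k => k • cubeDiag n c

/-- `ρ_* ⊗ ρ_*` on the concrete model of the tensor square. -/
noncomputable def rhoTensor (n : ℕ)
    (t : (List (Finset ℕ) × List (Finset ℕ)) →₀ ZMod 2) :
    ((Fin n → Fin 3) × (Fin n → Fin 3)) →₀ ZMod 2 :=
  t.sum fun ab k =>
    k • ((rhoBasis n ab.1).sum fun x kx =>
          (rhoBasis n ab.2).sum fun y ky =>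
            (kx * ky) • Finsupp.single (x, y) (1 : ZMod 2))

/-- the matrix `M` has the value `v` (`1 ≤ v ≤ m`) exactly at position `(r v, c v)`. -/
def Rep {q p : ℕ} (m : ℕ) (r c : ℕ → ℕ) (M : Matrix (Fin q) (Fin p) ℕ) : Prop :=
  ∀ i j v, v ≠ 0 → (entry M i j = v ↔ v ≤ m ∧ r v = i ∧ c v = j)

lemma entry_lt {q p : ℕ} {M : Matrix (Fin q) (Fin p) ℕ} {i j : ℕ} (h : entry M i j ≠ 0) :
    i < q ∧ j < p := by
  unfold entry at h
  by_contra h'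
  simp [h'] at h

lemma Rep.at {q p m : ℕ} {r c : ℕ → ℕ} {M : Matrix (Fin q) (Fin p) ℕ} (h : Rep m r c M)
    {v : ℕ} (h0 : v ≠ 0) (hm : v ≤ m) : entry M (r v) (c v) = v :=
  (h _ _ v h0).2 ⟨hm, rfl, rfl⟩

lemma Rep.lt {q p m : ℕ} {r c : ℕ → ℕ} {M : Matrix (Fin q) (Fin p) ℕ} (h : Rep m r c M)
    {v : ℕ} (h0 : v ≠ 0) (hm : v ≤ m) : r v < q ∧ c v < p :=
  entry_lt (M := M) (by rw [h.at h0 hm]; exact h0)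

lemma Rep.of_ne {q p m : ℕ} {r c : ℕ → ℕ} {M : Matrix (Fin q) (Fin p) ℕ} (h : Rep m r c M)
    {i j : ℕ} (h0 : entry M i j ≠ 0) :
    entry M i j ≤ m ∧ r (entry M i j) = i ∧ c (entry M i j) = j :=
  (h _ _ _ h0).1 rfl

lemma Rep.unique {q p q' p' m : ℕ} {r c : ℕ → ℕ} {M : Matrix (Fin q) (Fin p) ℕ}
    {M' : Matrix (Fin q') (Fin p') ℕ} (h : Rep m r c M) (h' : Rep m r c M') (i j : ℕ) :
    entry M i j = entry M' i j := by
  by_cases h0 : entry M i j = 0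
  · by_cases h1 : entry M' i j = 0
    · rw [h0, h1]
    · exact (h _ _ _ h1).2 (h'.of_ne h1)
  · exact ((h' _ _ _ h0).2 (h.of_ne h0)).symm

lemma Rep.congr {q p m : ℕ} {r c r' c' : ℕ → ℕ} {M : Matrix (Fin q) (Fin p) ℕ}
    (h : Rep m r c M) (hr : ∀ v, v ≠ 0 → v ≤ m → r v = r' v)
    (hc : ∀ v, v ≠ 0 → v ≤ m → c v = c' v) : Rep m r' c' M := by
  intro i j v hv
  rw [h i j v hv]
  constructor
  · rintro ⟨a, b, d⟩
    exact ⟨a, by rw [← hr v hv a, b], by rw [← hc v hv a, d]⟩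
  · rintro ⟨a, b, d⟩
    exact ⟨a, by rw [hr v hv a, b], by rw [hc v hv a, d]⟩

lemma entry_ext {q p : ℕ} {M M' : Matrix (Fin q) (Fin p) ℕ}
    (h : ∀ i j, entry M i j = entry M' i j) : M = M' := by
  ext a b
  have := h a b
  simpa [entry] using this

lemma exists_rep (q p m : ℕ) (r c : ℕ → ℕ)
    (hr : ∀ v, v ≠ 0 → v ≤ m → r v < q) (hc : ∀ v, v ≠ 0 → v ≤ m → c v < p)
    (hinj : ∀ v w, v ≠ 0 → v ≤ m → w ≠ 0 → w ≤ m → r v = r w → c v = c w → v = w) :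
    ∃ M : Matrix (Fin q) (Fin p) ℕ, Rep m r c M := by
  refine ⟨Matrix.of fun a b =>
    if h : ∃ v, v ≠ 0 ∧ v ≤ m ∧ r v = a ∧ c v = b then h.choose else 0, ?_⟩
  intro i j v hv
  constructor
  · intro h
    have hlt := entry_lt (by rw [h]; exact hv)
    rw [entry, dif_pos hlt] at h
    simp only [Matrix.of_apply] at h
    split_ifs at h with h'
    · have := h'.choose_spec
      rw [h] at this
      exact this.2
    · exact absurd h.symm hv
  · rintro ⟨hm, rfl, rfl⟩
    have h' : ∃ w, w ≠ 0 ∧ w ≤ m ∧ r w = r v ∧ c w = c v := ⟨v, hv, hm, rfl, rfl⟩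
    rw [entry, dif_pos ⟨hr v hv hm, hc v hv hm⟩]
    simp only [Matrix.of_apply]
    rw [dif_pos h']
    have := h'.choose_spec
    exact hinj _ _ this.1 this.2.1 hv hm this.2.2.1 this.2.2.2

lemma entry_Dop {q p : ℕ} {M : Matrix (Fin q) (Fin p) ℕ} {i j : ℕ} (h : DCond M i j)
    (a b : ℕ) : entry (Dop M i j) a b =
      if a = i ∧ b = j then 0 else if a = i + 1 ∧ b = j then entry M i j else entry M a b := by
  have h1 := h.1
  have h2 := h.2.1
  by_cases hab : a < q ∧ b < p
  · rw [entry, dif_pos hab, Dop, if_pos h]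
    simp only [Matrix.of_apply]
    conv_rhs => rw [show entry M a b = M ⟨a, hab.1⟩ ⟨b, hab.2⟩ from by rw [entry, dif_pos hab]]
  · rw [entry, dif_neg hab, if_neg (by rintro ⟨rfl, rfl⟩; exact hab ⟨by omega, by omega⟩),
      if_neg (by rintro ⟨rfl, rfl⟩; exact hab ⟨by omega, by omega⟩), entry, dif_neg hab]

lemma entry_Rop {q p : ℕ} {M : Matrix (Fin q) (Fin p) ℕ} {i j : ℕ} (h : RCond M i j)
    (a b : ℕ) : entry (Rop M i j) a b =
      if a = i ∧ b = j then 0 else if a = i ∧ b = j + 1 then entry M i j else entry M a b := by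
  have h1 := h.1
  have h2 := h.2.1
  by_cases hab : a < q ∧ b < p
  · rw [entry, dif_pos hab, Rop, if_pos h]
    simp only [Matrix.of_apply]
    conv_rhs => rw [show entry M a b = M ⟨a, hab.1⟩ ⟨b, hab.2⟩ from by rw [entry, dif_pos hab]]
  · rw [entry, dif_neg hab, if_neg (by rintro ⟨rfl, rfl⟩; exact hab ⟨by omega, by omega⟩),
      if_neg (by rintro ⟨rfl, rfl⟩; exact hab ⟨by omega, by omega⟩), entry, dif_neg hab]

lemma Rep.Dop {q p m : ℕ} {r c : ℕ → ℕ} {M : Matrix (Fin q) (Fin p) ℕ} (h : Rep m r c M)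
    {v : ℕ} (hv : v ≠ 0) (hm : v ≤ m) (hD : DCond M (r v) (c v)) :
    Rep m (Function.update r v (r v + 1)) c (Dop M (r v) (c v)) := by
  intro a b w hw
  rw [entry_Dop hD, h.at hv hm]
  have hz := hD.2.2.1
  by_cases hwv : w = v
  · subst hwv
    have := h a b w hw
    simp only [Function.update_self]
    grind
  · rw [Function.update_of_ne hwv]
    have h1 := h a b w hw
    have h2 := h a b v hv
    split_ifs with h3 h4
    · obtain ⟨rfl, rfl⟩ := h3
      have := h.at hv hm
      grind
    · obtain ⟨rfl, rfl⟩ := h4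
      grind
    · exact h1

lemma Rep.Rop {q p m : ℕ} {r c : ℕ → ℕ} {M : Matrix (Fin q) (Fin p) ℕ} (h : Rep m r c M)
    {v : ℕ} (hv : v ≠ 0) (hm : v ≤ m) (hD : RCond M (r v) (c v)) :
    Rep m r (Function.update c v (c v + 1)) (Rop M (r v) (c v)) := by
  intro a b w hw
  rw [entry_Rop hD, h.at hv hm]
  have hz := hD.2.2.1
  by_cases hwv : w = v
  · subst hwv
    have := h a b w hw
    simp only [Function.update_self]
    grind
  · rw [Function.update_of_ne hwv]
    have h1 := h a b w hw
    have h2 := h a b v hv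
    split_ifs with h3 h4
    · obtain ⟨rfl, rfl⟩ := h3
      have := h.at hv hm
      grind
    · obtain ⟨rfl, rfl⟩ := h4
      grind
    · exact h1

/-- derivability with bounds on the indices used so far. -/
def Reach {q p : ℕ} (E F : Matrix (Fin q) (Fin p) ℕ) (a b : ℕ) : Prop :=
  ∃ L : List Shift,
    L.Pairwise (fun x y => ∀ i₁ j₁ i₂ j₂, x = Shift.D i₁ j₁ → y = Shift.D i₂ j₂ → i₁ ≤ i₂) ∧
    L.Pairwise (fun x y => ∀ i₁ j₁ i₂ j₂, x = Shift.R i₁ j₁ → y = Shift.R i₂ j₂ → j₁ ≤ j₂) ∧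
    (∀ i j, Shift.D i j ∈ L → i ≤ a) ∧ (∀ i j, Shift.R i j ∈ L → j ≤ b) ∧
    F = L.foldl (fun M g => applyShift g M) E

lemma Reach.derived {q p : ℕ} {E F : Matrix (Fin q) (Fin p) ℕ} {a b : ℕ} (h : Reach E F a b) :
    DerivedFrom E F := by
  obtain ⟨L, h1, h2, -, -, h3⟩ := h
  rw [List.pairwise_iff_forall_sublist] at h1 h2
  exact ⟨L, fun i₁ j₁ i₂ j₂ h => h1 h _ _ _ _ rfl rfl, fun i₁ j₁ i₂ j₂ h => h2 h _ _ _ _ rfl rfl, h3⟩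

lemma Reach.refl {q p : ℕ} (E : Matrix (Fin q) (Fin p) ℕ) : Reach E E 0 0 :=
  ⟨[], by simp, by simp, by simp, by simp, rfl⟩

lemma Reach.mono {q p : ℕ} {E F : Matrix (Fin q) (Fin p) ℕ} {a b a' b' : ℕ}
    (h : Reach E F a b) (ha : a ≤ a') (hb : b ≤ b') : Reach E F a' b' := by
  obtain ⟨L, h1, h2, h3, h4, h5⟩ := h
  exact ⟨L, h1, h2, fun i j h => (h3 i j h).trans ha, fun i j h => (h4 i j h).trans hb, h5⟩

lemma Reach.stepD {q p : ℕ} {E F : Matrix (Fin q) (Fin p) ℕ} {a b : ℕ} (h : Reach E F a b)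
    (j : ℕ) : Reach E (SU.Dop F a j) a b := by
  obtain ⟨L, h1, h2, h3, h4, h5⟩ := h
  refine ⟨L ++ [Shift.D a j], ?_, ?_, ?_, ?_, ?_⟩
  · rw [List.pairwise_append]
    refine ⟨h1, by simp, ?_⟩
    intro x hx y hy i₁ j₁ i₂ j₂ hx' hy'
    simp only [List.mem_singleton] at hy
    subst hx'
    rw [hy] at hy'
    cases hy'
    exact h3 _ _ hx
  · rw [List.pairwise_append]
    refine ⟨h2, by simp, ?_⟩
    intro x hx y hy i₁ j₁ i₂ j₂ hx' hy'
    simp only [List.mem_singleton] at hy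
    rw [hy] at hy'
    cases hy'
  · intro i j' h
    simp only [List.mem_append, List.mem_singleton, Shift.D.injEq] at h
    rcases h with h | h
    · exact h3 _ _ h
    · omega
  · intro i j' h
    simp only [List.mem_append, List.mem_singleton, reduceCtorEq, or_false] at h
    exact h4 _ _ h
  · rw [List.foldl_append, ← h5]
    rfl

lemma Reach.stepR {q p : ℕ} {E F : Matrix (Fin q) (Fin p) ℕ} {a b : ℕ} (h : Reach E F a b)
    (i : ℕ) : Reach E (SU.Rop F i b) a b := by
  obtain ⟨L, h1, h2, h3, h4, h5⟩ := h
  refine ⟨L ++ [Shift.R i b], ?_, ?_, ?_, ?_, ?_⟩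
  · rw [List.pairwise_append]
    refine ⟨h1, by simp, ?_⟩
    intro x hx y hy i₁ j₁ i₂ j₂ hx' hy'
    simp only [List.mem_singleton] at hy
    rw [hy] at hy'
    cases hy'
  · rw [List.pairwise_append]
    refine ⟨h2, by simp, ?_⟩
    intro x hx y hy i₁ j₁ i₂ j₂ hx' hy'
    simp only [List.mem_singleton] at hy
    subst hx'
    rw [hy] at hy'
    cases hy'
    exact h4 _ _ hx
  · intro i j' h
    simp only [List.mem_append, List.mem_singleton, reduceCtorEq, or_false] at h
    exact h3 _ _ h
  · intro i j' h
    simp only [List.mem_append, List.mem_singleton, Shift.R.injEq] at h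
    rcases h with h | h
    · exact h4 _ _ h
    · omega
  · rw [List.foldl_append, ← h5]
    rfl

/-- number of indices `x` with `1 ≤ x < v` satisfying `dn`. -/
noncomputable def rr (dn : ℕ → Prop) (v : ℕ) : ℕ :=
  ((Finset.range v).filter (fun x => 1 ≤ x ∧ dn x)).card

noncomputable def cc (dn : ℕ → Prop) (v : ℕ) : ℕ := rr (fun x => ¬ dn x) v

lemma rr_one (dn : ℕ → Prop) : rr dn 1 = 0 := by
  simp [rr, Finset.filter_eq_empty_iff]

lemma rr_succ (dn : ℕ → Prop) {v : ℕ} (hv : v ≠ 0) :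
    rr dn (v + 1) = rr dn v + if dn v then 1 else 0 := by
  unfold rr
  rw [Finset.range_add_one, Finset.filter_insert]
  have : 1 ≤ v := by omega
  by_cases h : dn v
  · simp [h, this]
  · simp [h]

lemma cc_one (dn : ℕ → Prop) : cc dn 1 = 0 := rr_one _

lemma cc_succ (dn : ℕ → Prop) {v : ℕ} (hv : v ≠ 0) :
    cc dn (v + 1) = cc dn v + if dn v then 0 else 1 := by
  unfold cc
  rw [rr_succ _ hv]
  by_cases h : dn v <;> simp [h]

lemma rr_mono (dn : ℕ → Prop) : Monotone (rr dn) := by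
  intro v w h
  apply Finset.card_le_card
  apply Finset.filter_subset_filter
  intro x
  simp only [Finset.mem_range]
  omega

lemma cc_mono (dn : ℕ → Prop) : Monotone (cc dn) := rr_mono _

lemma rr_add_cc (dn : ℕ → Prop) {v : ℕ} (hv : v ≠ 0) : rr dn v + cc dn v + 1 = v := by
  induction v with
  | zero => exact absurd rfl hv
  | succ v ih =>
    by_cases h : v = 0
    · subst h; simp [rr_one, cc_one]
    · have := ih h
      rw [rr_succ _ h, cc_succ _ h]
      split_ifs <;> omega

/-- `v` is entered by a down step. -/
def DD (dn : ℕ → Prop) (v : ℕ) : Prop := 2 ≤ v ∧ dn (v - 1)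

lemma rr_lt {dn : ℕ → Prop} {v w : ℕ} (hv : v ≠ 0) (h : v < w) (hw : DD dn w) :
    rr dn v < rr dn w := by
  obtain ⟨x, rfl⟩ : ∃ x, w = x + 1 := ⟨w - 1, by omega⟩
  have h1 : dn x := hw.2
  rw [rr_succ _ (by omega), if_pos h1]
  have := rr_mono dn (show v ≤ x by omega)
  omega

lemma cc_lt {dn : ℕ → Prop} {v w : ℕ} (hv : v ≠ 0) (h : v < w) (hw : ¬ DD dn w) :
    cc dn v < cc dn w := by
  obtain ⟨x, rfl⟩ : ∃ x, w = x + 1 := ⟨w - 1, by omega⟩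
  have h1 : ¬ dn x := fun h' => hw ⟨by omega, h'⟩
  rw [cc_succ _ (by omega), if_neg h1]
  have := cc_mono dn (show v ≤ x by omega)
  omega

lemma rr_surj (dn : ℕ → Prop) {m s : ℕ} (hm : m ≠ 0) (hs : s ≤ rr dn m) :
    ∃ x, x ≠ 0 ∧ x ≤ m ∧ (x = 1 ∨ DD dn x) ∧ rr dn x = s := by
  induction m with
  | zero => exact absurd rfl hm
  | succ m ih =>
    by_cases h : m = 0
    · subst h
      rw [zero_add, rr_one] at hs
      exact ⟨1, by simp, by simp, Or.inl rfl, by rw [rr_one]; omega⟩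
    · by_cases h' : s ≤ rr dn m
      · obtain ⟨x, h1, h2, h3, h4⟩ := ih h h'
        exact ⟨x, h1, by omega, h3, h4⟩
      · rw [rr_succ _ h] at hs
        split_ifs at hs with hd
        · exact ⟨m + 1, by omega, le_rfl, Or.inr ⟨by omega, hd⟩,
            by rw [rr_succ _ h, if_pos hd]; omega⟩
        · omega

lemma cc_surj (dn : ℕ → Prop) {m s : ℕ} (hm : m ≠ 0) (hs : s ≤ cc dn m) :
    ∃ x, x ≠ 0 ∧ x ≤ m ∧ (x = 1 ∨ ¬ DD dn x) ∧ cc dn x = s := by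
  obtain ⟨x, h1, h2, h3, h4⟩ := rr_surj (fun x => ¬ dn x) hm hs
  refine ⟨x, h1, h2, ?_, h4⟩
  rcases h3 with h | h
  · exact Or.inl h
  · exact Or.inr fun h' => h.2 h'.2

noncomputable def rowD (dn : ℕ → Prop) (s w v : ℕ) : ℕ :=
  if DD dn v then rr dn v else min (rr dn v) (if v ≤ w then s + 1 else s)

noncomputable def colD (dn : ℕ → Prop) (v : ℕ) : ℕ := if DD dn v then 0 else cc dn v

noncomputable def colR (dn : ℕ → Prop) (t w v : ℕ) : ℕ :=
  if DD dn v then min (cc dn v) (if v ≤ w then t + 1 else t) else cc dn v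

lemma one_not_DD (dn : ℕ → Prop) : ¬ DD dn 1 := fun h => by have := h.1; omega

lemma dphase_step {dn : ℕ → Prop} {m s w b : ℕ} (hm : m ≠ 0)
    {E M : Matrix (Fin (rr dn m + 1)) (Fin (cc dn m + 1)) ℕ}
    (hE : Reach E M s b) (h : Rep m (rowD dn s w) (colD dn) M) (hw : w + 1 ≤ m) :
    ∃ M', Reach E M' s b ∧ Rep m (rowD dn s (w + 1)) (colD dn) M' := by
  by_cases hc : ¬ DD dn (w + 1) ∧ s + 1 ≤ rr dn (w + 1)
  swap
  · refine ⟨M, hE, h.congr ?_ (fun _ _ _ => rfl)⟩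
    intro v hv hvm
    unfold rowD
    by_cases hd : DD dn v
    · simp [hd]
    · simp only [hd, if_false]
      by_cases hvw : v = w + 1
      · subst hvw
        have : ¬ (s + 1 ≤ rr dn (w + 1)) := fun h => hc ⟨hd, h⟩
        simp
        omega
      · have : v ≤ w + 1 ↔ v ≤ w := by omega
        simp [this]
  · obtain ⟨hd, hs⟩ := hc
    set v := w + 1 with hvdef
    have hv0 : v ≠ 0 := by omega
    have hv1 : v ≠ 1 := by
      intro h1
      rw [h1, rr_one] at hs
      omega
    have hrv : rowD dn s w v = s := by
      rw [rowD, if_neg hd, if_neg (by omega)]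
      omega
    have hcv : colD dn v = cc dn v := by simp [colD, hd]
    have hcpos : 0 < cc dn v := by
      have := cc_lt (dn := dn) (v := 1) (w := v) (by simp) (by omega) hd
      omega
    have hrm : rr dn v ≤ rr dn m := rr_mono dn hw
    have hcm : cc dn v ≤ cc dn m := cc_mono dn hw
    have hat := h.at hv0 hw
    rw [hrv, hcv] at hat
    -- description of the entries of row s + 1
    have key : ∀ ℓ, entry M (s + 1) ℓ ≠ 0 →
        (ℓ = 0 ∧ entry M (s + 1) ℓ < v) ∨
          (cc dn (entry M (s + 1) ℓ) = ℓ ∧ ¬ DD dn (entry M (s + 1) ℓ) ∧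
            entry M (s + 1) ℓ ≠ v) := by
      intro ℓ h0
      obtain ⟨h1, h2, h3⟩ := h.of_ne h0
      set x := entry M (s + 1) ℓ
      by_cases hx : DD dn x
      · left
        simp only [rowD, colD, hx, if_true] at h2 h3
        refine ⟨h3.symm, ?_⟩
        by_contra hcon
        have hne : v ≠ x := fun h => hd (h ▸ hx)
        have := rr_lt hv0 (show v < x by omega) hx
        omega
      · right
        have h3' := h3
        simp only [colD, hx, if_false] at h3'
        refine ⟨h3', hx, ?_⟩
        intro hxv
        rw [hxv, hrv] at h2
        omega
    have hD : DCond M (rowD dn s w v) (colD dn v) := by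
      rw [hrv, hcv]
      refine ⟨by omega, by omega, ?_, by rw [hat]; exact hv0, ?_, ?_, ?_⟩
      · by_contra h0
        rcases key _ h0 with ⟨h1, -⟩ | ⟨h1, h2, h3⟩
        · omega
        · rcases lt_or_gt_of_ne h3 with h4 | h4
          · have := cc_lt h0 h4 hd
            omega
          · have := cc_lt hv0 h4 h2
            omega
      · obtain ⟨x, hx0, hxm, hx1, hxs⟩ := rr_surj dn hm (show s ≤ rr dn m by omega)
        refine ⟨0, by omega, by omega, ?_⟩
        have := h.at hx0 hxm
        have e1 : rowD dn s w x = s := by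
          unfold rowD
          split_ifs <;> omega
        have e2 : colD dn x = 0 := by
          rcases hx1 with rfl | hx1
          · simp [colD, one_not_DD, cc_one]
          · simp [colD, hx1]
        rw [e1, e2] at this
        rw [this]
        exact hx0
      · intro ℓ hℓ
        rw [hat]
        by_cases h0 : entry M (s + 1) ℓ = 0
        · omega
        · rcases key _ h0 with ⟨-, h1⟩ | ⟨h1, h2, h3⟩
          · exact h1
          · by_contra h4
            have := cc_lt hv0 (show v < entry M (s + 1) ℓ by omega) h2
            omega
      · intro ℓ hℓ hℓp h0
        rw [hat]
        rcases key _ h0 with ⟨h1, -⟩ | ⟨h1, h2, h3⟩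
        · omega
        · by_contra h4
          have := cc_lt h0 (show entry M (s + 1) ℓ < v by omega) hd
          omega
    refine ⟨Dop M (rowD dn s w v) (colD dn v), ?_, (h.Dop hv0 hw hD).congr ?_ (fun _ _ _ => rfl)⟩
    · rw [hrv]
      exact hE.stepD _
    · intro x hx0 hxm
      by_cases hxv : x = v
      · rw [hxv, Function.update_self, hrv]
        simp [rowD, hd, hs]
      · rw [Function.update_of_ne hxv]
        have : x ≤ v ↔ x ≤ w := by omega
        simp [rowD, this]

lemma dphase_row {dn : ℕ → Prop} {m s b : ℕ} (hm : m ≠ 0)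
    {E M : Matrix (Fin (rr dn m + 1)) (Fin (cc dn m + 1)) ℕ}
    (hE : Reach E M s b) (h : Rep m (rowD dn s 0) (colD dn) M) (w : ℕ) (hw : w ≤ m) :
    ∃ M', Reach E M' s b ∧ Rep m (rowD dn s w) (colD dn) M' := by
  induction w with
  | zero => exact ⟨M, hE, h⟩
  | succ w ih =>
    obtain ⟨M', h1, h2⟩ := ih (by omega)
    exact dphase_step hm h1 h2 hw

lemma dphase {dn : ℕ → Prop} {m : ℕ} (hm : m ≠ 0)
    {E : Matrix (Fin (rr dn m + 1)) (Fin (cc dn m + 1)) ℕ}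
    (h : Rep m (rowD dn 0 0) (colD dn) E) (s : ℕ) :
    ∃ M', Reach E M' s 0 ∧ Rep m (rowD dn s 0) (colD dn) M' := by
  induction s with
  | zero => exact ⟨E, Reach.refl E, h⟩
  | succ s ih =>
    obtain ⟨M', h1, h2⟩ := ih
    obtain ⟨M'', h3, h4⟩ := dphase_row hm h1 h2 m le_rfl
    refine ⟨M'', h3.mono (by omega) le_rfl, h4.congr ?_ (fun _ _ _ => rfl)⟩
    intro v hv hvm
    simp [rowD, hvm, hv]

lemma rphase_step {dn : ℕ → Prop} {m t w a : ℕ} (hm : m ≠ 0)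
    {E M : Matrix (Fin (rr dn m + 1)) (Fin (cc dn m + 1)) ℕ}
    (hE : Reach E M a t) (h : Rep m (rr dn) (colR dn t w) M) (hw : w + 1 ≤ m) :
    ∃ M', Reach E M' a t ∧ Rep m (rr dn) (colR dn t (w + 1)) M' := by
  by_cases hc : DD dn (w + 1) ∧ t + 1 ≤ cc dn (w + 1)
  swap
  · refine ⟨M, hE, h.congr (fun _ _ _ => rfl) ?_⟩
    intro v hv hvm
    unfold colR
    by_cases hd : DD dn v
    · simp only [hd, if_true]
      by_cases hvw : v = w + 1
      · subst hvw
        have : ¬ (t + 1 ≤ cc dn (w + 1)) := fun h => hc ⟨hd, h⟩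
        simp
        omega
      · have : v ≤ w + 1 ↔ v ≤ w := by omega
        simp [this]
    · simp [hd]
  · obtain ⟨hd, hs⟩ := hc
    set v := w + 1 with hvdef
    have hv0 : v ≠ 0 := by omega
    have hcv : colR dn t w v = t := by
      rw [colR, if_pos hd, if_neg (by omega)]
      omega
    have hrm : rr dn v ≤ rr dn m := rr_mono dn hw
    have hcm : cc dn v ≤ cc dn m := cc_mono dn hw
    have hat := h.at hv0 hw
    rw [hcv] at hat
    have hR : RCond M (rr dn v) (colR dn t w v) := by
      rw [hcv]
      refine ⟨by omega, by omega, ?_, by rw [hat]; exact hv0, ?_, ?_, ?_⟩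
      · by_contra h0
        obtain ⟨h1, h2, h3⟩ := h.of_ne h0
        set x := entry M (rr dn v) (t + 1)
        rcases lt_trichotomy x v with h4 | h4 | h4
        · have := rr_lt h0 h4 hd
          omega
        · rw [h4, hcv] at h3
          omega
        · by_cases hx : DD dn x
          · have := rr_lt hv0 h4 hx
            omega
          · have := cc_lt hv0 h4 hx
            simp only [colR, hx, if_false] at h3
            omega
      · obtain ⟨x, hx0, hxm, hx1, hxs⟩ := cc_surj dn hm (show t ≤ cc dn m by omega)
        have hxv : x < v := by
          by_contra h4
          have := cc_mono dn (show v ≤ x by omega)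
          omega
        have hlt := rr_lt hx0 hxv hd
        refine ⟨rr dn x, by omega, by omega, ?_⟩
        have := h.at hx0 hxm
        have e2 : colR dn t w x = t := by
          unfold colR
          split_ifs <;> omega
        rw [e2] at this
        rw [this]
        exact hx0
      · intro ℓ hℓ
        rw [hat]
        by_cases h0 : entry M ℓ (t + 1) = 0
        · omega
        · obtain ⟨h1, h2, h3⟩ := h.of_ne h0
          by_contra h4
          have := rr_mono dn (show v ≤ entry M ℓ (t + 1) by omega)
          omega
      · intro ℓ hℓ hℓp h0
        rw [hat]
        obtain ⟨h1, h2, h3⟩ := h.of_ne h0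
        by_contra h4
        have := rr_mono dn (show entry M ℓ (t + 1) ≤ v by omega)
        omega
    refine ⟨Rop M (rr dn v) (colR dn t w v), ?_, (h.Rop hv0 hw hR).congr (fun _ _ _ => rfl) ?_⟩
    · rw [hcv]
      exact hE.stepR _
    · intro x hx0 hxm
      by_cases hxv : x = v
      · rw [hxv, Function.update_self, hcv]
        simp [colR, hd, hs]
      · rw [Function.update_of_ne hxv]
        have : x ≤ v ↔ x ≤ w := by omega
        simp [colR, this]

lemma rphase_col {dn : ℕ → Prop} {m t a : ℕ} (hm : m ≠ 0)
    {E M : Matrix (Fin (rr dn m + 1)) (Fin (cc dn m + 1)) ℕ}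
    (hE : Reach E M a t) (h : Rep m (rr dn) (colR dn t 0) M) (w : ℕ) (hw : w ≤ m) :
    ∃ M', Reach E M' a t ∧ Rep m (rr dn) (colR dn t w) M' := by
  induction w with
  | zero => exact ⟨M, hE, h⟩
  | succ w ih =>
    obtain ⟨M', h1, h2⟩ := ih (by omega)
    exact rphase_step hm h1 h2 hw

lemma rphase {dn : ℕ → Prop} {m a : ℕ} (hm : m ≠ 0)
    {E M : Matrix (Fin (rr dn m + 1)) (Fin (cc dn m + 1)) ℕ}
    (hE : Reach E M a 0) (h : Rep m (rr dn) (colR dn 0 0) M) (t : ℕ) :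
    ∃ M', Reach E M' a t ∧ Rep m (rr dn) (colR dn t 0) M' := by
  induction t with
  | zero => exact ⟨M, hE, h⟩
  | succ t ih =>
    obtain ⟨M', h1, h2⟩ := ih
    obtain ⟨M'', h3, h4⟩ := rphase_col hm h1 h2 m le_rfl
    refine ⟨M'', h3.mono le_rfl (by omega), h4.congr (fun _ _ _ => rfl) ?_⟩
    intro v hv hvm
    simp [colR, hvm, hv]

lemma Rep.entrySet {q p m : ℕ} {r c : ℕ → ℕ} {M : Matrix (Fin q) (Fin p) ℕ} (h : Rep m r c M) :
    SU.entrySet M = Finset.Icc 1 m := by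
  ext v
  simp only [SU.entrySet, Finset.mem_erase, Finset.mem_image, Finset.mem_product,
    Finset.mem_range, Prod.exists, Finset.mem_Icc]
  constructor
  · rintro ⟨h0, i, j, -, h1⟩
    exact ⟨by omega, ((h i j v h0).1 h1).1⟩
  · rintro ⟨h1, h2⟩
    have h0 : v ≠ 0 := by omega
    exact ⟨h0, r v, c v, h.lt h0 h2, h.at h0 h2⟩

lemma Rep.ordered {q p m : ℕ} {r c : ℕ → ℕ} {M : Matrix (Fin q) (Fin p) ℕ} (h : Rep m r c M)
    (hq : 0 < q) (hp : 0 < p) (hm : p + q - 1 = m)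
    (hrs : ∀ i < q, ∃ v, v ≠ 0 ∧ v ≤ m ∧ r v = i)
    (hcs : ∀ j < p, ∃ v, v ≠ 0 ∧ v ≤ m ∧ c v = j)
    (hr : ∀ v w, v ≠ 0 → v ≤ m → w ≠ 0 → w ≤ m → r v = r w → c v < c w → v < w)
    (hc : ∀ v w, v ≠ 0 → v ≤ m → w ≠ 0 → w ≤ m → c v = c w → r v < r w → v < w) :
    IsOrderedMatrix M := by
  refine ⟨hq, hp, by rw [h.entrySet, hm], ?_, ?_, ?_, ?_, ?_⟩
  · intro i hi
    obtain ⟨v, h0, h1, rfl⟩ := hrs i hi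
    exact ⟨c v, (h.lt h0 h1).2, by rw [h.at h0 h1]; exact h0⟩
  · intro i hi
    obtain ⟨v, h0, h1, rfl⟩ := hcs i hi
    exact ⟨r v, (h.lt h0 h1).1, by rw [h.at h0 h1]; exact h0⟩
  · intro i₁ j₁ i₂ j₂ h1 h2 h3
    have a := h.of_ne h1
    have b := h.of_ne h2
    rw [h3] at a
    exact ⟨a.2.1.symm.trans b.2.1, a.2.2.symm.trans b.2.2⟩
  · intro i j₁ j₂ hj h1 h2
    have a := h.of_ne h1
    have b := h.of_ne h2
    exact hr _ _ h1 a.1 h2 b.1 (by rw [a.2.1, b.2.1]) (by rw [a.2.2, b.2.2]; exact hj)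
  · intro i j₁ j₂ hj h1 h2
    have a := h.of_ne h1
    have b := h.of_ne h2
    exact hc _ _ h1 a.1 h2 b.1 (by rw [a.2.2, b.2.2]) (by rw [a.2.1, b.2.1]; exact hj)

lemma exists_hook (dn : ℕ → Prop) {m : ℕ} (hm : m ≠ 0) :
    ∃ E : Matrix (Fin (rr dn m + 1)) (Fin (cc dn m + 1)) ℕ,
      IsStepMatrix E ∧ Rep m (rowD dn 0 0) (colD dn) E := by
  have hrow : ∀ v, v ≠ 0 → rowD dn 0 0 v = if DD dn v then rr dn v else 0 := by
    intro v hv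
    simp [rowD, hv]
  have hposr : ∀ v, v ≠ 0 → DD dn v → 0 < rr dn v := by
    intro v hv hd
    have := rr_lt (dn := dn) (v := 1) (w := v) (by simp) (by have := hd.1; omega) hd
    omega
  have hposc : ∀ v, v ≠ 0 → v ≠ 1 → ¬ DD dn v → 0 < cc dn v := by
    intro v hv hd hd'
    have := cc_lt (dn := dn) (v := 1) (w := v) (by simp) (by omega) hd'
    omega
  have rinj : ∀ v w, v ≠ 0 → w ≠ 0 → DD dn v → DD dn w → rr dn v ≤ rr dn w → v ≤ w := by
    intro v w hv hw h1 h2 h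
    by_contra h3
    have := rr_lt hw (show w < v by omega) h1
    omega
  have cinj : ∀ v w, v ≠ 0 → w ≠ 0 → ¬ DD dn v → ¬ DD dn w → cc dn v ≤ cc dn w → v ≤ w := by
    intro v w hv hw h1 h2 h
    by_contra h3
    have := cc_lt hw (show w < v by omega) h1
    omega
  obtain ⟨E, hE⟩ := exists_rep (rr dn m + 1) (cc dn m + 1) m (rowD dn 0 0) (colD dn)
    (by
      intro v hv hvm
      rw [hrow v hv]
      have := rr_mono dn hvm
      split_ifs <;> omega)
    (by
      intro v hv hvm
      unfold colD
      have := cc_mono dn hvm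
      split_ifs <;> omega)
    (by
      intro v w hv hvm hw hwm h1 h2
      rw [hrow v hv, hrow w hw] at h1
      unfold colD at h2
      by_cases hd : DD dn v <;> by_cases hd' : DD dn w <;> simp only [hd, hd', if_true, if_false] at h1 h2
      · exact le_antisymm (rinj v w hv hw hd hd' h1.le) (rinj w v hw hv hd' hd h1.ge)
      · have := hposr v hv hd
        omega
      · have := hposr w hw hd'
        omega
      · exact le_antisymm (cinj v w hv hw hd hd' h2.le) (cinj w v hw hv hd' hd h2.ge))
  refine ⟨E, ?_, hE⟩
  have hshape : ∀ i j, entry E i j ≠ 0 ↔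
      ((i = 0 ∧ j < cc dn m + 1) ∨ (j = 0 ∧ i < rr dn m + 1)) := by
    intro i j
    constructor
    · intro h0
      have hlt := entry_lt h0
      obtain ⟨h1, h2, h3⟩ := hE.of_ne h0
      rw [hrow _ h0] at h2
      unfold colD at h3
      by_cases hd : DD dn (entry E i j) <;> simp only [hd, if_true, if_false] at h2 h3 <;> omega
    · rintro (⟨rfl, hj⟩ | ⟨rfl, hi⟩)
      · obtain ⟨x, hx0, hxm, hx1, hxs⟩ := cc_surj dn hm (show j ≤ cc dn m by omega)
        have hd : ¬ DD dn x := by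
          rcases hx1 with rfl | h
          · exact one_not_DD dn
          · exact h
        have := hE.at hx0 hxm
        rw [hrow x hx0, colD, if_neg hd, if_neg hd, hxs] at this
        rw [this]
        exact hx0
      · obtain ⟨x, hx0, hxm, hx1, hxs⟩ := rr_surj dn hm (show i ≤ rr dn m by omega)
        have := hE.at hx0 hxm
        rcases hx1 with rfl | hd
        · rw [hrow 1 hx0, colD, if_neg (one_not_DD dn), if_neg (one_not_DD dn), cc_one] at this
          rw [rr_one] at hxs
          rw [← hxs, this]
          exact hx0
        · rw [hrow x hx0, colD, if_pos hd, if_pos hd, hxs] at this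
          rw [this]
          exact hx0
  have hsum := rr_add_cc dn hm
  refine ⟨hE.ordered (by omega) (by omega) (by omega) ?_ ?_ ?_ ?_, ?_, ?_, ?_, ?_, ?_⟩
  · intro i hi
    have := (hshape i 0).2 (Or.inr ⟨rfl, hi⟩)
    exact ⟨_, this, (hE.of_ne this).1, (hE.of_ne this).2.1⟩
  · intro i hi
    have := (hshape 0 i).2 (Or.inl ⟨rfl, hi⟩)
    exact ⟨_, this, (hE.of_ne this).1, (hE.of_ne this).2.2⟩
  · intro v w hv hvm hw hwm h1 h2
    rw [hrow v hv, hrow w hw] at h1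
    unfold colD at h2
    by_cases hd : DD dn v <;> by_cases hd' : DD dn w <;> simp only [hd, hd', if_true, if_false] at h1 h2
    · omega
    · have := hposr v hv hd
      omega
    · omega
    · by_contra h3
      have := cc_mono dn (show w ≤ v by omega)
      omega
  · intro v w hv hvm hw hwm h2 h1
    rw [hrow v hv, hrow w hw] at h1
    unfold colD at h2
    by_cases hd : DD dn v <;> by_cases hd' : DD dn w <;> simp only [hd, hd', if_true, if_false] at h1 h2
    · by_contra h3
      have := rr_mono dn (show w ≤ v by omega)
      omega
    · omega
    · by_contra h3
      by_cases hv1 : v = 1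
      · have := hd'.1
        omega
      · have := hposc v hv hv1 hd
        omega
    · omega
  · intro i j₁ j₂ j₃ h1 h2 h3 h4
    rw [hshape] at *
    omega
  · intro i j₁ j₂ j₃ h1 h2 h3 h4
    rw [hshape] at *
    omega
  · refine ⟨0, (hshape 0 0).2 (by omega), ?_⟩
    intro y hy
    rw [hshape] at hy
    omega
  · intro i₁ i₂ h1 h2
    rw [hshape] at *
    omega
  · intro i₁ i₂ h1 h2
    rw [hshape] at *
    omega

/-- every monotone staircase is a configuration matrix. -/
lemma exists_stair (dn : ℕ → Prop) {m : ℕ} (hm : m ≠ 0) :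
    ∃ F : Matrix (Fin (rr dn m + 1)) (Fin (cc dn m + 1)) ℕ,
      IsConfigMatrix F ∧ Rep m (rr dn) (cc dn) F := by
  obtain ⟨E, hE, hrep⟩ := exists_hook dn hm
  obtain ⟨M1, h1, h2⟩ := dphase hm hrep m
  have h2' : Rep m (rr dn) (colR dn 0 0) M1 := by
    refine h2.congr ?_ ?_
    · intro v hv hvm
      have := rr_add_cc dn hv
      unfold rowD
      split_ifs <;> omega
    · intro v hv hvm
      simp [colD, colR, hv]
  obtain ⟨F, h3, h4⟩ := rphase hm h1 h2' m
  have h4' : Rep m (rr dn) (cc dn) F := by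
    refine h4.congr (fun _ _ _ => rfl) ?_
    intro v hv hvm
    have := rr_add_cc dn hv
    unfold colR
    split_ifs <;> omega
  refine ⟨F, ⟨?_, E, hE, h3.derived⟩, h4'⟩
  have hsum := rr_add_cc dn hm
  refine h4'.ordered (by omega) (by omega) (by omega) ?_ ?_ ?_ ?_
  · intro i hi
    obtain ⟨x, hx0, hxm, hx1, hxs⟩ := rr_surj dn hm (show i ≤ rr dn m by omega)
    exact ⟨x, hx0, hxm, hxs⟩
  · intro i hi
    obtain ⟨x, hx0, hxm, hx1, hxs⟩ := cc_surj dn hm (show i ≤ cc dn m by omega)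
    exact ⟨x, hx0, hxm, hxs⟩
  · intro v w hv hvm hw hwm h1 h2
    by_contra h3
    have := cc_mono dn (show w ≤ v by omega)
    omega
  · intro v w hv hvm hw hwm h1 h2
    by_contra h3
    have := rr_mono dn (show w ≤ v by omega)
    omega

lemma ordered_rep {q p m : ℕ} {M : Matrix (Fin q) (Fin p) ℕ} (h : IsOrderedMatrix M)
    (hm : entrySet M = Finset.Icc 1 m) : ∃ r c, Rep m r c M := by
  have hex : ∀ v, ∃ ij : ℕ × ℕ, v ∈ Finset.Icc 1 m → entry M ij.1 ij.2 = v := by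
    intro v
    by_cases hv : v ∈ Finset.Icc 1 m
    · have hv' := hv
      rw [← hm] at hv'
      simp only [entrySet, Finset.mem_erase, Finset.mem_image] at hv'
      obtain ⟨-, ij, -, h2⟩ := hv'
      exact ⟨ij, fun _ => h2⟩
    · exact ⟨(0, 0), fun h => absurd h hv⟩
  choose g hg using hex
  refine ⟨fun v => (g v).1, fun v => (g v).2, ?_⟩
  intro i j v hv
  constructor
  · intro he
    have hlt := entry_lt (M := M) (i := i) (j := j) (by rw [he]; exact hv)
    have hmem : v ∈ Finset.Icc 1 m := by
      rw [← hm]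
      simp only [entrySet, Finset.mem_erase, Finset.mem_image]
      exact ⟨hv, (i, j), by simp [hlt], he⟩
    refine ⟨(Finset.mem_Icc.1 hmem).2, ?_⟩
    have h1 := hg v hmem
    exact h.2.2.2.2.2.1 _ _ _ _ (by rw [h1]; exact hv) (by rw [he]; exact hv) (by rw [h1, he])
  · rintro ⟨h1, rfl, rfl⟩
    exact hg v (Finset.mem_Icc.2 ⟨by omega, h1⟩)

lemma Rep.colBlock {q p m : ℕ} {r c : ℕ → ℕ} {M : Matrix (Fin q) (Fin p) ℕ} (h : Rep m r c M)
    (j : ℕ) : SU.colBlock M j = (Finset.Icc 1 m).filter (fun v => c v = j) := by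
  ext v
  simp only [SU.colBlock, Finset.mem_erase, Finset.mem_image, Finset.mem_range, Finset.mem_filter,
    Finset.mem_Icc]
  constructor
  · rintro ⟨h0, i, -, h1⟩
    have := (h i j v h0).1 h1
    exact ⟨⟨by omega, this.1⟩, this.2.2⟩
  · rintro ⟨⟨h1, h2⟩, rfl⟩
    have h0 : v ≠ 0 := by omega
    exact ⟨h0, r v, (h.lt h0 h2).1, h.at h0 h2⟩

lemma Rep.rowBlock {q p m : ℕ} {r c : ℕ → ℕ} {M : Matrix (Fin q) (Fin p) ℕ} (h : Rep m r c M)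
    (j : ℕ) : SU.rowBlock M j = (Finset.Icc 1 m).filter (fun v => r v = j) := by
  ext v
  simp only [SU.rowBlock, Finset.mem_erase, Finset.mem_image, Finset.mem_range, Finset.mem_filter,
    Finset.mem_Icc]
  constructor
  · rintro ⟨h0, i, -, h1⟩
    have := (h j i v h0).1 h1
    exact ⟨⟨by omega, this.1⟩, this.2.1⟩
  · rintro ⟨⟨h1, h2⟩, rfl⟩
    have h0 : v ≠ 0 := by omega
    exact ⟨h0, c v, (h.lt h0 h2).2, h.at h0 h2⟩

lemma change_card {g : ℕ → ℕ} {m p : ℕ} (hm : m ≠ 0) (hlt : ∀ v, v ≠ 0 → v ≤ m → g v < p)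
    (hcvx : ∀ v w x, v ≠ 0 → v ≤ w → w ≤ x → x ≤ m → g v = g x → g w = g v) :
    ((Finset.Ico 1 m).filter (fun v => g v ≠ g (v + 1))).card ≤ p - 1 := by
  have h1 : ((Finset.range p).erase (g 1)).card = p - 1 := by
    rw [Finset.card_erase_of_mem, Finset.card_range]
    exact Finset.mem_range.2 (hlt 1 (by simp) (by omega))
  rw [← h1]
  apply Finset.card_le_card_of_injOn (fun v => g (v + 1))
  · intro v hv
    simp only [Finset.coe_filter, Finset.mem_Ico, Set.mem_setOf_eq] at hv
    simp only [Finset.coe_erase, Finset.coe_range, Set.mem_diff, Set.mem_Iio,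
      Set.mem_singleton_iff]
    refine ⟨hlt _ (by omega) (by omega), ?_⟩
    intro h
    have := hcvx 1 v (v + 1) (by simp) (by omega) (by omega) (by omega) h.symm
    exact hv.2 (by rw [h, this])
  · have aux : ∀ v w, 1 ≤ v → v < w → w < m → g w ≠ g (w + 1) → g (v + 1) ≠ g (w + 1) := by
      intro v w hv hvw hw h h'
      have := hcvx (v + 1) w (w + 1) (by omega) (by omega) (by omega) (by omega) h'
      exact h (by rw [this, h'])
    intro v hv w hw h
    simp only [Finset.coe_filter, Finset.mem_Ico, Set.mem_setOf_eq] at hv hw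
    rcases lt_trichotomy v w with h2 | h2 | h2
    · exact absurd h (aux v w hv.1.1 h2 hw.1.2 hw.2)
    · exact h2
    · exact absurd h.symm (aux w v hw.1.1 h2 hv.1.2 hv.2)

/-- a nondecreasing surjective function increases by steps of size one. -/
lemma mono_surj {g : ℕ → ℕ} {m p : ℕ} (hm : m ≠ 0) (hlt : ∀ v, v ≠ 0 → v ≤ m → g v < p)
    (hs : ∀ j < p, ∃ v, v ≠ 0 ∧ v ≤ m ∧ g v = j)
    (hmono : ∀ v, v ≠ 0 → v < m → g v ≤ g (v + 1)) :
    g 1 = 0 ∧ g m + 1 = p ∧ ∀ v, v ≠ 0 → v < m → g (v + 1) ≤ g v + 1 := by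
  have hmono' : ∀ v w, v ≠ 0 → v ≤ w → w ≤ m → g v ≤ g w := by
    intro v w hv hvw
    induction w, hvw using Nat.le_induction with
    | base => intro _; exact le_rfl
    | succ w hw ih =>
      intro hwm
      exact (ih (by omega)).trans (hmono w (by omega) (by omega))
  refine ⟨?_, ?_, ?_⟩
  · have := hlt 1 (by simp) (by omega)
    obtain ⟨v, h1, h2, h3⟩ := hs 0 (by omega)
    have := hmono' 1 v (by simp) (by omega) h2
    omega
  · have := hlt m hm le_rfl
    obtain ⟨v, h1, h2, h3⟩ := hs (p - 1) (by omega)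
    have := hmono' v m h1 h2 le_rfl
    omega
  · intro v hv hvm
    by_contra h
    have h4 := hlt (v + 1) (by omega) (by omega)
    obtain ⟨w, h1, h2, h3⟩ := hs (g v + 1) (by omega)
    rcases le_or_gt w v with h5 | h5
    · have := hmono' w v h1 h5 (by omega)
      omega
    · have := hmono' (v + 1) w (by omega) h5 h2
      omega

lemma image_interval {f g : ℕ → ℕ} {m : ℕ}
    (hf : ∀ v w, v ≠ 0 → v < w → w ≤ m → f v < f w)
    (hI : ∀ j, IsInterval (((Finset.Icc 1 m).filter (fun v => g v = j)).image f))
    (v w x : ℕ) (hv : v ≠ 0) (hvw : v ≤ w) (hwx : w ≤ x) (hx : x ≤ m) (h : g v = g x) :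
    g w = g v := by
  have hf' : ∀ v w, v ≠ 0 → v ≤ w → w ≤ m → f v ≤ f w := by
    intro v w h1 h2 h3
    rcases h2.eq_or_lt with rfl | h2
    · exact le_rfl
    · exact (hf v w h1 h2 h3).le
  have := hI (g v) (f v) (Finset.mem_image_of_mem f (by simp; omega)) (f x)
    (Finset.mem_image_of_mem f (by simp; omega)) (f w) (hf' _ _ hv hvw (by omega))
    (hf' _ _ (by omega) hwx hx)
  simp only [Finset.mem_image, Finset.mem_filter, Finset.mem_Icc] at this
  obtain ⟨y, ⟨⟨h1, h2⟩, h3⟩, h4⟩ := this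
  rcases lt_trichotomy y w with h5 | h5 | h5
  · have := hf y w (by omega) h5 (by omega)
    omega
  · rw [← h5, h3]
  · have := hf w y (by omega) h5 (by omega)
    omega

lemma struct {q p m : ℕ} {r c : ℕ → ℕ} {M : Matrix (Fin q) (Fin p) ℕ} (hm0 : m ≠ 0)
    (h : Rep m r c M) (ho : IsOrderedMatrix M) {f : ℕ → ℕ}
    (hf : ∀ v w, v ≠ 0 → v < w → w ≤ m → f v < f w)
    (hc : ∀ j, IsInterval (((Finset.Icc 1 m).filter (fun v => c v = j)).image f))
    (hr : ∀ j, IsInterval (((Finset.Icc 1 m).filter (fun v => r v = j)).image f)) :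
    (∀ v, v ≠ 0 → v ≤ m → r v = rr (fun v => c v = c (v + 1)) v ∧
      c v = cc (fun v => c v = c (v + 1)) v) ∧
    q = rr (fun v => c v = c (v + 1)) m + 1 ∧ p = cc (fun v => c v = c (v + 1)) m + 1 ∧
    ∀ v, v ≠ 0 → v < m → (r v = r (v + 1) ∨ c v = c (v + 1)) := by
  obtain ⟨hq0, hp0, hes, hrow, hcol, -, hri, hci⟩ := ho
  have hm : m = p + q - 1 := by
    rw [h.entrySet] at hes
    have := congrArg Finset.card hes
    simpa using this
  have hC := change_card hm0 (fun v h0 h1 => (h.lt h0 h1).2) (image_interval hf hc)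
  have hR := change_card hm0 (fun v h0 h1 => (h.lt h0 h1).1) (image_interval hf hr)
  set SC := (Finset.Ico 1 m).filter (fun v => c v ≠ c (v + 1))
  set SR := (Finset.Ico 1 m).filter (fun v => r v ≠ r (v + 1))
  have hU : SC ∪ SR = Finset.Ico 1 m := by
    rw [← Finset.filter_or, Finset.filter_eq_self]
    intro v hv
    rw [Finset.mem_Ico] at hv
    by_contra hcon
    push Not at hcon
    have h1 := h.at (show v ≠ 0 by omega) (by omega)
    have h2 := h.at (show v + 1 ≠ 0 by omega) (by omega)
    rw [← hcon.1, ← hcon.2, h1] at h2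
    omega
  have hcard := Finset.card_union_add_card_inter SC SR
  rw [hU, Nat.card_Ico] at hcard
  have hinter : SC ∩ SR = ∅ := by
    rw [← Finset.card_eq_zero]
    omega
  have halt : ∀ v, v ≠ 0 → v < m → (r v = r (v + 1) ∨ c v = c (v + 1)) := by
    intro v hv hvm
    by_contra hcon
    push Not at hcon
    have : v ∈ SC ∩ SR := by
      simp only [SC, SR, Finset.mem_inter, Finset.mem_filter, Finset.mem_Ico]
      exact ⟨⟨⟨by omega, hvm⟩, hcon.2⟩, ⟨by omega, hvm⟩, hcon.1⟩
    rw [hinter] at this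
    simp at this
  have hstep : ∀ v, v ≠ 0 → v < m → (r v = r (v + 1) ∧ c v < c (v + 1)) ∨
      (c v = c (v + 1) ∧ r v < r (v + 1)) := by
    intro v hv hvm
    have h1 := h.at hv hvm.le
    have h2 := h.at (show v + 1 ≠ 0 by omega) (by omega)
    rcases halt v hv hvm with h3 | h3
    · left
      refine ⟨h3, ?_⟩
      rcases lt_trichotomy (c v) (c (v + 1)) with h4 | h4 | h4
      · exact h4
      · rw [h3, h4, h2] at h1
        omega
      · have := hri (r v) _ _ h4 (by rw [h3, h2]; omega) (by rw [h1]; omega)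
        rw [h1, h3, h2] at this
        omega
    · right
      refine ⟨h3, ?_⟩
      rcases lt_trichotomy (r v) (r (v + 1)) with h4 | h4 | h4
      · exact h4
      · rw [h3, h4, h2] at h1
        omega
      · have := hci (c v) _ _ h4 (by rw [h3, h2]; omega) (by rw [h1]; omega)
        rw [h1, h3, h2] at this
        omega
  obtain ⟨c1, cp, cs⟩ := mono_surj hm0 (fun v h0 h1 => (h.lt h0 h1).2)
    (by
      intro j hj
      obtain ⟨i, -, h0⟩ := hcol j hj
      have := h.of_ne h0
      exact ⟨_, h0, this.1, this.2.2⟩)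
    (by
      intro v hv hvm
      rcases hstep v hv hvm with h1 | h1 <;> omega)
  obtain ⟨r1, rp, rs⟩ := mono_surj hm0 (fun v h0 h1 => (h.lt h0 h1).1)
    (by
      intro j hj
      obtain ⟨i, -, h0⟩ := hrow j hj
      have := h.of_ne h0
      exact ⟨_, h0, this.1, this.2.1⟩)
    (by
      intro v hv hvm
      rcases hstep v hv hvm with h1 | h1 <;> omega)
  have hall : ∀ v, v ≠ 0 → v ≤ m → r v = rr (fun v => c v = c (v + 1)) v ∧
      c v = cc (fun v => c v = c (v + 1)) v := by
    intro v hv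
    induction v with
    | zero => exact absurd rfl hv
    | succ v ih =>
      intro hvm
      by_cases h0 : v = 0
      · subst h0
        rw [zero_add, rr_one, cc_one]
        exact ⟨r1, c1⟩
      · obtain ⟨i1, i2⟩ := ih h0 (by omega)
        rw [rr_succ _ h0, cc_succ _ h0, ← i1, ← i2]
        have a := hstep v h0 (by omega)
        have b := cs v h0 (by omega)
        have d := rs v h0 (by omega)
        split_ifs <;> omega
  have := hall m hm0 le_rfl
  exact ⟨hall, by omega, by omega, halt⟩

/-- the order isomorphism `{1,…,#U} ≅ U`. -/
noncomputable def fU (U : Finset ℕ) (v : ℕ) : ℕ := (U.sort (· ≤ ·)).getD (v - 1) 0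

lemma relabel_eq (U s : Finset ℕ) : relabel U s = s.image (fU U) := rfl

lemma fU_lt (U : Finset ℕ) (v w : ℕ) (hv : v ≠ 0) (hvw : v < w) (hw : w ≤ U.card) :
    fU U v < fU U w := by
  have hs : (U.sort (· ≤ ·)).length = U.card := Finset.length_sort _
  have h1 : v - 1 < (U.sort (· ≤ ·)).length := by omega
  have h2 : w - 1 < (U.sort (· ≤ ·)).length := by omega
  unfold fU
  rw [List.getD_eq_getElem _ _ h1, List.getD_eq_getElem _ _ h2]
  have := (Finset.sortedLT_sort U).pairwise
  rw [List.pairwise_iff_getElem] at this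
  exact this _ _ h1 h2 (by omega)

lemma fU_image (U : Finset ℕ) : (Finset.Icc 1 U.card).image (fU U) = U := by
  ext x
  have hs : (U.sort (· ≤ ·)).length = U.card := Finset.length_sort _
  rw [Finset.mem_image]
  constructor
  · rintro ⟨v, hv, rfl⟩
    rw [Finset.mem_Icc] at hv
    have h1 : v - 1 < (U.sort (· ≤ ·)).length := by omega
    unfold fU
    rw [List.getD_eq_getElem _ _ h1, ← Finset.mem_sort (· ≤ ·)]
    exact List.getElem_mem h1
  · intro hx
    rw [← Finset.mem_sort (· ≤ ·), List.mem_iff_getElem] at hx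
    obtain ⟨k, hk, rfl⟩ := hx
    refine ⟨k + 1, by rw [Finset.mem_Icc]; omega, ?_⟩
    unfold fU
    rw [Nat.add_sub_cancel, List.getD_eq_getElem _ _ hk]

lemma fU_mem (U : Finset ℕ) {v : ℕ} (h0 : v ≠ 0) (hv : v ≤ U.card) : fU U v ∈ U := by
  have h : fU U v ∈ (Finset.Icc 1 U.card).image (fU U) :=
    Finset.mem_image_of_mem _ (by rw [Finset.mem_Icc]; omega)
  rwa [fU_image] at h

lemma fU_surj (U : Finset ℕ) {x : ℕ} (hx : x ∈ U) : ∃ v, v ≠ 0 ∧ v ≤ U.card ∧ fU U v = x := by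
  rw [← fU_image U, Finset.mem_image] at hx
  obtain ⟨v, hv, h⟩ := hx
  rw [Finset.mem_Icc] at hv
  exact ⟨v, by omega, hv.2, h⟩

lemma fU_inj (U : Finset ℕ) (v w : ℕ) (hv : v ≠ 0) (hvm : v ≤ U.card) (hw : w ≠ 0)
    (hwm : w ≤ U.card) (h : fU U v = fU U w) : v = w := by
  rcases lt_trichotomy v w with h1 | h1 | h1
  · have := fU_lt U v w hv h1 hwm
    omega
  · exact h1
  · have := fU_lt U w v hw h1 hvm
    omega

lemma fU_succ_of_mem (U : Finset ℕ) {v : ℕ} (hv : v ≠ 0) (hvm : v < U.card)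
    (h : fU U v + 1 ∈ U) : fU U (v + 1) = fU U v + 1 := by
  obtain ⟨w, hw, hwm, he⟩ := fU_surj U h
  have h1 := fU_lt U v (v + 1) hv (by omega) (by omega)
  rcases lt_trichotomy w (v + 1) with h2 | h2 | h2
  · rcases (show w ≤ v by omega).eq_or_lt with rfl | h3
    · omega
    · have := fU_lt U w v hw h3 (by omega)
      omega
  · rw [← h2, he]
  · have := fU_lt U (v + 1) w (by omega) h2 hwm
    omega

lemma fU_succ (U : Finset ℕ) (hU : IsInterval U) {v : ℕ} (hv : v ≠ 0) (hvm : v < U.card) :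
    fU U (v + 1) = fU U v + 1 := by
  apply fU_succ_of_mem U hv hvm
  have h1 := fU_lt U v (v + 1) hv (by omega) (by omega)
  exact hU _ (fU_mem U hv hvm.le) _ (fU_mem U (v := v + 1) (by omega) (by omega)) _ (by omega)
    (by omega)

lemma fU_add (U : Finset ℕ) (h : ∀ v, v ≠ 0 → v < U.card → fU U (v + 1) = fU U v + 1)
    (v : ℕ) (hv : v ≠ 0) (hvm : v ≤ U.card) : fU U v + 1 = fU U 1 + v := by
  induction v with
  | zero => exact absurd rfl hv
  | succ v ih =>
    by_cases h0 : v = 0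
    · subst h0
      rfl
    · have := ih h0 (by omega)
      rw [h v h0 (by omega)]
      omega

lemma interval_of_succ (U : Finset ℕ)
    (h : ∀ v, v ≠ 0 → v < U.card → fU U (v + 1) = fU U v + 1) : IsInterval U := by
  intro a ha b hb x hax hxb
  obtain ⟨v, hv, hvm, rfl⟩ := fU_surj U ha
  obtain ⟨w, hw, hwm, rfl⟩ := fU_surj U hb
  have h1 := fU_add U h v hv hvm
  have h2 := fU_add U h w hw hwm
  have h3 := fU_add U h (x + 1 - fU U 1) (by omega) (by omega)
  have : fU U (x + 1 - fU U 1) = x := by omega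
  rw [← this]
  exact fU_mem U (by omega) (by omega)

/-- `x, x+1 ∈ U` -/
def Iblk (U : Finset ℕ) : Finset ℕ := U.filter (fun x => x + 1 ∈ U)

def dnT (U T : Finset ℕ) (v : ℕ) : Prop := fU U v ∈ T

noncomputable def colL (U T : Finset ℕ) : List (Finset ℕ) :=
  (List.range (cc (dnT U T) U.card + 1)).map
    (fun j => ((Finset.Icc 1 U.card).filter (fun v => cc (dnT U T) v = j)).image (fU U))

noncomputable def rowL (U T : Finset ℕ) : List (Finset ℕ) :=
  ((List.range (rr (dnT U T) U.card + 1)).map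
    (fun j => ((Finset.Icc 1 U.card).filter (fun v => rr (dnT U T) v = j)).image (fU U))).reverse

lemma Rep.colFace {q p m : ℕ} {r c : ℕ → ℕ} {M : Matrix (Fin q) (Fin p) ℕ} (h : Rep m r c M) :
    SU.colFace M = (List.range p).map (fun j => (Finset.Icc 1 m).filter (fun v => c v = j)) := by
  unfold SU.colFace
  congr 1
  funext j
  exact h.colBlock j

lemma Rep.rowFace {q p m : ℕ} {r c : ℕ → ℕ} {M : Matrix (Fin q) (Fin p) ℕ} (h : Rep m r c M) :
    SU.rowFace M =
      ((List.range q).map (fun j => (Finset.Icc 1 m).filter (fun v => r v = j))).reverse := by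
  unfold SU.rowFace
  congr 2
  funext j
  exact h.rowBlock j

lemma csgn_zmod2 {q p : ℕ} (F : Matrix (Fin q) (Fin p) ℕ) : ((csgn F : ℤ) : ZMod 2) = 1 := by
  unfold csgn
  split_ifs
  · simp [csgnFrom, sgn1, sgn2, rsgn, psgn]
  · simp

/-- pairs all of whose blocks are intervals. -/
def Good (ab : List (Finset ℕ) × List (Finset ℕ)) : Prop :=
  (∀ s ∈ ab.1, IsInterval s) ∧ (∀ s ∈ ab.2, IsInterval s)

lemma isInterval_empty : IsInterval ∅ := by
  intro a ha
  simp at ha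

lemma image_range_interval {g f : ℕ → ℕ} {m p : ℕ} (hlt : ∀ v, v ≠ 0 → v ≤ m → g v < p)
    (h : ∀ j < p, IsInterval (((Finset.Icc 1 m).filter (fun v => g v = j)).image f)) (j : ℕ) :
    IsInterval (((Finset.Icc 1 m).filter (fun v => g v = j)).image f) := by
  by_cases hj : j < p
  · exact h j hj
  · have : (Finset.Icc 1 m).filter (fun v => g v = j) = ∅ := by
      rw [Finset.filter_eq_empty_iff]
      intro v hv hg
      rw [Finset.mem_Icc] at hv
      have := hlt v (by omega) hv.2
      omega
    rw [this]
    exact isInterval_empty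

/-- combinatorial heart: a good configuration matrix is a staircase. -/
lemma good_struct {q p : ℕ} {M : Matrix (Fin q) (Fin p) ℕ} {U : Finset ℕ} (hU : U.card ≠ 0)
    (ho : IsOrderedMatrix M) (hes : entrySet M = Finset.Icc 1 U.card)
    (hg : Good ((colFace M).map (relabel U), (rowFace M).map (relabel U))) :
    IsInterval U ∧ ∃ T ⊆ Iblk U, q = rr (dnT U T) U.card + 1 ∧ p = cc (dnT U T) U.card + 1 ∧
      Rep U.card (rr (dnT U T)) (cc (dnT U T)) M := by
  obtain ⟨r, c, h⟩ := ordered_rep ho hes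
  obtain ⟨hg1, hg2⟩ := hg
  rw [h.colFace] at hg1
  rw [h.rowFace] at hg2
  simp only [List.mem_map, List.mem_reverse, List.mem_range] at hg1 hg2
  have hC := image_range_interval (f := fU U) (fun v h0 h1 => (h.lt h0 h1).2)
    (fun j hj => hg1 _ ⟨_, ⟨j, hj, rfl⟩, rfl⟩)
  have hR := image_range_interval (f := fU U) (fun v h0 h1 => (h.lt h0 h1).1)
    (fun j hj => hg2 _ ⟨_, ⟨j, hj, rfl⟩, rfl⟩)
  obtain ⟨s1, s2, s3, s4⟩ := struct hU h ho (fU_lt U) hC hR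
  have hblk : ∀ (g : ℕ → ℕ), (∀ j, IsInterval
      (((Finset.Icc 1 U.card).filter (fun v => g v = j)).image (fU U))) →
      ∀ v, v ≠ 0 → v < U.card → g v = g (v + 1) → fU U v + 1 ∈ U := by
    intro g hg v hv hvm he
    have h1 := fU_lt U v (v + 1) hv (by omega) (by omega)
    have := hg (g v) (fU U v) (Finset.mem_image_of_mem _ (by simp; omega)) (fU U (v + 1))
      (Finset.mem_image_of_mem _ (by simp; omega)) (fU U v + 1) (by omega) (by omega)
    have h2 := Finset.image_subset_image (f := fU U) (Finset.filter_subset _ _) this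
    rwa [fU_image] at h2
  have hsucc : ∀ v, v ≠ 0 → v < U.card → fU U (v + 1) = fU U v + 1 := by
    intro v hv hvm
    apply fU_succ_of_mem U hv hvm
    rcases s4 v hv hvm with h1 | h1
    · exact hblk r hR v hv hvm h1
    · exact hblk c hC v hv hvm h1
  refine ⟨interval_of_succ U hsucc, ?_⟩
  set T := ((Finset.Ico 1 U.card).filter (fun v => c v = c (v + 1))).image (fU U) with hT
  have hdn : ∀ v, v ≠ 0 → v < U.card → (dnT U T v ↔ c v = c (v + 1)) := by
    intro v hv hvm
    simp only [dnT, hT, Finset.mem_image, Finset.mem_filter, Finset.mem_Ico]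
    constructor
    · rintro ⟨w, ⟨⟨h1, h2⟩, h3⟩, h4⟩
      have := fU_inj U w v (by omega) (by omega) hv hvm.le h4
      rwa [this] at h3
    · intro h1
      exact ⟨v, ⟨⟨by omega, hvm⟩, h1⟩, rfl⟩
  have hrr : ∀ v, v ≤ U.card → rr (fun v => c v = c (v + 1)) v = rr (dnT U T) v := by
    intro v hv
    unfold rr
    congr 1
    ext x
    simp only [Finset.mem_filter, Finset.mem_range]
    constructor
    · rintro ⟨h0, h1, h2⟩
      exact ⟨h0, h1, (hdn x (by omega) (by omega)).2 h2⟩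
    · rintro ⟨h0, h1, h2⟩
      exact ⟨h0, h1, (hdn x (by omega) (by omega)).1 h2⟩
  have hcc : ∀ v, v ≠ 0 → v ≤ U.card → cc (fun v => c v = c (v + 1)) v = cc (dnT U T) v := by
    intro v hv hvm
    have h1 := rr_add_cc (fun v => c v = c (v + 1)) hv
    have h2 := rr_add_cc (dnT U T) hv
    have h3 := hrr v hvm
    omega
  refine ⟨T, ?_, ?_, ?_, ?_⟩
  · intro x hx
    simp only [hT, Finset.mem_image, Finset.mem_filter, Finset.mem_Ico] at hx
    obtain ⟨w, ⟨⟨h1, h2⟩, h3⟩, rfl⟩ := hx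
    rw [Iblk, Finset.mem_filter, ← hsucc w (by omega) h2]
    exact ⟨fU_mem U (by omega) (by omega), fU_mem U (by omega) (by omega)⟩
  · rw [← hrr _ le_rfl]
    exact s2
  · rw [← hcc _ hU le_rfl]
    exact s3
  · refine h.congr ?_ ?_
    · intro v hv hvm
      rw [(s1 v hv hvm).1, hrr v hvm]
    · intro v hv hvm
      rw [(s1 v hv hvm).2, hcc v hv hvm]

lemma exists_stairG (dn : ℕ → Prop) {m : ℕ} (hm : m ≠ 0) :
    ∃ G : Fin (rr dn m + 1) → Fin (cc dn m + 1) → Fin (m + 1),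
      IsConfigMatrix (Matrix.of fun i j => ((G i j : ℕ))) ∧
      Rep m (rr dn) (cc dn) (Matrix.of fun i j => ((G i j : ℕ))) := by
  obtain ⟨F, h1, h2⟩ := exists_stair dn hm
  have hle : ∀ i j, F i j < m + 1 := by
    intro i j
    have he : entry F i j = F i j := by rw [entry, dif_pos ⟨i.2, j.2⟩]
    by_cases h0 : entry F i j = 0
    · omega
    · have := (h2.of_ne h0).1
      omega
  refine ⟨fun i j => ⟨F i j, hle i j⟩, ?_, ?_⟩
  · exact h1
  · exact h2

lemma sigma_eq {m q p q' p' : ℕ} (hq : q = q') (hp : p = p')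
    (G : Fin q → Fin p → Fin (m + 1)) (G' : Fin q' → Fin p' → Fin (m + 1))
    (h : ∀ i j, entry (Matrix.of fun i j => ((G i j : ℕ))) i j =
      entry (Matrix.of fun i j => ((G' i j : ℕ))) i j) :
    (⟨q, p, G⟩ : Σ q : ℕ, Σ p : ℕ, (Fin q → Fin p → Fin (m + 1))) = ⟨q', p', G'⟩ := by
  subst hq hp
  have := entry_ext h
  congr
  funext i j
  have h2 := congrFun (congrFun this i) j
  exact Fin.ext h2

lemma stair_faces {q p : ℕ} {M : Matrix (Fin q) (Fin p) ℕ} {U T : Finset ℕ}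
    (hq : q = rr (dnT U T) U.card + 1) (hp : p = cc (dnT U T) U.card + 1)
    (h : Rep U.card (rr (dnT U T)) (cc (dnT U T)) M) :
    (colFace M).map (relabel U) = colL U T ∧ (rowFace M).map (relabel U) = rowL U T := by
  rw [h.colFace, h.rowFace, hq, hp]
  constructor
  · rw [List.map_map]
    rfl
  · rw [List.map_reverse, List.map_map]
    rfl

lemma T_eq_of_rep {U T T' : Finset ℕ} (hT : T ⊆ Iblk U) (hT' : T' ⊆ Iblk U)
    (h : ∀ v, v ≠ 0 → v ≤ U.card → cc (dnT U T) v = cc (dnT U T') v) : T = T' := by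
  have key : ∀ v, v ≠ 0 → v < U.card → (fU U v ∈ T ↔ fU U v ∈ T') := by
    intro v hv hvm
    have h1 := h v hv hvm.le
    have h2 := h (v + 1) (by omega) (by omega)
    rw [cc_succ _ hv, cc_succ _ hv, h1] at h2
    change dnT U T v ↔ dnT U T' v
    by_cases ha : dnT U T v <;> by_cases hb : dnT U T' v <;> simp [ha, hb] at h2 ⊢
  have aux : ∀ x ∈ Iblk U, ∃ v, v ≠ 0 ∧ v < U.card ∧ fU U v = x := by
    intro x hx
    rw [Iblk, Finset.mem_filter] at hx
    obtain ⟨v, hv, hvm, rfl⟩ := fU_surj U hx.1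
    obtain ⟨w, hw, hwm, h2⟩ := fU_surj U hx.2
    refine ⟨v, hv, ?_, rfl⟩
    by_contra hcon
    rcases (show w ≤ v by omega).eq_or_lt with h3 | h3
    · rw [h3] at h2
      omega
    · have := fU_lt U w v hw h3 hvm
      omega
  ext x
  constructor
  · intro hx
    obtain ⟨v, h1, h2, rfl⟩ := aux x (hT hx)
    exact (key v h1 h2).1 hx
  · intro hx
    obtain ⟨v, h1, h2, rfl⟩ := aux x (hT' hx)
    exact (key v h1 h2).2 hx

lemma delta_top {V : Type*} [AddCommGroup V] [Module (ZMod 2) V] (U : Finset ℕ)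
    (hU : U.card ≠ 0) (ψ : List (Finset ℕ) × List (Finset ℕ) → V)
    (hψ : ∀ ab, ¬ Good ab → ψ ab = 0) :
    ((deltaTop (ZMod 2) U.card).sum fun ab k =>
      k • ψ (ab.1.map (relabel U), ab.2.map (relabel U))) =
    if IsInterval U then ∑ T ∈ (Iblk U).powerset, ψ (colL U T, rowL U T) else 0 := by
  by_cases h1 : U.card = 1
  · obtain ⟨x, rfl⟩ := Finset.card_eq_one.1 h1
    have hI : IsInterval {x} := by
      intro a ha b hb y h2 h3
      simp only [Finset.mem_singleton] at *
      omega
    have hB : Iblk {x} = ∅ := by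
      simp [Iblk, Finset.filter_eq_empty_iff]
    rw [if_pos hI, hB, deltaTop, if_pos h1]
    simp only [Finset.powerset_empty, Finset.sum_singleton]
    rw [Finsupp.sum_single_index (by simp), one_smul]
    congr 1
  · have hlin : ∀ t : (List (Finset ℕ) × List (Finset ℕ)) →₀ ZMod 2,
        (t.sum fun ab k => k • ψ (ab.1.map (relabel U), ab.2.map (relabel U))) =
        Finsupp.linearCombination (ZMod 2)
          (fun ab : List (Finset ℕ) × List (Finset ℕ) =>
            ψ (ab.1.map (relabel U), ab.2.map (relabel U))) t := fun t => rfl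
    rw [hlin, deltaTop, if_neg h1]
    simp only [map_sum, csgn_zmod2, one_smul, apply_ite, map_zero,
      Finsupp.linearCombination_single]
    rw [Finset.sum_congr rfl (fun q _ => Finset.sum_sigma' _ _ _), Finset.sum_sigma']
    by_cases hI : IsInterval U
    · rw [if_pos hI]
      symm
      choose G hG1 hG2 using fun T : Finset ℕ => exists_stairG (dnT U T) hU
      apply Finset.sum_of_injOn (fun T =>
        (⟨_, _, G T⟩ : Σ q : ℕ, Σ p : ℕ, (Fin q → Fin p → Fin (U.card + 1))))
      · intro T hT T' hT' he
        simp only [Finset.coe_powerset, Set.mem_preimage, Set.mem_powerset_iff,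
          Finset.coe_subset] at hT hT'
        apply T_eq_of_rep hT hT'
        intro v hv hvm
        have e2 := (hG2 T).at hv hvm
        have e3 : ∀ i j, entry (Matrix.of fun i j => ((G T i j : ℕ))) i j =
            entry (Matrix.of fun i j => ((G T' i j : ℕ))) i j := by
          intro i j
          exact congrArg (fun z : (Σ q : ℕ, Σ p : ℕ, (Fin q → Fin p → Fin (U.card + 1))) =>
            entry (Matrix.of fun i j => ((z.2.2 i j : ℕ))) i j) he
        rw [e3] at e2
        exact ((hG2 T' _ _ v hv).1 e2).2.2.symm
      · intro T hT
        have h2 := rr_add_cc (dnT U T) hU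
        simp only [Finset.coe_sigma, Set.mem_sigma_iff, Finset.coe_Icc, Set.mem_Icc,
          Finset.coe_univ, Set.mem_univ, and_true]
        omega
      · rintro ⟨q, p, H⟩ - hn
        simp only
        by_contra hne
        have hcfg : IsConfigMatrix (Matrix.of fun i j => ((H i j : ℕ))) ∧
            entrySet (Matrix.of fun i j => ((H i j : ℕ))) = Finset.Icc 1 U.card := by
          by_contra h
          rw [if_neg h] at hne
          exact hne rfl
        rw [if_pos hcfg] at hne
        have hgood := not_imp_comm.1 (hψ _) hne
        obtain ⟨-, T, hT, hq, hp, hrep⟩ := good_struct hU hcfg.1.1 hcfg.2 hgood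
        apply hn
        refine ⟨T, by simpa using hT, ?_⟩
        symm
        exact sigma_eq hq hp _ _ (fun i j => hrep.unique (hG2 T) i j)
      · intro T hT
        simp only
        rw [if_pos ⟨hG1 T, (hG2 T).entrySet⟩]
        obtain ⟨f1, f2⟩ := stair_faces rfl rfl (hG2 T)
        rw [f1, f2]
    · rw [if_neg hI]
      apply Finset.sum_eq_zero
      rintro ⟨q, p, H⟩ -
      simp only
      split_ifs with hcfg
      · apply hψ
        intro hgood
        exact hI (good_struct hU hcfg.1.1 hcfg.2 hgood).1
      · rfl

/-- comparison of the blocks of `x` and `x+1`. -/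
def rel (u : List (Finset ℕ)) (x : ℕ) : Fin 3 :=
  if blockIdx u x = blockIdx u (x + 1) then 2
  else if blockIdx u x < blockIdx u (x + 1) then 0 else 1

lemma rhoCode_eq (n : ℕ) (u : List (Finset ℕ)) (i : Fin n) :
    rhoCode n u i = rel u ((i : ℕ) + 1) := rfl

def Supp (u : List (Finset ℕ)) (x : ℕ) : Prop := ∃ s ∈ u, x ∈ s

lemma blockIdx_lt {u : List (Finset ℕ)} {x : ℕ} (h : Supp u x) : blockIdx u x < u.length := by
  unfold blockIdx
  rw [List.findIdx_lt_length]
  obtain ⟨s, h1, h2⟩ := h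
  exact ⟨s, h1, by simpa using h2⟩

lemma blockIdx_append_left {a b : List (Finset ℕ)} {x : ℕ} (h : Supp a x) :
    blockIdx (a ++ b) x = blockIdx a x := by
  have := blockIdx_lt h
  unfold blockIdx at *
  rw [List.findIdx_append, if_pos this]

lemma blockIdx_append_right {a b : List (Finset ℕ)} {x : ℕ} (h : ¬ Supp a x) :
    blockIdx (a ++ b) x = a.length + blockIdx b x := by
  unfold blockIdx at *
  rw [List.findIdx_append, if_neg, add_comm]
  rw [List.findIdx_lt_length]
  rintro ⟨s, h1, h2⟩
  exact h ⟨s, h1, by simpa using h2⟩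

lemma blockIdx_eq {u : List (Finset ℕ)} {x k : ℕ} (hk : k < u.length) (h1 : x ∈ u[k])
    (h2 : ∀ j (hj : j < k), x ∉ u[j]'(hj.trans hk)) : blockIdx u x = k := by
  unfold blockIdx
  rw [List.findIdx_eq hk]
  refine ⟨by simpa using h1, ?_⟩
  intro j hj
  simpa using h2 j hj

lemma rel_append_both {a b : List (Finset ℕ)} {x : ℕ} (h : Supp a x) (h' : Supp a (x + 1)) :
    rel (a ++ b) x = rel a x := by
  simp only [rel, blockIdx_append_left h, blockIdx_append_left h']

lemma rel_append_neither {a b : List (Finset ℕ)} {x : ℕ} (h : ¬ Supp a x)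
    (h' : ¬ Supp a (x + 1)) : rel (a ++ b) x = rel b x := by
  simp only [rel, blockIdx_append_right h, blockIdx_append_right h', add_right_inj,
    add_lt_add_iff_left]

lemma rel_append_lr {a b : List (Finset ℕ)} {x : ℕ} (h : Supp a x)
    (h' : ¬ Supp a (x + 1)) : rel (a ++ b) x = 0 := by
  have := blockIdx_lt h
  simp only [rel, blockIdx_append_left h, blockIdx_append_right h']
  rw [if_neg (by omega), if_pos (by omega)]

lemma rel_append_rl {a b : List (Finset ℕ)} {x : ℕ} (h : ¬ Supp a x)
    (h' : Supp a (x + 1)) : rel (a ++ b) x = 1 := by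
  have := blockIdx_lt h'
  simp only [rel, blockIdx_append_right h, blockIdx_append_left h']
  rw [if_neg (by omega), if_neg (by omega)]

lemma blockIdx_colL (U T : Finset ℕ) {v : ℕ} (hv : v ≠ 0) (hvm : v ≤ U.card) :
    blockIdx (colL U T) (fU U v) = cc (dnT U T) v := by
  have hlt : cc (dnT U T) v < (colL U T).length := by
    have := cc_mono (dnT U T) hvm
    simp [colL]
    omega
  apply blockIdx_eq hlt
  · simp only [colL, List.getElem_map, List.getElem_range]
    apply Finset.mem_image_of_mem
    simp
    omega
  · intro j hj
    simp only [colL, List.getElem_map, List.getElem_range, Finset.mem_image, Finset.mem_filter,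
      Finset.mem_Icc]
    rintro ⟨w, ⟨⟨h1, h2⟩, h3⟩, h4⟩
    have := fU_inj U w v (by omega) h2 hv hvm h4
    subst this
    omega

lemma blockIdx_rowL (U T : Finset ℕ) {v : ℕ} (hv : v ≠ 0) (hvm : v ≤ U.card) :
    blockIdx (rowL U T) (fU U v) = rr (dnT U T) U.card - rr (dnT U T) v := by
  have hle := rr_mono (dnT U T) hvm
  have hlt : rr (dnT U T) U.card - rr (dnT U T) v < (rowL U T).length := by
    simp [rowL]
  apply blockIdx_eq hlt
  · simp only [rowL, List.getElem_reverse, List.getElem_map, List.getElem_range, List.length_map,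
      List.length_range]
    apply Finset.mem_image_of_mem
    simp
    omega
  · intro j hj
    simp only [rowL, List.getElem_reverse, List.getElem_map, List.getElem_range, List.length_map,
      List.length_range, Finset.mem_image, Finset.mem_filter,
      Finset.mem_Icc]
    rintro ⟨w, ⟨⟨h1, h2⟩, h3⟩, h4⟩
    have := fU_inj U w v (by omega) h2 hv hvm h4
    subst this
    omega

lemma supp_colL (U T : Finset ℕ) (x : ℕ) : Supp (colL U T) x ↔ x ∈ U := by
  constructor
  · rintro ⟨s, h1, h2⟩
    simp only [colL, List.mem_map, List.mem_range] at h1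
    obtain ⟨j, -, rfl⟩ := h1
    rw [Finset.mem_image] at h2
    obtain ⟨v, h3, rfl⟩ := h2
    rw [Finset.mem_filter, Finset.mem_Icc] at h3
    exact fU_mem U (by omega) (by omega)
  · intro hx
    obtain ⟨v, hv, hvm, rfl⟩ := fU_surj U hx
    refine ⟨_, List.mem_map.2 ⟨cc (dnT U T) v, List.mem_range.2 ?_, rfl⟩, ?_⟩
    · have := cc_mono (dnT U T) hvm
      omega
    · apply Finset.mem_image_of_mem
      simp
      omega

lemma supp_rowL (U T : Finset ℕ) (x : ℕ) : Supp (rowL U T) x ↔ x ∈ U := by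
  constructor
  · rintro ⟨s, h1, h2⟩
    simp only [rowL, List.mem_reverse, List.mem_map, List.mem_range] at h1
    obtain ⟨j, -, rfl⟩ := h1
    rw [Finset.mem_image] at h2
    obtain ⟨v, h3, rfl⟩ := h2
    rw [Finset.mem_filter, Finset.mem_Icc] at h3
    exact fU_mem U (by omega) (by omega)
  · intro hx
    obtain ⟨v, hv, hvm, rfl⟩ := fU_surj U hx
    refine ⟨_, List.mem_reverse.2 (List.mem_map.2
      ⟨rr (dnT U T) v, List.mem_range.2 ?_, rfl⟩), ?_⟩
    · have := rr_mono (dnT U T) hvm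
      omega
    · apply Finset.mem_image_of_mem
      simp
      omega

lemma Iblk_index {U : Finset ℕ} {x : ℕ} (hx : x ∈ U) (hx' : x + 1 ∈ U) :
    ∃ v, v ≠ 0 ∧ v < U.card ∧ fU U v = x ∧ fU U (v + 1) = x + 1 := by
  obtain ⟨v, hv, hvm, rfl⟩ := fU_surj U hx
  obtain ⟨w, hw, hwm, h2⟩ := fU_surj U hx'
  have hlt : v < U.card := by
    by_contra hcon
    rcases (show w ≤ v by omega).eq_or_lt with h3 | h3
    · rw [h3] at h2
      omega
    · have := fU_lt U w v hw h3 hvm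
      omega
  exact ⟨v, hv, hlt, rfl, fU_succ_of_mem U hv hlt hx'⟩

lemma rel_colL {U T : Finset ℕ} {x : ℕ} (hx : x ∈ U) (hx' : x + 1 ∈ U) :
    rel (colL U T) x = if x ∈ T then 2 else 0 := by
  obtain ⟨v, hv, hvm, rfl, h2⟩ := Iblk_index hx hx'
  unfold rel
  rw [← h2, blockIdx_colL U T hv hvm.le, blockIdx_colL U T (by omega) (by omega), cc_succ _ hv]
  by_cases h : fU U v ∈ T
  · simp [dnT, h]
  · simp [dnT, h]

lemma rel_rowL {U T : Finset ℕ} {x : ℕ} (hx : x ∈ U) (hx' : x + 1 ∈ U) :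
    rel (rowL U T) x = if x ∈ T then 1 else 2 := by
  obtain ⟨v, hv, hvm, rfl, h2⟩ := Iblk_index hx hx'
  unfold rel
  have hle := rr_mono (dnT U T) (show v + 1 ≤ U.card by omega)
  rw [← h2, blockIdx_rowL U T hv hvm.le, blockIdx_rowL U T (by omega) (by omega)]
  have hs := rr_succ (dnT U T) hv
  by_cases h : fU U v ∈ T
  · rw [if_pos (show dnT U T v from h)] at hs
    rw [if_pos h, if_neg (by omega), if_neg (by omega)]
  · rw [if_neg (show ¬ dnT U T v from h)] at hs
    rw [if_neg h, if_pos (by omega)]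

lemma mono_block_interval {U : Finset ℕ} (hU : IsInterval U) {g : ℕ → ℕ} (hg : Monotone g)
    (j : ℕ) :
    IsInterval (((Finset.Icc 1 U.card).filter (fun v => g v = j)).image (fU U)) := by
  intro a ha b hb x hax hxb
  rw [Finset.mem_image] at ha hb
  obtain ⟨v, hv, rfl⟩ := ha
  obtain ⟨w, hw, rfl⟩ := hb
  rw [Finset.mem_filter, Finset.mem_Icc] at hv hw
  have hx : x ∈ U := hU _ (fU_mem U (by omega) (by omega)) _
    (fU_mem U (v := w) (by omega) (by omega)) x hax hxb
  obtain ⟨y, hy, hym, rfl⟩ := fU_surj U hx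
  apply Finset.mem_image_of_mem
  rw [Finset.mem_filter, Finset.mem_Icc]
  have h1 : v ≤ y := by
    by_contra h
    have := fU_lt U y v hy (by omega) (by omega)
    omega
  have h2 : y ≤ w := by
    by_contra h
    have := fU_lt U w y (by omega) (by omega) (by omega)
    omega
  have h3 := hg h1
  have h4 := hg h2
  omega

lemma colL_good {U : Finset ℕ} (hU : IsInterval U) (T : Finset ℕ) :
    ∀ s ∈ colL U T, IsInterval s := by
  intro s hs
  simp only [colL, List.mem_map] at hs
  obtain ⟨j, -, rfl⟩ := hs
  exact mono_block_interval hU (cc_mono _) j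

lemma rowL_good {U : Finset ℕ} (hU : IsInterval U) (T : Finset ℕ) :
    ∀ s ∈ rowL U T, IsInterval s := by
  intro s hs
  simp only [rowL, List.mem_reverse, List.mem_map] at hs
  obtain ⟨j, -, rfl⟩ := hs
  exact mono_block_interval hU (rr_mono _) j

lemma rr_congr {dn dn' : ℕ → Prop} {m : ℕ} (h : ∀ v, v ≠ 0 → v ≤ m → (dn v ↔ dn' v)) {v : ℕ}
    (hv : v ≤ m) : rr dn v = rr dn' v := by
  unfold rr
  congr 1
  ext x
  simp only [Finset.mem_filter, Finset.mem_range]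
  constructor
  · rintro ⟨h0, h1, h2⟩
    exact ⟨h0, h1, (h x (by omega) (by omega)).1 h2⟩
  · rintro ⟨h0, h1, h2⟩
    exact ⟨h0, h1, (h x (by omega) (by omega)).2 h2⟩

lemma LL_congr {U T T' : Finset ℕ} (h : ∀ x ∈ U, (x ∈ T ↔ x ∈ T')) :
    colL U T = colL U T' ∧ rowL U T = rowL U T' := by
  have hd : ∀ v, v ≠ 0 → v ≤ U.card → (dnT U T v ↔ dnT U T' v) :=
    fun v h0 h1 => h _ (fU_mem U h0 h1)
  have hr : ∀ v, v ≤ U.card → rr (dnT U T) v = rr (dnT U T') v := fun v hv => rr_congr hd hv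
  have hc : ∀ v, v ≤ U.card → cc (dnT U T) v = cc (dnT U T') v :=
    fun v hv => rr_congr (fun w h0 h1 => not_congr (hd w h0 h1)) hv
  constructor
  · unfold colL
    rw [hc _ le_rfl]
    congr 1
    funext j
    congr 1
    apply Finset.filter_congr
    intro v hv
    rw [hc v (Finset.mem_Icc.1 hv).2]
  · unfold rowL
    rw [hr _ le_rfl]
    congr 2
    funext j
    congr 1
    apply Finset.filter_congr
    intro v hv
    rw [hr v (Finset.mem_Icc.1 hv).2]

def Iset : List (Finset ℕ) → Finset ℕ
  | [] => ∅
  | U :: L => Iblk U ∪ Iset L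

noncomputable def AA (u : List (Finset ℕ)) (T : Finset ℕ) : List (Finset ℕ) :=
  u.flatMap (fun U => colL U T)

noncomputable def BB (u : List (Finset ℕ)) (T : Finset ℕ) : List (Finset ℕ) :=
  u.flatMap (fun U => rowL U T)

lemma AABB_congr {u : List (Finset ℕ)} {T T' : Finset ℕ}
    (h : ∀ U ∈ u, ∀ x ∈ U, (x ∈ T ↔ x ∈ T')) : AA u T = AA u T' ∧ BB u T = BB u T' := by
  induction u with
  | nil => exact ⟨rfl, rfl⟩
  | cons U L ih =>
    obtain ⟨h1, h2⟩ := ih (fun V hV => h V (List.mem_cons_of_mem _ hV))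
    obtain ⟨h3, h4⟩ := LL_congr (h U List.mem_cons_self)
    constructor
    · change colL U T ++ AA L T = colL U T' ++ AA L T'
      rw [h1, h3]
    · change rowL U T ++ BB L T = rowL U T' ++ BB L T'
      rw [h2, h4]

lemma Iset_supp {u : List (Finset ℕ)} {x : ℕ} (h : x ∈ Iset u) : Supp u x ∧ Supp u (x + 1) := by
  induction u with
  | nil => simp [Iset] at h
  | cons U L ih =>
    rw [Iset, Finset.mem_union] at h
    rcases h with h | h
    · rw [Iblk, Finset.mem_filter] at h
      exact ⟨⟨U, List.mem_cons_self, h.1⟩, ⟨U, List.mem_cons_self, h.2⟩⟩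
    · obtain ⟨⟨s, h1, h2⟩, ⟨t, h3, h4⟩⟩ := ih h
      exact ⟨⟨s, List.mem_cons_of_mem _ h1, h2⟩, ⟨t, List.mem_cons_of_mem _ h3, h4⟩⟩

lemma supp_append {a b : List (Finset ℕ)} {x : ℕ} : Supp (a ++ b) x ↔ Supp a x ∨ Supp b x := by
  simp only [Supp, List.mem_append, or_and_right, exists_or]

lemma supp_AA (u : List (Finset ℕ)) (T : Finset ℕ) (x : ℕ) : Supp (AA u T) x ↔ Supp u x := by
  induction u with
  | nil => rfl
  | cons U L ih =>
    change Supp (colL U T ++ AA L T) x ↔ _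
    rw [supp_append, ih, supp_colL]
    simp [Supp]

lemma supp_BB (u : List (Finset ℕ)) (T : Finset ℕ) (x : ℕ) : Supp (BB u T) x ↔ Supp u x := by
  induction u with
  | nil => rfl
  | cons U L ih =>
    change Supp (rowL U T ++ BB L T) x ↔ _
    rw [supp_append, ih, supp_rowL]
    simp [Supp]

lemma supp_single (U : Finset ℕ) (x : ℕ) : Supp [U] x ↔ x ∈ U := by simp [Supp]

/-- compatibility of two lists built blockwise. -/
lemma rel_AA (u : List (Finset ℕ)) (hd : u.Pairwise Disjoint) (T : Finset ℕ) (x : ℕ)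
    (hx : Supp u x) (hx' : Supp u (x + 1)) :
    rel (AA u T) x = (if x ∈ Iset u then (if x ∈ T then 2 else 0) else rel u x) ∧
    rel (BB u T) x = (if x ∈ Iset u then (if x ∈ T then 1 else 2) else rel u x) := by
  induction u with
  | nil => simp [Supp] at hx
  | cons U L ih =>
    rw [List.pairwise_cons] at hd
    have hdis : ∀ y, y ∈ U → ¬ Supp L y := by
      rintro y hy ⟨s, h1, h2⟩
      exact Finset.disjoint_left.1 (hd.1 s h1) hy h2
    have hcons : ∀ y, Supp (U :: L) y → y ∈ U ∨ Supp L y := by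
      rintro y ⟨s, h1, h2⟩
      rcases List.mem_cons.1 h1 with rfl | h1
      · exact Or.inl h2
      · exact Or.inr ⟨s, h1, h2⟩
    have eA : AA (U :: L) T = colL U T ++ AA L T := rfl
    have eB : BB (U :: L) T = rowL U T ++ BB L T := rfl
    have eU : U :: L = [U] ++ L := rfl
    have hI : x ∈ Iset (U :: L) ↔ (x ∈ U ∧ x + 1 ∈ U) ∨ x ∈ Iset L := by
      rw [Iset, Finset.mem_union, Iblk, Finset.mem_filter]
    by_cases h1 : x ∈ U <;> by_cases h2 : x + 1 ∈ U
    · rw [if_pos (hI.2 (Or.inl ⟨h1, h2⟩)), if_pos (hI.2 (Or.inl ⟨h1, h2⟩)), eA, eB,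
        rel_append_both ((supp_colL U T x).2 h1) ((supp_colL U T _).2 h2),
        rel_append_both ((supp_rowL U T x).2 h1) ((supp_rowL U T _).2 h2),
        rel_colL h1 h2, rel_rowL h1 h2]
      exact ⟨rfl, rfl⟩
    · have hn : x ∉ Iset (U :: L) := by
        rw [hI]
        rintro (h | h)
        · exact h2 h.2
        · exact hdis x h1 (Iset_supp h).1
      rw [if_neg hn, if_neg hn, eA, eB, eU,
        rel_append_lr ((supp_colL U T x).2 h1) (mt (supp_colL U T _).1 h2),
        rel_append_lr ((supp_rowL U T x).2 h1) (mt (supp_rowL U T _).1 h2),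
        rel_append_lr ((supp_single U x).2 h1) (mt (supp_single U _).1 h2)]
      exact ⟨rfl, rfl⟩
    · have hn : x ∉ Iset (U :: L) := by
        rw [hI]
        rintro (h | h)
        · exact h1 h.1
        · exact hdis _ h2 (Iset_supp h).2
      rw [if_neg hn, if_neg hn, eA, eB, eU,
        rel_append_rl (mt (supp_colL U T x).1 h1) ((supp_colL U T _).2 h2),
        rel_append_rl (mt (supp_rowL U T x).1 h1) ((supp_rowL U T _).2 h2),
        rel_append_rl (mt (supp_single U x).1 h1) ((supp_single U _).2 h2)]
      exact ⟨rfl, rfl⟩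
    · have hn : x ∈ Iset (U :: L) ↔ x ∈ Iset L := by
        rw [hI]
        tauto
      rw [eA, eB, rel_append_neither (mt (supp_colL U T x).1 h1) (mt (supp_colL U T _).1 h2),
        rel_append_neither (mt (supp_rowL U T x).1 h1) (mt (supp_rowL U T _).1 h2)]
      have e3 : rel (U :: L) x = rel L x := by
        rw [eU, rel_append_neither (mt (supp_single U x).1 h1) (mt (supp_single U _).1 h2)]
      rw [e3]
      simp only [hn]
      exact ih hd.2 ((hcons x hx).resolve_left h1) ((hcons _ hx').resolve_left h2)

lemma AABB_good (u : List (Finset ℕ)) (h : ∀ s ∈ u, IsInterval s) (T : Finset ℕ) :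
    Good (AA u T, BB u T) := by
  constructor
  · intro s hs
    simp only [AA, List.mem_flatMap] at hs
    obtain ⟨U, hU, hs⟩ := hs
    exact colL_good (h U hU) T s hs
  · intro s hs
    simp only [BB, List.mem_flatMap] at hs
    obtain ⟨U, hU, hs⟩ := hs
    exact rowL_good (h U hU) T s hs

lemma sum_powerset_union {V : Type*} [AddCommMonoid V] {A B : Finset ℕ} (h : Disjoint A B)
    (g : Finset ℕ → V) :
    ∑ T ∈ (A ∪ B).powerset, g T = ∑ T₁ ∈ A.powerset, ∑ T₂ ∈ B.powerset, g (T₁ ∪ T₂) := by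
  rw [← Finset.sum_product']
  symm
  apply Finset.sum_nbij' (fun t => t.1 ∪ t.2) (fun T => (T ∩ A, T ∩ B))
  · intro t ht
    simp only [Finset.mem_product, Finset.mem_powerset] at *
    exact Finset.union_subset_union ht.1 ht.2
  · intro T hT
    simp only [Finset.mem_product, Finset.mem_powerset] at *
    exact ⟨Finset.inter_subset_right, Finset.inter_subset_right⟩
  · intro t ht
    simp only [Finset.mem_product, Finset.mem_powerset] at *
    rw [Finset.disjoint_left] at h
    refine Prod.ext ?_ ?_
    · ext x
      have := @ht.1 x
      have := @ht.2 x
      have := @h x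
      simp only [Finset.mem_inter, Finset.mem_union]
      tauto
    · ext x
      have := @ht.1 x
      have := @ht.2 x
      have := @h x
      simp only [Finset.mem_inter, Finset.mem_union]
      tauto
  · intro T hT
    simp only [Finset.mem_powerset] at *
    rw [← Finset.inter_union_distrib_left]
    exact Finset.inter_eq_left.2 hT
  · intro t ht
    rfl

lemma delta_fun {V : Type*} [AddCommGroup V] [Module (ZMod 2) V] (u : List (Finset ℕ))
    (hne : ∀ s ∈ u, s ≠ ∅) (hd : u.Pairwise Disjoint)
    (φ : List (Finset ℕ) × List (Finset ℕ) → V) (hφ : ∀ ab, ¬ Good ab → φ ab = 0) :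
    ((deltaFun (ZMod 2) u).sum fun ab k => k • φ ab) =
    if ∀ s ∈ u, IsInterval s then ∑ T ∈ (Iset u).powerset, φ (AA u T, BB u T) else 0 := by
  induction u generalizing φ with
  | nil =>
    rw [deltaFun, Finsupp.sum_single_index (by simp)]
    simp [Iset, AA, BB]
  | cons U L ih =>
    rw [List.pairwise_cons] at hd
    have ih' := ih (fun s hs => hne s (List.mem_cons_of_mem _ hs)) hd.2
    have hlin : ∀ t : (List (Finset ℕ) × List (Finset ℕ)) →₀ ZMod 2,
        (t.sum fun ab k => k • φ ab) = Finsupp.linearCombination (ZMod 2) φ t := fun t => rfl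
    have hU : U.card ≠ 0 := by
      rw [Finset.card_ne_zero]
      exact Finset.nonempty_iff_ne_empty.2 (hne U List.mem_cons_self)
    have hone : ∀ k : ℕ, (((-1 : ℤ) ^ k : ℤ) : ZMod 2) = 1 := by
      intro k
      simp
    rw [hlin, deltaFun, map_finsuppSum]
    simp only [map_finsuppSum, map_smul, Finsupp.linearCombination_single, one_smul, hone,
      mul_one, mul_smul]
    simp only [← Finsupp.smul_sum]
    have step : ∀ ab : List (Finset ℕ) × List (Finset ℕ),
        ((deltaFun (ZMod 2) L).sum fun ab' k =>
          k • φ (ab.1.map (relabel U) ++ ab'.1, ab.2.map (relabel U) ++ ab'.2)) =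
        (fun cd : List (Finset ℕ) × List (Finset ℕ) =>
          if ∀ s ∈ L, IsInterval s then ∑ T ∈ (Iset L).powerset,
            φ (cd.1 ++ AA L T, cd.2 ++ BB L T) else 0)
          (ab.1.map (relabel U), ab.2.map (relabel U)) := by
      intro ab
      exact ih' (fun ab' => φ (ab.1.map (relabel U) ++ ab'.1, ab.2.map (relabel U) ++ ab'.2))
        (by
          intro ab' hb
          apply hφ
          intro hg
          exact hb ⟨fun s hs => hg.1 s (List.mem_append_right _ hs),
            fun s hs => hg.2 s (List.mem_append_right _ hs)⟩)
    simp only [step]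
    rw [delta_top U hU (fun cd : List (Finset ℕ) × List (Finset ℕ) =>
          if ∀ s ∈ L, IsInterval s then ∑ T ∈ (Iset L).powerset,
            φ (cd.1 ++ AA L T, cd.2 ++ BB L T) else 0)
      (by
        intro ab hb
        split_ifs
        · apply Finset.sum_eq_zero
          intro T _
          apply hφ
          intro hg
          exact hb ⟨fun s hs => hg.1 s (List.mem_append_left _ hs),
            fun s hs => hg.2 s (List.mem_append_left _ hs)⟩
        · rfl)]
    by_cases h1 : IsInterval U
    · by_cases h2 : ∀ s ∈ L, IsInterval s
      · have hdis : ∀ y, y ∈ U → ¬ Supp L y := by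
          rintro y hy ⟨s, h1, h2⟩
          exact Finset.disjoint_left.1 (hd.1 s h1) hy h2
        rw [if_pos h1, if_pos (by simpa using ⟨h1, h2⟩), Iset, sum_powerset_union]
        · apply Finset.sum_congr rfl
          intro T₁ hT₁
          rw [if_pos h2]
          apply Finset.sum_congr rfl
          intro T₂ hT₂
          rw [Finset.mem_powerset] at hT₁ hT₂
          have e1 := LL_congr (U := U) (T := T₁ ∪ T₂) (T' := T₁) (by
            intro x hx
            rw [Finset.mem_union]
            constructor
            · rintro (h | h)
              · exact h
              · exact absurd (Iset_supp (hT₂ h)).1 (hdis x hx)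
            · exact Or.inl)
          have e2 := AABB_congr (u := L) (T := T₁ ∪ T₂) (T' := T₂) (by
            intro W hW x hx
            rw [Finset.mem_union]
            constructor
            · rintro (h | h)
              · exact absurd ⟨W, hW, hx⟩ (hdis x (Finset.mem_filter.1 (hT₁ h)).1)
              · exact h
            · exact Or.inr)
          rw [← e1.1, ← e1.2, ← e2.1, ← e2.2]
          rfl
        · rw [Finset.disjoint_left]
          intro x hx hx'
          exact hdis x (Finset.mem_filter.1 hx).1 (Iset_supp hx').1
      · rw [if_neg (show ¬ ∀ s ∈ U :: L, IsInterval s from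
          fun h => h2 fun s hs => h s (List.mem_cons_of_mem _ hs))]
        simp only [if_neg h2, Finset.sum_const_zero, ite_self]
    · rw [if_neg h1, if_neg (show ¬ ∀ s ∈ U :: L, IsInterval s from
          fun h => h1 (h U List.mem_cons_self))]

lemma mem_blockIdx {u : List (Finset ℕ)} {x : ℕ} (h : Supp u x) :
    x ∈ u.getD (blockIdx u x) ∅ := by
  have hlt := blockIdx_lt h
  rw [List.getD_eq_getElem _ _ hlt]
  have := List.findIdx_getElem (p := fun s : Finset ℕ => decide (x ∈ s)) (xs := u) (w := hlt)
  exact of_decide_eq_true this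

lemma mem_getD_iff {u : List (Finset ℕ)} (hd : u.Pairwise Disjoint) {x k : ℕ} (h : Supp u x)
    (hk : k < u.length) : x ∈ u.getD k ∅ ↔ k = blockIdx u x := by
  constructor
  · intro hx
    rw [List.getD_eq_getElem _ _ hk] at hx
    symm
    apply blockIdx_eq hk hx
    intro j hj hxj
    exact Finset.disjoint_left.1 (List.pairwise_iff_getElem.1 hd j k (hj.trans hk) hk hj) hxj hx
  · rintro rfl
    exact mem_blockIdx h

lemma rel_eq_two {u : List (Finset ℕ)} {x : ℕ} :
    rel u x = 2 ↔ blockIdx u x = blockIdx u (x + 1) := by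
  unfold rel
  split_ifs with h1 h2
  · simp [h1]
  · simp [h1]
  · simp [h1]

lemma mem_Iset {u : List (Finset ℕ)} {x : ℕ} : x ∈ Iset u ↔ ∃ s ∈ u, x ∈ s ∧ x + 1 ∈ s := by
  induction u with
  | nil => simp [Iset]
  | cons U L ih =>
    rw [Iset, Finset.mem_union, ih, Iblk, Finset.mem_filter]
    simp

lemma Iset_iff {u : List (Finset ℕ)} (hd : u.Pairwise Disjoint) {x : ℕ} (h : Supp u x)
    (h' : Supp u (x + 1)) : x ∈ Iset u ↔ rel u x = 2 := by
  rw [rel_eq_two, mem_Iset]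
  constructor
  · rintro ⟨s, hs, h1, h2⟩
    obtain ⟨k, hk, rfl⟩ := List.mem_iff_getElem.1 hs
    rw [← List.getD_eq_getElem _ ∅ hk] at h1 h2
    rw [← (mem_getD_iff hd h hk).1 h1, ← (mem_getD_iff hd h' hk).1 h2]
  · intro he
    have hlt := blockIdx_lt h
    refine ⟨u[blockIdx u x], List.getElem_mem hlt, ?_, ?_⟩
    · rw [← List.getD_eq_getElem _ ∅ hlt]
      exact mem_blockIdx h
    · rw [← List.getD_eq_getElem _ ∅ hlt, he]
      exact mem_blockIdx h'

lemma supp_foldr (u : List (Finset ℕ)) (x : ℕ) : x ∈ u.foldr (· ∪ ·) ∅ ↔ Supp u x := by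
  induction u with
  | nil => simp [Supp]
  | cons U L ih =>
    rw [List.foldr_cons, Finset.mem_union, ih]
    simp [Supp]

lemma supp_part {n : ℕ} {u : List (Finset ℕ)} (hu : IsOrderedPartition (Finset.Icc 1 (n+1)) u)
    (x : ℕ) : Supp u x ↔ 1 ≤ x ∧ x ≤ n + 1 := by
  rw [← supp_foldr, hu.2.2, Finset.mem_Icc]

lemma diag_half (n : ℕ) (u : List (Finset ℕ))
    (hu : IsOrderedPartition (Finset.Icc 1 (n+1)) u) :
    rhoTensor n (deltaFun (ZMod 2) u) = cubeDiagMap n (rhoBasis n u) := by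
  have hsu := supp_part hu
  unfold rhoTensor
  rw [delta_fun u hu.1 hu.2.1]
  · unfold cubeDiagMap
    by_cases h : ∀ s ∈ u, IsInterval s
    · have hg := AABB_good u h
      rw [if_pos h]
      simp only [rhoBasis]
      rw [if_pos h, Finsupp.sum_single_index (by simp), one_smul, cubeDiag]
      symm
      have hI : ∀ i : Fin n, (((i : ℕ) + 1 ∈ Iset u) ↔ rhoCode n u i = 2) := by
        intro i
        have := i.2
        exact Iset_iff hu.2.1 ((hsu _).2 (by omega)) ((hsu _).2 (by omega))
      have hinj : Function.Injective (fun i : Fin n => (i : ℕ) + 1) := by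
        intro i j hij
        apply Fin.ext
        simpa using hij
      apply Finset.sum_bij (fun S _ => S.image (fun i : Fin n => (i : ℕ) + 1))
      · intro S hS
        rw [Finset.mem_powerset] at *
        intro x hx
        rw [Finset.mem_image] at hx
        obtain ⟨i, hi, rfl⟩ := hx
        exact (hI i).2 (Finset.mem_filter.1 (hS hi)).2
      · intro S _ S' _ he
        exact Finset.image_injective hinj he
      · intro T hT
        rw [Finset.mem_powerset] at hT
        refine ⟨Finset.univ.filter (fun i : Fin n => (i : ℕ) + 1 ∈ T), ?_, ?_⟩
        · rw [Finset.mem_powerset]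
          intro i hi
          rw [Finset.mem_filter] at *
          exact ⟨hi.1, (hI i).1 (hT hi.2)⟩
        · ext x
          rw [Finset.mem_image]
          constructor
          · rintro ⟨i, hi, rfl⟩
            exact (Finset.mem_filter.1 hi).2
          · intro hx
            obtain ⟨h1, h2⟩ := Iset_supp (hT hx)
            rw [hsu] at h1 h2
            exact ⟨⟨x - 1, by omega⟩, by simpa [Nat.sub_add_cancel h1.1] using hx,
              by simp; omega⟩
      · intro S hS
        have hmem : ∀ i : Fin n, ((i : ℕ) + 1 ∈ S.image (fun i : Fin n => (i : ℕ) + 1)) ↔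
            i ∈ S := by
          intro i
          exact hinj.mem_finset_image (s := S) (a := i)
        have hr := fun i : Fin n => rel_AA u hu.2.1 (S.image (fun i : Fin n => (i : ℕ) + 1))
          ((i : ℕ) + 1) ((hsu _).2 (by have := i.2; omega)) ((hsu _).2 (by have := i.2; omega))
        rw [if_pos (hg _).1, if_pos (hg _).2, Finsupp.sum_single_index (by simp),
          Finsupp.sum_single_index (by simp), one_mul, one_smul]
        congr 1
        refine Prod.ext ?_ ?_
        · funext i
          have := (hr i).1
          simp only [hI, hmem] at this
          change _ = rel _ _
          rw [this]
          rfl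
        · funext i
          have := (hr i).2
          simp only [hI, hmem] at this
          change _ = rel _ _
          rw [this]
          rfl
    · rw [if_neg h, rhoBasis, if_neg h]
      simp
  · intro ab hb
    by_cases h1 : ∀ s ∈ ab.1, IsInterval s
    · have h2 : ¬ ∀ s ∈ ab.2, IsInterval s := fun h2 => hb ⟨h1, h2⟩
      simp [rhoBasis, if_neg h2]
    · simp [rhoBasis, if_neg h1]

lemma rel_mid {a p b : List (Finset ℕ)} {x : ℕ} (h1 : ¬ Supp a x) (h2 : ¬ Supp a (x + 1))
    (h3 : Supp p x) (h4 : Supp p (x + 1)) : rel (a ++ (p ++ b)) x = rel p x := by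
  rw [rel_append_neither h1 h2, rel_append_both h3 h4]

lemma rel_mid_congr (a b : List (Finset ℕ)) {p q : List (Finset ℕ)} {x : ℕ}
    (hpq : ∀ y, Supp p y ↔ Supp q y) (hx : ¬ (Supp p x ∧ Supp p (x + 1))) :
    rel (a ++ (p ++ b)) x = rel (a ++ (q ++ b)) x := by
  by_cases h1 : Supp a x <;> by_cases h2 : Supp a (x + 1)
  · rw [rel_append_both h1 h2, rel_append_both h1 h2]
  · rw [rel_append_lr h1 h2, rel_append_lr h1 h2]
  · rw [rel_append_rl h1 h2, rel_append_rl h1 h2]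
  · rw [rel_append_neither h1 h2, rel_append_neither h1 h2]
    by_cases h3 : Supp p x <;> by_cases h4 : Supp p (x + 1)
    · exact absurd ⟨h3, h4⟩ hx
    · rw [rel_append_lr h3 h4, rel_append_lr ((hpq _).1 h3) (mt (hpq _).2 h4)]
    · rw [rel_append_rl h3 h4, rel_append_rl (mt (hpq _).2 h3) ((hpq _).1 h4)]
    · rw [rel_append_neither h3 h4, rel_append_neither (mt (hpq _).2 h3) (mt (hpq _).2 h4)]

lemma rel_single {U : Finset ℕ} {x : ℕ} (h : x ∈ U) (h' : x + 1 ∈ U) : rel [U] x = 2 := by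
  rw [rel_eq_two]
  simp [blockIdx, List.findIdx_cons, h, h']

lemma supp_pair {U M : Finset ℕ} (hM : M ⊆ U) (y : ℕ) : Supp [M, U \ M] y ↔ y ∈ U := by
  have := @hM y
  simp only [Supp, List.mem_cons, List.not_mem_nil, or_false, exists_eq_or_imp, exists_eq_left,
    Finset.mem_sdiff]
  tauto

lemma rel_pair (M N : Finset ℕ) (x : ℕ) (h : x ∈ M ∨ x ∈ N)
    (h' : x + 1 ∈ M ∨ x + 1 ∈ N) :
    rel [M, N] x = if x ∈ M then (if x + 1 ∈ M then 2 else 0)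
      else (if x + 1 ∈ M then 1 else 2) := by
  have e1 : blockIdx [M, N] x = if x ∈ M then 0 else 1 := by
    by_cases h1 : x ∈ M
    · simp [blockIdx, List.findIdx_cons, h1]
    · simp [blockIdx, List.findIdx_cons, h1, h.resolve_left h1]
  have e2 : blockIdx [M, N] (x + 1) = if x + 1 ∈ M then 0 else 1 := by
    by_cases h1 : x + 1 ∈ M
    · simp [blockIdx, List.findIdx_cons, h1]
    · simp [blockIdx, List.findIdx_cons, h1, h'.resolve_left h1]
  unfold rel
  rw [e1, e2]
  by_cases h1 : x ∈ M <;> by_cases h2 : x + 1 ∈ M <;> simp [h1, h2]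

lemma union_interval {M N : Finset ℕ} (hM : IsInterval M) (hN : IsInterval N)
    (hd : Disjoint M N) {x : ℕ} (h : x ∈ M) (h' : x + 1 ∈ N) : IsInterval (M ∪ N) := by
  rw [Finset.disjoint_left] at hd
  intro a ha b hb y hay hyb
  rw [Finset.mem_union] at *
  have ha' : ¬ (a ∈ N ∧ a ≤ x) := fun hc => hd h (hN a hc.1 _ h' x hc.2 (by omega))
  have hb' : ¬ (b ∈ M ∧ x + 1 ≤ b) := fun hc => hd (hM x h b hc.1 (x + 1) (by omega) hc.2) h'
  rcases le_or_gt y x with hy | hy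
  · left
    have : a ∈ M := ha.resolve_right (fun hc => ha' ⟨hc, by omega⟩)
    exact hM a this x h y hay hy
  · right
    have : b ∈ N := hb.resolve_left (fun hc => hb' ⟨hc, by omega⟩)
    exact hN _ h' b this y (by omega) hyb

lemma sum_half {V : Type*} [AddCommMonoid V] (U : Finset ℕ) {m : ℕ} (hm : m ∈ U)
    (H : Finset ℕ → V) :
    ∑ M ∈ U.powerset, H M =
      ∑ M ∈ U.powerset.filter (fun M => m ∈ M), (H M + H (U \ M)) := by
  rw [← Finset.sum_filter_add_sum_filter_not U.powerset (fun M => m ∈ M), Finset.sum_add_distrib]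
  congr 1
  apply Finset.sum_nbij' (fun M => U \ M) (fun M => U \ M)
  · intro M hM
    simp only [Finset.mem_filter, Finset.mem_powerset, Finset.mem_sdiff] at *
    exact ⟨Finset.sdiff_subset, hm, hM.2⟩
  · intro M hM
    simp only [Finset.mem_filter, Finset.mem_powerset, Finset.mem_sdiff] at *
    exact ⟨Finset.sdiff_subset, fun h => h.2 hM.2⟩
  · intro M hM
    simp only [Finset.mem_filter, Finset.mem_powerset] at hM
    exact Finset.sdiff_sdiff_eq_self hM.1
  · intro M hM
    simp only [Finset.mem_filter, Finset.mem_powerset] at hM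
    exact Finset.sdiff_sdiff_eq_self hM.1
  · intro M hM
    simp only [Finset.mem_filter, Finset.mem_powerset] at hM
    rw [Finset.sdiff_sdiff_eq_self hM.1]

lemma code_split {n : ℕ} {a b : List (Finset ℕ)} {U M : Finset ℕ} (hM : M ⊆ U)
    (ha : ∀ y ∈ U, ¬ Supp a y) (i : Fin n) :
    rhoCode n (a ++ M :: (U \ M) :: b) i =
      if (i : ℕ) + 1 ∈ U ∧ (i : ℕ) + 2 ∈ U then
        (if (i : ℕ) + 1 ∈ M then (if (i : ℕ) + 2 ∈ M then 2 else 0)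
          else (if (i : ℕ) + 2 ∈ M then 1 else 2))
      else rhoCode n (a ++ U :: b) i := by
  have e1 : a ++ M :: (U \ M) :: b = a ++ ([M, U \ M] ++ b) := rfl
  have e2 : a ++ U :: b = a ++ ([U] ++ b) := rfl
  rw [rhoCode_eq, rhoCode_eq, e1, e2]
  split_ifs with h h1 h2 h2
  all_goals first
    | (rw [rel_mid (ha _ h.1) (ha _ h.2) ((supp_pair hM _).2 h.1) ((supp_pair hM _).2 h.2),
        rel_pair _ _ _ (by simp [h.1, em]) (by simp [h.2, em])]
       simp [h1, h2])
    | (apply rel_mid_congr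
       · intro y
         rw [supp_pair hM, supp_single]
       · rw [supp_pair hM, supp_pair hM]
         exact h)

lemma split_sum (n : ℕ) (a b : List (Finset ℕ)) (U : Finset ℕ) (hU : U ≠ ∅)
    (hUn : ∀ y ∈ U, 1 ≤ y ∧ y ≤ n + 1) (ha : ∀ y ∈ U, ¬ Supp a y) :
    (∑ M ∈ U.powerset, if M ≠ ∅ ∧ M ≠ U then rhoBasis n (a ++ M :: (U \ M) :: b) else 0) =
    if ∀ s ∈ a ++ U :: b, IsInterval s then
      ∑ i : Fin n, if (i : ℕ) + 1 ∈ U ∧ (i : ℕ) + 2 ∈ U then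
        Finsupp.single (Function.update (rhoCode n (a ++ U :: b)) i 0) (1 : ZMod 2) +
        Finsupp.single (Function.update (rhoCode n (a ++ U :: b)) i 1) 1 else 0
    else 0 := by
  have hall : ∀ M, (∀ s ∈ a ++ M :: (U \ M) :: b, IsInterval s) ↔
      (∀ s ∈ a ++ b, IsInterval s) ∧ IsInterval M ∧ IsInterval (U \ M) := by
    intro M
    simp only [List.mem_append, List.mem_cons]
    constructor
    · intro h
      exact ⟨fun s hs => h s (by tauto), h M (by tauto), h _ (by tauto)⟩
    · rintro ⟨h1, h2, h3⟩ s (hs | rfl | rfl | hs)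
      · exact h1 s (Or.inl hs)
      · exact h2
      · exact h3
      · exact h1 s (Or.inr hs)
  have hall' : (∀ s ∈ a ++ U :: b, IsInterval s) ↔
      (∀ s ∈ a ++ b, IsInterval s) ∧ IsInterval U := by
    simp only [List.mem_append, List.mem_cons]
    constructor
    · intro h
      exact ⟨fun s hs => h s (by tauto), h U (by tauto)⟩
    · rintro ⟨h1, h2⟩ s (hs | rfl | hs)
      · exact h1 s (Or.inl hs)
      · exact h2
      · exact h1 s (Or.inr hs)
  simp only [rhoBasis, hall, hall']
  by_cases hab : ∀ s ∈ a ++ b, IsInterval s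
  swap
  · simp only [hab, false_and, if_false, ite_self, Finset.sum_const_zero]
  have hne : U.Nonempty := Finset.nonempty_iff_ne_empty.2 hU
  have hm := U.min'_mem hne
  rw [sum_half U hm]
  by_cases hI : IsInterval U
  · rw [if_pos ⟨hab, hI⟩, ← Finset.sum_filter]
    symm
    have hsd : ∀ i : Fin n, U \ (U.filter (fun y => y ≤ (i : ℕ) + 1)) =
        U.filter (fun y => (i : ℕ) + 2 ≤ y) := by
      intro i
      ext y
      simp only [Finset.mem_sdiff, Finset.mem_filter]
      constructor
      · rintro ⟨h1, h2⟩
        refine ⟨h1, ?_⟩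
        by_contra h3
        exact h2 ⟨h1, by omega⟩
      · rintro ⟨h1, h2⟩
        exact ⟨h1, fun h3 => by omega⟩
    apply Finset.sum_of_injOn (fun i : Fin n => U.filter (fun y => y ≤ (i : ℕ) + 1))
    · intro i hi j hj hij
      simp only [Finset.coe_filter, Finset.mem_univ, true_and, Set.mem_ofPred_eq] at hi hj
      dsimp only at hij
      have h1 : (i : ℕ) + 1 ∈ U.filter (fun y => y ≤ (j : ℕ) + 1) := by
        rw [← hij]
        exact Finset.mem_filter.2 ⟨hi.1, le_rfl⟩
      have h2 : (j : ℕ) + 1 ∈ U.filter (fun y => y ≤ (i : ℕ) + 1) := by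
        rw [hij]
        exact Finset.mem_filter.2 ⟨hj.1, le_rfl⟩
      have h3 := (Finset.mem_filter.1 h1).2
      have h4 := (Finset.mem_filter.1 h2).2
      apply Fin.ext
      omega
    · intro i hi
      simp only [Finset.coe_filter, Finset.mem_univ, true_and, Set.mem_ofPred_eq] at hi
      simp only [Finset.coe_filter, Finset.mem_powerset, Set.mem_ofPred_eq, Finset.mem_filter]
      exact ⟨Finset.filter_subset _ _, hm, U.min'_le _ hi.1⟩
    · intro M hM hMi
      rw [Finset.mem_filter, Finset.mem_powerset] at hM
      obtain ⟨hMU, hmM⟩ := hM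
      have key : IsInterval M → IsInterval (U \ M) → M = U := by
        intro h1 h2
        by_contra hMU'
        apply hMi
        have hMne : M.Nonempty := ⟨_, hmM⟩
        have hx := M.max'_mem hMne
        have hNne : ∃ z ∈ U, z ∉ M := by
          by_contra hc
          push Not at hc
          exact hMU' (Finset.Subset.antisymm hMU hc)
        obtain ⟨z, hzU, hzM⟩ := hNne
        have hzx : M.max' hMne < z := by
          by_contra hc
          exact hzM (h1 _ hmM _ hx z (U.min'_le _ hzU) (by omega))
        have hx1 : M.max' hMne + 1 ∈ U := hI _ (hMU hx) z hzU _ (by omega) (by omega)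
        have b1 := hUn _ (hMU hx)
        have b2 := hUn _ hx1
        refine ⟨⟨M.max' hMne - 1, by omega⟩, ?_, ?_⟩
        · simp only [Finset.coe_filter, Finset.mem_univ, true_and, Set.mem_ofPred_eq]
          refine ⟨?_, ?_⟩
          · rw [Nat.sub_add_cancel b1.1]
            exact hMU hx
          · rw [show M.max' hMne - 1 + 2 = M.max' hMne + 1 by omega]
            exact hx1
        · ext y
          simp only [Finset.mem_filter]
          rw [Nat.sub_add_cancel b1.1]
          constructor
          · rintro ⟨h3, h4⟩
            exact h1 _ hmM _ hx y (U.min'_le _ h3) h4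
          · intro h3
            exact ⟨hMU h3, M.le_max' _ h3⟩
      rw [Finset.sdiff_sdiff_eq_self hMU]
      have hz : ∀ c : (Fin n → Fin 3) →₀ ZMod 2, ∀ (P Q : Prop) [Decidable P] [Decidable Q], (P → Q → False) →
          (if P then (if Q then c else 0) else 0) = 0 := by
        intro c P Q _ _ h
        by_cases hP : P
        · rw [if_pos hP, if_neg (h hP)]
        · rw [if_neg hP]
      rw [hz _ _ _ (fun hP hQ => hP.2 (key hQ.2.1 hQ.2.2)),
        hz _ _ _ (fun hP hQ => hP.1 (by rw [key hQ.2.2 hQ.2.1, Finset.sdiff_self])), add_zero]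
    · intro i hi
      rw [Finset.mem_filter] at hi
      obtain ⟨-, hi1, hi2⟩ := hi
      have hMU : U.filter (fun y => y ≤ (i : ℕ) + 1) ⊆ U := Finset.filter_subset _ _
      have hIM : IsInterval (U.filter (fun y => y ≤ (i : ℕ) + 1)) := by
        intro p hp q hq y hpy hyq
        rw [Finset.mem_filter] at *
        exact ⟨hI p hp.1 q hq.1 y hpy hyq, by omega⟩
      have hIN : IsInterval (U.filter (fun y => (i : ℕ) + 2 ≤ y)) := by
        intro p hp q hq y hpy hyq
        rw [Finset.mem_filter] at *
        exact ⟨hI p hp.1 q hq.1 y hpy hyq, by omega⟩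
      have m1 : (i : ℕ) + 1 ∈ U.filter (fun y => y ≤ (i : ℕ) + 1) :=
        Finset.mem_filter.2 ⟨hi1, le_rfl⟩
      have m2 : (i : ℕ) + 2 ∈ U.filter (fun y => (i : ℕ) + 2 ≤ y) :=
        Finset.mem_filter.2 ⟨hi2, le_rfl⟩
      have m3 : (i : ℕ) + 2 ∉ U.filter (fun y => y ≤ (i : ℕ) + 1) := by
        simp
      have m4 : (i : ℕ) + 1 ∉ U.filter (fun y => (i : ℕ) + 2 ≤ y) := by
        simp
      have code2 : ∀ j : Fin n, (j : ℕ) + 1 ∈ U → (j : ℕ) + 2 ∈ U →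
          rhoCode n (a ++ U :: b) j = 2 := by
        intro j h1 h2
        rw [rhoCode_eq]
        rw [show a ++ U :: b = a ++ ([U] ++ b) from rfl,
          rel_mid (ha _ h1) (ha _ h2) ((supp_single _ _).2 h1) ((supp_single _ _).2 h2),
          rel_single h1 h2]
      rw [if_pos ⟨Finset.ne_empty_of_mem m1, fun h => m3 (by rw [h]; exact hi2)⟩,
        if_pos ⟨hab, hIM, by rw [hsd]; exact hIN⟩,
        if_pos ⟨by rw [hsd]; exact Finset.ne_empty_of_mem m2,
          by rw [hsd]; exact fun h => m4 (by rw [h]; exact hi1)⟩,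
        if_pos ⟨hab, by rw [hsd]; exact hIN, by rw [Finset.sdiff_sdiff_eq_self hMU]; exact hIM⟩]
      congr 2
      · funext j
        rw [code_split hMU ha]
        by_cases hj : j = i
        · subst hj
          rw [Function.update_self, if_pos ⟨hi1, hi2⟩, if_pos m1, if_neg m3]
        · rw [Function.update_of_ne hj]
          have hji : (j : ℕ) ≠ i := fun h => hj (Fin.ext h)
          split_ifs with h1 h2 h3 h3
          · exact code2 j h1.1 h1.2
          · exfalso
            rw [Finset.mem_filter] at h2 h3
            exact h3 ⟨h1.2, by omega⟩
          · exfalso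
            rw [Finset.mem_filter] at h2 h3
            exact h2 ⟨h1.1, by omega⟩
          · exact code2 j h1.1 h1.2
          · rfl
      · funext j
        rw [code_split Finset.sdiff_subset ha, hsd]
        by_cases hj : j = i
        · subst hj
          rw [Function.update_self, if_pos ⟨hi1, hi2⟩, if_neg m4, if_pos m2]
        · rw [Function.update_of_ne hj]
          have hji : (j : ℕ) ≠ i := fun h => hj (Fin.ext h)
          split_ifs with h1 h2 h3 h3
          · exact code2 j h1.1 h1.2
          · exfalso
            rw [Finset.mem_filter] at h2 h3
            exact h3 ⟨h1.2, by omega⟩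
          · exfalso
            rw [Finset.mem_filter] at h2 h3
            exact h2 ⟨h1.1, by omega⟩
          · exact code2 j h1.1 h1.2
          · rfl
  · rw [if_neg (fun h => hI h.2)]
    apply Finset.sum_eq_zero
    intro M hM
    rw [Finset.mem_filter, Finset.mem_powerset] at hM
    obtain ⟨hMU, hmM⟩ := hM
    rw [Finset.sdiff_sdiff_eq_self hMU]
    have hu : M ∪ (U \ M) = U := Finset.union_sdiff_of_subset hMU
    have hdis : Disjoint M (U \ M) := Finset.disjoint_sdiff
    by_cases hMM : IsInterval M ∧ IsInterval (U \ M)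
    · have hMUne : M ≠ U := by
        rintro rfl
        exact hI hMM.1
      have hsne : U \ M ≠ U := by
        intro h
        have h2 := h.ge (hMU hmM)
        exact (Finset.mem_sdiff.1 h2).2 hmM
      have hsne' : U \ M ≠ ∅ := by
        intro h
        rw [h, Finset.union_empty] at hu
        exact hMUne hu
      rw [if_pos ⟨Finset.ne_empty_of_mem hmM, hMUne⟩, if_pos ⟨hab, hMM⟩, if_pos ⟨hsne', hsne⟩,
        if_pos ⟨hab, hMM.2, hMM.1⟩]
      have hc : rhoCode n (a ++ (U \ M) :: M :: b) = rhoCode n (a ++ M :: (U \ M) :: b) := by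
        funext i
        rw [code_split hMU ha]
        have := code_split (n := n) (b := b) (Finset.sdiff_subset (s := U) (t := M)) ha i
        rw [Finset.sdiff_sdiff_eq_self hMU] at this
        rw [this]
        split_ifs with h1 h2 h3 h4 h5 h6 h7 h8 h9 h10 h11 h12 h13 h14 h15
        all_goals first
          | rfl
          | (exfalso
             simp only [Finset.mem_sdiff] at *
             tauto)
          | (exfalso
             apply hI
             rw [← hu]
             apply union_interval hMM.1 hMM.2 hdis (x := (i : ℕ) + 1)
             · assumption
             · assumption)
          | (exfalso
             apply hI
             rw [← hu, Finset.union_comm]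
             apply union_interval hMM.2 hMM.1 hdis.symm (x := (i : ℕ) + 1)
             · assumption
             · assumption)
      rw [hc, ← Finsupp.single_add, show (1 : ZMod 2) + 1 = 0 from rfl, Finsupp.single_zero]
    · have hMM2 : ¬ (IsInterval (U \ M) ∧ IsInterval M) := fun h => hMM ⟨h.2, h.1⟩
      simp only [hMM, hMM2, and_false, if_false, ite_self, add_zero]

lemma chain_half (n : ℕ) (u : List (Finset ℕ))
    (hu : IsOrderedPartition (Finset.Icc 1 (n+1)) u) :
    rhoMap n (bnd (ZMod 2) u) = cubeBndMap n (rhoBasis n u) := by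
  have hsu := supp_part hu
  have hd := hu.2.1
  have hlin : ∀ t : List (Finset ℕ) →₀ ZMod 2,
      rhoMap n t = Finsupp.linearCombination (ZMod 2) (rhoBasis n) t := fun t => rfl
  have hone : ∀ (j : ℕ) (L : List (Finset ℕ)), (((-1 : ℤ) ^ j * psgn L : ℤ) : ZMod 2) = 1 := by
    intro j L
    simp [psgn]
  rw [hlin, bnd]
  simp only [map_sum, apply_ite (Finsupp.linearCombination (ZMod 2) (rhoBasis n)), map_zero,
    map_smul, Finsupp.linearCombination_single, one_smul, shuffSgn, hone]
  have hk : ∀ k ∈ Finset.range u.length,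
      (∑ M ∈ (u.getD k ∅).powerset, if M ≠ ∅ ∧ M ≠ u.getD k ∅ then
        rhoBasis n (u.take k ++ M :: (u.getD k ∅ \ M) :: u.drop (k+1)) else 0) =
      if ∀ s ∈ u, IsInterval s then
        ∑ i : Fin n, if (i : ℕ) + 1 ∈ u.getD k ∅ ∧ (i : ℕ) + 2 ∈ u.getD k ∅ then
          Finsupp.single (Function.update (rhoCode n u) i 0) (1 : ZMod 2) +
          Finsupp.single (Function.update (rhoCode n u) i 1) 1 else 0
      else 0 := by
    intro k hk
    rw [Finset.mem_range] at hk
    have hg : u.getD k ∅ = u[k] := List.getD_eq_getElem _ _ hk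
    have hmem : u.getD k ∅ ∈ u := by
      rw [hg]
      exact List.getElem_mem hk
    have hsplit : u.take k ++ u.getD k ∅ :: u.drop (k+1) = u := by
      rw [hg, ← List.drop_eq_getElem_cons hk, List.take_append_drop]
    have := split_sum n (u.take k) (u.drop (k+1)) (u.getD k ∅) (hu.1 _ hmem)
      (fun y hy => (hsu y).1 ⟨_, hmem, hy⟩) (by
        rintro y hy ⟨s, hs, hys⟩
        rw [← hsplit, List.pairwise_append] at hd
        exact Finset.disjoint_left.1 (hd.2.2 s hs _ List.mem_cons_self) hys hy)
    rw [hsplit] at this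
    exact this
  rw [Finset.sum_congr rfl hk, cubeBndMap, rhoBasis]
  by_cases h : ∀ s ∈ u, IsInterval s
  · simp only [if_pos h]
    rw [Finsupp.sum_single_index (by simp), one_smul, cubeBnd, Finset.sum_comm]
    apply Finset.sum_congr rfl
    intro i _
    have h1 : Supp u ((i : ℕ) + 1) := (hsu _).2 (by have := i.2; omega)
    have h2 : Supp u ((i : ℕ) + 2) := (hsu _).2 (by have := i.2; omega)
    have hb := blockIdx_lt h1
    rw [Finset.sum_eq_single (blockIdx u ((i : ℕ) + 1))]
    · simp only [mem_getD_iff hd h1 hb, mem_getD_iff hd h2 hb, rhoCode_eq, rel_eq_two, true_and]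
    · intro k hk hne
      rw [Finset.mem_range] at hk
      rw [if_neg]
      intro hc
      exact hne ((mem_getD_iff hd h1 hk).1 hc.1)
    · intro hc
      exact absurd (Finset.mem_range.2 hb) hc
  · simp only [if_neg h]
    simp

/-- Over `ℤ/2`, the map induced by the canonical cellular projection
`P_{n+1} → I^n` is a chain map and commutes with the diagonals (it is a map of
differential graded coalgebras).  Both claims are stated on basis elements, i.e. on
every ordered partition of `{1,…,n+1}`. -/
theorem statement10 (n : ℕ) (hn : 1 ≤ n) (u : List (Finset ℕ))
    (hu : IsOrderedPartition (Finset.Icc 1 (n+1)) u) :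
    rhoMap n (bnd (ZMod 2) u) = cubeBndMap n (rhoBasis n u) ∧
    rhoTensor n (deltaFun (ZMod 2) u) = cubeDiagMap n (rhoBasis n u) := by
  exact ⟨chain_half n u hu, diag_half n u hu⟩

end SU
end Cube
end

section
/- An ordered matrix F is a configuration matrix if and only if its transpose F^T is a configuration matrix. -/
open scoped Classical

open scoped Classical

namespace SU


theorem entry_transpose {q p : ℕ} (M : Matrix (Fin q) (Fin p) ℕ) (i j : ℕ) :
    entry M.transpose i j = entry M j i := by
  unfold entry
  by_cases h : i < p ∧ j < q
  · rw [dif_pos h, dif_pos h.symm]; rfl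
  · rw [dif_neg h, dif_neg (fun h' => h h'.symm)]

theorem entrySet_transpose {q p : ℕ} (M : Matrix (Fin q) (Fin p) ℕ) :
    entrySet M.transpose = entrySet M := by
  ext x
  simp only [entrySet, entry_transpose, Finset.mem_erase, Finset.mem_image, Finset.mem_product,
    Finset.mem_range, Prod.exists]
  constructor
  · rintro ⟨h, a, b, ⟨ha, hb⟩, e⟩
    exact ⟨h, b, a, ⟨hb, ha⟩, e⟩
  · rintro ⟨h, a, b, ⟨ha, hb⟩, e⟩
    exact ⟨h, b, a, ⟨hb, ha⟩, e⟩

theorem IsOrderedMatrix.transpose {q p : ℕ} {M : Matrix (Fin q) (Fin p) ℕ}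
    (h : IsOrderedMatrix M) : IsOrderedMatrix M.transpose := by
  obtain ⟨hq, hp, hs, hr, hc, hinj, hrow, hcol⟩ := h
  refine ⟨hp, hq, ?_, ?_, ?_, ?_, ?_, ?_⟩
  · rw [entrySet_transpose, hs, Nat.add_comm]
  all_goals simp only [entry_transpose]
  · exact hc
  · exact hr
  · intro i₁ j₁ i₂ j₂ h₁ h₂ e
    exact (hinj _ _ _ _ h₁ h₂ e).symm
  · exact hcol
  · exact hrow

theorem IsStepMatrix.transpose {q p : ℕ} {M : Matrix (Fin q) (Fin p) ℕ}
    (h : IsStepMatrix M) : IsStepMatrix M.transpose := by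
  obtain ⟨ho, hr, hc, hd, hsub, hsup⟩ := h
  refine ⟨ho.transpose, ?_, ?_, ?_, ?_, ?_⟩
  all_goals simp only [entry_transpose]
  · exact hc
  · exact hr
  · exact hd
  · exact hsup
  · exact hsub

theorem DCond_transpose {q p : ℕ} (M : Matrix (Fin q) (Fin p) ℕ) (i j : ℕ) :
    DCond M.transpose j i ↔ RCond M i j := by
  simp only [DCond, RCond, entry_transpose]

theorem RCond_transpose {q p : ℕ} (M : Matrix (Fin q) (Fin p) ℕ) (i j : ℕ) :
    RCond M.transpose j i ↔ DCond M i j := by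
  simp only [DCond, RCond, entry_transpose]

theorem Dop_transpose {q p : ℕ} (M : Matrix (Fin q) (Fin p) ℕ) (i j : ℕ) :
    Dop M.transpose j i = (Rop M i j).transpose := by
  unfold Dop Rop
  by_cases h : RCond M i j
  · rw [if_pos h, if_pos ((DCond_transpose M i j).2 h)]
    ext a b
    simp only [Matrix.of_apply, Matrix.transpose_apply, entry_transpose,
      and_comm]
  · rw [if_neg h, if_neg (fun h' => h ((DCond_transpose M i j).1 h'))]

theorem Rop_transpose {q p : ℕ} (M : Matrix (Fin q) (Fin p) ℕ) (i j : ℕ) :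
    Rop M.transpose j i = (Dop M i j).transpose := by
  have h := Dop_transpose M.transpose j i
  rw [Matrix.transpose_transpose] at h
  rw [h, Matrix.transpose_transpose]

/-- the shift corresponding to `g` under transposition. -/
def Shift.swap : Shift → Shift
  | .D i j => .R j i
  | .R i j => .D j i

theorem Shift.swap_swap (g : Shift) : g.swap.swap = g := by
  cases g <;> rfl

theorem applyShift_swap {q p : ℕ} (g : Shift) (M : Matrix (Fin q) (Fin p) ℕ) :
    applyShift g.swap M.transpose = (applyShift g M).transpose := by
  cases g with
  | D i j => exact Rop_transpose M i j
  | R i j => exact Dop_transpose M i j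

theorem foldl_swap {q p : ℕ} (L : List Shift) (M : Matrix (Fin q) (Fin p) ℕ) :
    (L.map Shift.swap).foldl (fun M g => applyShift g M) M.transpose =
      (L.foldl (fun M g => applyShift g M) M).transpose := by
  induction L generalizing M with
  | nil => rfl
  | cons g L ih =>
    simp only [List.map_cons, List.foldl_cons, applyShift_swap, ih]

theorem sublist_swap {a b : Shift} {L : List Shift}
    (h : List.Sublist [a, b] (L.map Shift.swap)) : List.Sublist [a.swap, b.swap] L := by
  have h' := h.map Shift.swap
  have e : Shift.swap ∘ Shift.swap = id := funext Shift.swap_swap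
  simpa [List.map_map, e] using h'

theorem DerivedFrom.transpose {q p : ℕ} {E F : Matrix (Fin q) (Fin p) ℕ}
    (h : DerivedFrom E F) : DerivedFrom E.transpose F.transpose := by
  obtain ⟨L, hD, hR, rfl⟩ := h
  refine ⟨L.map Shift.swap, ?_, ?_, (foldl_swap L E).symm⟩
  · intro i₁ j₁ i₂ j₂ hs
    exact hR _ _ _ _ (sublist_swap hs)
  · intro i₁ j₁ i₂ j₂ hs
    exact hD _ _ _ _ (sublist_swap hs)

theorem IsConfigMatrix.transpose {q p : ℕ} {F : Matrix (Fin q) (Fin p) ℕ}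
    (h : IsConfigMatrix F) : IsConfigMatrix F.transpose := by
  obtain ⟨ho, E, hE, hF⟩ := h
  exact ⟨ho.transpose, E.transpose, hE.transpose, hF.transpose⟩

/-- An ordered matrix `F` is a configuration matrix if and only if
its transpose is a configuration matrix. -/
theorem statement11 {q p : ℕ} (F : Matrix (Fin q) (Fin p) ℕ) :
    IsConfigMatrix F ↔ IsConfigMatrix F.transpose := by
  refine ⟨fun h => h.transpose, fun h => ?_⟩
  have h' := h.transpose
  rwa [Matrix.transpose_transpose] at h'

end SU
end

section
/- For every n ≥ 2: (i) for every v ∈ {0,1}^{n−1}, the permutation γ_n(v) is a cubical vertex, and (ii) for every σ ∈ S_n, γ_n(ρ_n(σ)) = σ if and only if σ is a cubical vertex. Consequently γ_n and ρ_n restrict to mutually inverse bijections between {0,1}^{n−1} and the set of cubical vertices of S_n. -/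
namespace SU

/-- The word of `γ_n(v)`: start with `[1]`, and for `k ≥ 1` append the letter `k+1` on
the right if coordinate `k−1` (0-based: `v (k-1)`) is `false`(=0) and prepend it on the
left if it is `true`(=1). -/
def buildWord : ℕ → (ℕ → Bool) → List ℕ
  | 0, _ => []
  | 1, _ => [1]
  | (k+2), v => if v k then (k+2) :: buildWord (k+1) v else buildWord (k+1) v ++ [k+2]

/-- coordinate `k` (0-based) of `ρ_n`: `true`(=1) iff `k+2` occurs before `k+1`. -/
def rhoW (w : List ℕ) (k : ℕ) : Bool :=
  decide (w.idxOf (k+2) < w.idxOf (k+1))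

/-- a word is a cubical vertex if it is strictly decreasing up to some position and
strictly increasing thereafter. -/
def IsCubicalWord (w : List ℕ) : Prop :=
  ∃ k < w.length, List.Pairwise (· > ·) (w.take (k+1)) ∧ List.Pairwise (· < ·) (w.drop k)

theorem build_perm (n : ℕ) (v : ℕ → Bool) : (buildWord n v).Perm (List.range' 1 n) := by
  induction n with
  | zero => simp [buildWord]
  | succ n ih =>
    cases n with
    | zero => simp [buildWord]
    | succ k =>
      have h : List.range' 1 (k+2) = List.range' 1 (k+1) ++ [k+2] := by
        rw [List.range'_concat]; simp; omega
      rw [h]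
      have h2 : (List.range' 1 (k+1) ++ [k+2]).Perm ((k+2) :: List.range' 1 (k+1)) :=
        List.perm_append_singleton _ _
      rw [buildWord]
      split
      · exact (ih.cons _).trans h2.symm
      · exact ih.append_right _

theorem mem_of_perm {n : ℕ} {w : List ℕ} (h : w.Perm (List.range' 1 n)) (m : ℕ) :
    m ∈ w ↔ 1 ≤ m ∧ m ≤ n := by
  rw [h.mem_iff, List.mem_range'_1]; omega

theorem cub_cons {x : ℕ} {w : List ℕ} (hx : ∀ y ∈ w, y < x) (h : IsCubicalWord w) :
    IsCubicalWord (x :: w) := by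
  obtain ⟨k, hk, h1, h2⟩ := h
  refine ⟨k+1, by simpa using hk, ?_, by simpa using h2⟩
  rw [List.take_succ_cons, List.pairwise_cons]
  exact ⟨fun y hy => hx y (List.mem_of_mem_take hy), h1⟩

theorem cub_snoc {x : ℕ} {w : List ℕ} (hx : ∀ y ∈ w, y < x) (h : IsCubicalWord w) :
    IsCubicalWord (w ++ [x]) := by
  obtain ⟨k, hk, h1, h2⟩ := h
  refine ⟨k, by simp; omega, ?_, ?_⟩
  · rwa [List.take_append_of_le_length (by omega)]
  · rw [List.drop_append_of_le_length (by omega), List.pairwise_append]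
    refine ⟨h2, by simp, ?_⟩
    intro a ha b hb
    simp at hb
    subst hb
    exact hx a (List.mem_of_mem_drop ha)

theorem cub_of_cons {x : ℕ} {w : List ℕ} (hw : w ≠ []) (hx : ∀ y ∈ w, y < x)
    (h : IsCubicalWord (x :: w)) : IsCubicalWord w := by
  obtain ⟨k, hk, h1, h2⟩ := h
  cases k with
  | zero =>
    obtain ⟨y, hy⟩ := List.exists_mem_of_ne_nil w hw
    rw [List.drop_zero, List.pairwise_cons] at h2
    have := h2.1 y hy
    have := hx y hy
    omega
  | succ k =>
    rw [List.take_succ_cons, List.pairwise_cons] at h1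
    exact ⟨k, by simpa using hk, h1.2, by simpa using h2⟩

theorem cub_of_snoc {x : ℕ} {w : List ℕ} (hw : w ≠ []) (hx : ∀ y ∈ w, y < x)
    (h : IsCubicalWord (w ++ [x])) : IsCubicalWord w := by
  obtain ⟨k, hk, h1, h2⟩ := h
  simp only [List.length_append, List.length_singleton] at hk
  by_cases hkw : k < w.length
  · rw [List.take_append_of_le_length (by omega)] at h1
    rw [List.drop_append_of_le_length (by omega), List.pairwise_append] at h2
    exact ⟨k, hkw, h1, h2.1⟩
  · obtain ⟨y, hy⟩ := List.exists_mem_of_ne_nil w hw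
    rw [List.take_of_length_le (by simp; omega), List.pairwise_append] at h1
    have := h1.2.2 y hy x (by simp)
    have := hx y hy
    omega

theorem max_end {x : ℕ} {s t : List ℕ} (hs : ∀ y ∈ s, y < x) (ht : ∀ y ∈ t, y < x)
    (h : IsCubicalWord (s ++ x :: t)) : s = [] ∨ t = [] := by
  obtain ⟨k, hk, h1, h2⟩ := h
  by_contra hc
  push Not at hc
  obtain ⟨a, ha⟩ := List.exists_mem_of_ne_nil s hc.1
  obtain ⟨b, hb⟩ := List.exists_mem_of_ne_nil t hc.2
  by_cases hks : s.length ≤ k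
  · rw [List.take_append, List.take_of_length_le (by omega),
      show k + 1 - s.length = (k - s.length) + 1 by omega, List.take_succ_cons,
      List.pairwise_append] at h1
    have := h1.2.2 a ha x (by simp)
    have := hs a ha
    omega
  · rw [List.drop_append_of_le_length (by omega), List.pairwise_append, List.pairwise_cons] at h2
    have := h2.2.1.1 b hb
    have := ht b hb
    omega

theorem rho_cons {x k : ℕ} {w : List ℕ} (h : k + 2 < x) : rhoW (x :: w) k = rhoW w k := by
  simp only [rhoW]
  rw [List.idxOf_cons_ne _ (by omega), List.idxOf_cons_ne _ (by omega)]
  simp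

theorem rho_snoc {x k : ℕ} {w : List ℕ} (h1 : k + 1 ∈ w) (h2 : k + 2 ∈ w) :
    rhoW (w ++ [x]) k = rhoW w k := by
  simp only [rhoW]
  rw [List.idxOf_append_of_mem h1, List.idxOf_append_of_mem h2]

theorem rho_cons_self {k : ℕ} {w : List ℕ} : rhoW ((k+2) :: w) k = true := by
  simp only [rhoW]
  rw [List.idxOf_cons_self, List.idxOf_cons_ne _ (by omega)]
  simp

theorem rho_snoc_self {k : ℕ} {w : List ℕ} (h1 : k + 1 ∈ w) (h2 : k + 2 ∉ w) :
    rhoW (w ++ [k+2]) k = false := by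
  simp only [rhoW]
  rw [List.idxOf_append_of_mem h1, List.idxOf_append_of_notMem h2]
  have := List.idxOf_lt_length_of_mem h1
  simp; omega

theorem build_cub (n : ℕ) (v : ℕ → Bool) : IsCubicalWord (buildWord (n+1) v) := by
  induction n with
  | zero => exact ⟨0, by simp [buildWord], by simp [buildWord], by simp [buildWord]⟩
  | succ k ih =>
    have hx : ∀ y ∈ buildWord (k+1) v, y < k + 2 := by
      intro y hy
      have := (mem_of_perm (build_perm _ _) y).1 hy
      omega
    rw [buildWord]
    split
    · exact cub_cons hx ih
    · exact cub_snoc hx ih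

theorem rho_build (n : ℕ) (v : ℕ → Bool) : ∀ k < n, rhoW (buildWord (n+1) v) k = v k := by
  induction n with
  | zero => intro k hk; omega
  | succ n ih =>
    intro k hk
    have hm := mem_of_perm (build_perm (n+1) v)
    rw [buildWord]
    rcases Nat.lt_succ_iff_lt_or_eq.1 hk with h | rfl
    · split
      · rw [rho_cons (by omega), ih k h]
      · rw [rho_snoc ((hm _).2 (by omega)) ((hm _).2 (by omega)), ih k h]
    · split
      · rename_i h; rw [rho_cons_self, h]
      · rename_i h
        rw [rho_snoc_self ((hm _).2 (by omega)) (by rw [hm]; omega)]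
        simp [h]

theorem build_congr (n : ℕ) (u v : ℕ → Bool) (h : ∀ k < n, u k = v k) :
    buildWord (n+1) u = buildWord (n+1) v := by
  induction n with
  | zero => simp [buildWord]
  | succ n ih =>
    rw [buildWord, buildWord, h n (by omega), ih (fun k hk => h k (by omega))]

theorem build_rho (n : ℕ) : ∀ w : List ℕ, w.Perm (List.range' 1 (n+1)) → IsCubicalWord w →
    buildWord (n+1) (rhoW w) = w := by
  induction n with
  | zero =>
    intro w hw _
    simp at hw
    simp [buildWord, hw]
  | succ n ih =>
    intro w hw hc
    have hm := mem_of_perm hw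
    have hnd : w.Nodup := hw.nodup_iff.2 List.nodup_range'
    obtain ⟨s, t, rfl⟩ := List.append_of_mem ((hm (n+2)).2 (by omega))
    have hp : (s ++ t).Perm (List.range' 1 (n+1)) := by
      have h : List.range' 1 (n+2) = List.range' 1 (n+1) ++ [n+2] := by
        rw [List.range'_concat]; simp; omega
      rw [h] at hw
      exact (List.perm_cons (n+2)).1
        ((List.perm_middle.symm.trans hw).trans (List.perm_append_singleton _ _))
    have hm' := mem_of_perm hp
    have hlt : ∀ y ∈ s ++ t, y < n + 2 := fun y hy => by have := (hm' y).1 hy; omega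
    have hne : s ++ t ≠ [] := List.ne_nil_of_mem ((hm' 1).2 (by omega))
    rcases max_end (fun y hy => hlt y (by simp [hy])) (fun y hy => hlt y (by simp [hy])) hc
      with rfl | rfl
    · simp only [List.nil_append] at *
      rw [buildWord, rho_cons_self, if_pos rfl,
        build_congr n _ (rhoW t) (fun k hk => rho_cons (by omega)),
        ih t hp (cub_of_cons hne hlt hc)]
    · simp only [List.append_nil] at *
      rw [buildWord, rho_snoc_self ((hm' _).2 (by omega)) (by rw [hm']; omega), if_neg (by simp),
        build_congr n _ (rhoW s)
          (fun k hk => rho_snoc ((hm' _).2 (by omega)) ((hm' _).2 (by omega))),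
        ih s hp (cub_of_snoc hne hlt hc)]

theorem permWord_perm (n : ℕ) (σ : Equiv.Perm (Fin n)) :
    (permWord n σ).Perm (List.range' 1 n) := by
  have hnd : (permWord n σ).Nodup := by
    rw [permWord, List.nodup_ofFn]
    intro a b h
    simp only [Nat.add_right_cancel_iff] at h
    exact σ.injective (Fin.ext h)
  rw [List.perm_ext_iff_of_nodup hnd List.nodup_range']
  intro a
  rw [permWord, List.mem_ofFn, List.mem_range'_1]
  constructor
  · rintro ⟨k, rfl⟩
    have := (σ k).isLt
    omega
  · intro h
    refine ⟨σ.symm ⟨a - 1, by omega⟩, ?_⟩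
    simp
    omega

/-- For `n ≥ 2`:
(i) for every `v ∈ {0,1}^{n−1}`, `γ_n(v)` is a permutation of `{1,…,n}` and a cubical
vertex; (ii) for every `σ ∈ S_n`, `γ_n(ρ_n(σ)) = σ` iff `σ` is a cubical vertex;
and moreover `ρ_n(γ_n(v)) = v` (on the relevant coordinates `k < n−1`), so `γ_n` and
`ρ_n` restrict to mutually inverse bijections between `{0,1}^{n−1}` and the cubical
vertices. -/
theorem statement13 (n : ℕ) (hn : 2 ≤ n) :
    (∀ v : ℕ → Bool,
        (buildWord n v).Perm (List.range' 1 n) ∧ IsCubicalWord (buildWord n v)) ∧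
    (∀ σ : Equiv.Perm (Fin n),
        buildWord n (rhoW (permWord n σ)) = permWord n σ ↔
          IsCubicalWord (permWord n σ)) ∧
    (∀ v : ℕ → Bool, ∀ k, k < n - 1 → rhoW (buildWord n v) k = v k) := by
  obtain ⟨m, rfl⟩ : ∃ m, n = m + 1 := ⟨n - 1, by omega⟩
  refine ⟨fun v => ⟨build_perm _ v, build_cub m v⟩, fun σ => ⟨fun h => ?_, fun h => ?_⟩, ?_⟩
  · rw [← h]
    exact build_cub m _
  · exact build_rho m _ (permWord_perm _ σ) h
  · intro v k hk
    exact rho_build m v k (by omega)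

end SU
end

section
/- Let n ≥ 2, let A|B be a 2-block ordered partition of {1,…,n+1} with #A = p and #B = q, and let C|D be a 2-block ordered partition of {1,…,n}. Then there exists a partition of {1,…,n+1} into three nonempty sets arranged as X|Y|Z such that either (A = X, B = Y ∪ Z, and C|D = X□(Y|Z)) or (A = X ∪ Y, B = Z, and C|D = (X|Y)□Z), if and only if: C|D ∈ Q_{q,1}(n) ∪ Q_{1,p}(n) in case n+1 ∈ A, and C|D ∈ Q_{p,1}(n) ∪ Q_{1,q}(n) in case n+1 ∈ B. -/
namespace SU

/-- delete empty blocks. -/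
def remEmpty (L : List (Finset ℕ)) : List (Finset ℕ) :=
  L.filter (fun s => decide (s ≠ ∅))

/-- `I_S(x)`: the (1-based) position of `x` in the increasing enumeration of `S`. -/
def iord (S : Finset ℕ) (x : ℕ) : ℕ := (S.filter (· ≤ x)).card

/-- `I_S⁻¹(k)`: the `k`-th smallest element of `S` (1-based). -/
def iinv (S : Finset ℕ) (k : ℕ) : ℕ := (S.sort (· ≤ ·)).getD (k - 1) 0

/-- lower disjoint union `A ⊔̲ B` with respect to the ambient set `U`. -/
def lcup (U A B : Finset ℕ) : Finset ℕ :=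
  if A = ∅ ∨ B = ∅ then A ∪ B
  else if fmin B = fmin (U \ A) then
    B.image (fun b => iord (U \ A) b + A.card - 1) ∪ Finset.Icc 1 A.card
  else B.image (fun b => iord (U \ A) b + A.card - 1)

/-- upper disjoint union `A ⊔̄ B` with respect to the ambient set `U`. -/
def ucup (U A B : Finset ℕ) : Finset ℕ :=
  if A = ∅ ∨ B = ∅ then A ∪ B
  else if fmax A = fmax (U \ B) then
    A.image (iord (U \ B)) ∪ Finset.Icc (U.card - B.card) (U.card - 1)
  else A.image (iord (U \ B))

/-- `A □ (B_1|⋯|B_k) = (B_1|⋯|B_k) □ A`, with ambient set `U`. -/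
def box (U A : Finset ℕ) (Bs : List (Finset ℕ)) : List (Finset ℕ) :=
  if fmax A = fmax U then Bs.map (fun B => ucup U B A)
  else Bs.map (fun B => lcup U A B)

/-- 2-block ordered partitions of `{1,…,n}`. -/
def IsPart2 (n : ℕ) (C D : Finset ℕ) : Prop :=
  C ≠ ∅ ∧ D ≠ ∅ ∧ Disjoint C D ∧ C ∪ D = Finset.Icc 1 n

/-- `C|D ∈ Q_{r,1}(n)`. -/
def memQr1 (r n : ℕ) (C D : Finset ℕ) : Prop :=
  IsPart2 n C D ∧ (Finset.Icc 1 r ⊆ C ∨ Finset.Icc 1 r ⊆ D)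

/-- `C|D ∈ Q_{1,s}(n)`. -/
def memQ1s (s n : ℕ) (C D : Finset ℕ) : Prop :=
  IsPart2 n C D ∧ (Finset.Icc (n - s + 1) n ⊆ C ∨ Finset.Icc (n - s + 1) n ⊆ D)

end SU
namespace SU

lemma fmax_spec {s : Finset ℕ} (h : s ≠ ∅) : fmax s ∈ s ∧ ∀ x ∈ s, x ≤ fmax s := by
  have h' := Finset.nonempty_iff_ne_empty.2 h
  have : fmax s = s.max' h' := by
    unfold fmax
    rw [← Finset.coe_max' h']; rfl
  rw [this]
  exact ⟨s.max'_mem h', fun x hx => s.le_max' x hx⟩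

lemma fmin_spec {s : Finset ℕ} (h : s ≠ ∅) : fmin s ∈ s ∧ ∀ x ∈ s, fmin s ≤ x := by
  have h' := Finset.nonempty_iff_ne_empty.2 h
  have : fmin s = s.min' h' := by
    unfold fmin
    rw [← Finset.coe_min' h']; rfl
  rw [this]
  exact ⟨s.min'_mem h', fun x hx => s.min'_le x hx⟩

lemma fmax_eq_iff {s : Finset ℕ} (h : s ≠ ∅) (m : ℕ) :
    fmax s = m ↔ m ∈ s ∧ ∀ x ∈ s, x ≤ m := by
  have := fmax_spec h
  constructor
  · rintro rfl; exact this
  · intro hm; exact le_antisymm (hm.2 _ this.1) (this.2 _ hm.1)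

lemma iord_lt {T : Finset ℕ} {a b : ℕ} (hb : b ∈ T) (h : a < b) : iord T a < iord T b := by
  unfold iord
  apply Finset.card_lt_card
  rw [Finset.ssubset_iff_of_subset]
  · exact ⟨b, by simp [hb], by simp [h]⟩
  · intro x; simp only [Finset.mem_filter]; rintro ⟨h1, h2⟩; exact ⟨h1, by omega⟩

lemma iord_inj {T : Finset ℕ} {a b : ℕ} (ha : a ∈ T) (hb : b ∈ T) (h : iord T a = iord T b) :
    a = b := by
  rcases lt_trichotomy a b with h1 | h1 | h1
  · have := iord_lt hb h1; omega
  · exact h1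
  · have := iord_lt ha h1; omega

lemma iord_range {T : Finset ℕ} {a : ℕ} (ha : a ∈ T) : 1 ≤ iord T a ∧ iord T a ≤ T.card := by
  constructor
  · exact Finset.card_pos.2 ⟨a, by simp [ha]⟩
  · exact Finset.card_filter_le _ _

lemma iord_image (T : Finset ℕ) : T.image (iord T) = Finset.Icc 1 T.card := by
  apply Finset.eq_of_subset_of_card_le
  · intro x hx
    obtain ⟨a, ha, rfl⟩ := Finset.mem_image.1 hx
    exact Finset.mem_Icc.2 (iord_range ha)
  · rw [Finset.card_image_of_injOn (fun a ha b hb h => iord_inj ha hb h)]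
    simp

lemma iord_surj {T : Finset ℕ} {m : ℕ} (h1 : 1 ≤ m) (h2 : m ≤ T.card) :
    ∃ y ∈ T, iord T y = m := by
  have : m ∈ T.image (iord T) := by rw [iord_image]; exact Finset.mem_Icc.2 ⟨h1, h2⟩
  simpa using this

lemma fmax_eq {T Y : Finset ℕ} (hY : Y ≠ ∅) (hYT : Y ⊆ T) :
    fmax Y = fmax T ↔ ∃ y ∈ Y, iord T y = T.card := by
  have hT : T ≠ ∅ := by rintro rfl; exact hY (Finset.subset_empty.1 hYT)
  have h1 := fmax_spec hT
  have key : iord T (fmax T) = T.card := by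
    unfold iord; rw [Finset.filter_true_of_mem h1.2]
  rw [fmax_eq_iff hY]
  constructor
  · rintro ⟨h, _⟩; exact ⟨_, h, key⟩
  · rintro ⟨y, hy, e⟩
    have := iord_inj (hYT hy) h1.1 (e.trans key.symm)
    subst this
    exact ⟨hy, fun x hx => h1.2 x (hYT hx)⟩

lemma fmin_eq {T Y : Finset ℕ} (hY : Y ≠ ∅) (hYT : Y ⊆ T) :
    fmin Y = fmin T ↔ ∃ y ∈ Y, iord T y = 1 := by
  have hT : T ≠ ∅ := by rintro rfl; exact hY (Finset.subset_empty.1 hYT)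
  have h1 := fmin_spec hT
  have h2 := fmin_spec hY
  have key : iord T (fmin T) = 1 := by
    unfold iord
    rw [Finset.card_eq_one]
    refine ⟨fmin T, ?_⟩
    ext x
    simp only [Finset.mem_filter, Finset.mem_singleton]
    constructor
    · rintro ⟨h, h'⟩; exact le_antisymm h' (h1.2 x h)
    · rintro rfl; exact ⟨h1.1, le_rfl⟩
  constructor
  · intro h; exact ⟨_, h2.1, by rw [h, key]⟩
  · rintro ⟨y, hy, e⟩
    have := iord_inj (hYT hy) h1.1 (e.trans key.symm)
    subst this
    exact le_antisymm (h2.2 _ hy) (h1.2 _ (hYT h2.1))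

lemma mem_ucup {n : ℕ} {S T Y : Finset ℕ} (hS : S ≠ ∅) (hd : Disjoint S T)
    (hU : S ∪ T = Finset.Icc 1 (n+1)) (hY : Y ≠ ∅) (hYT : Y ⊆ T) (x : ℕ) :
    x ∈ ucup (Finset.Icc 1 (n+1)) Y S ↔
      (1 ≤ x ∧ x ≤ n) ∧ ∃ y ∈ Y, iord T y = min x T.card := by
  have hsd : Finset.Icc 1 (n+1) \ S = T := by
    rw [← hU, Finset.union_sdiff_cancel_left hd]
  have hc : S.card + T.card = n + 1 := by
    rw [← Finset.card_union_of_disjoint hd, hU]; simp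
  have hS0 : 0 < S.card := Finset.card_pos.2 (Finset.nonempty_iff_ne_empty.2 hS)
  have hr : ∀ y ∈ Y, 1 ≤ iord T y ∧ iord T y ≤ T.card := fun y hy => iord_range (hYT hy)
  have hT1 : 1 ≤ T.card := by
    obtain ⟨y, hy⟩ := Finset.nonempty_iff_ne_empty.2 hY
    have := hr y hy; omega
  have e1 : (Finset.Icc 1 (n+1)).card - S.card = T.card := by simp; omega
  have e2 : (Finset.Icc 1 (n+1)).card - 1 = n := by simp
  unfold ucup
  rw [if_neg (by simp [hS, hY]), hsd, e1, e2]
  split_ifs with h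
  all_goals rw [fmax_eq hY hYT] at h
  · simp only [Finset.mem_union, Finset.mem_image, Finset.mem_Icc]
    constructor
    · rintro (⟨y, hy, rfl⟩ | h')
      · have := hr y hy
        exact ⟨by omega, y, hy, by omega⟩
      · obtain ⟨y, hy, e⟩ := h
        exact ⟨by omega, y, hy, by omega⟩
    · rintro ⟨h', y, hy, e⟩
      by_cases hx : x ≤ T.card
      · left; exact ⟨y, hy, by omega⟩
      · right; omega
  · simp only [Finset.mem_image]
    constructor
    · rintro ⟨y, hy, rfl⟩
      have := hr y hy
      exact ⟨by omega, y, hy, by omega⟩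
    · rintro ⟨h', y, hy, e⟩
      by_cases hx : x ≤ T.card
      · exact ⟨y, hy, by omega⟩
      · exact absurd ⟨y, hy, by omega⟩ h

lemma mem_lcup {n : ℕ} {S T Y : Finset ℕ} (hS : S ≠ ∅) (hd : Disjoint S T)
    (hU : S ∪ T = Finset.Icc 1 (n+1)) (hY : Y ≠ ∅) (hYT : Y ⊆ T) (x : ℕ) :
    x ∈ lcup (Finset.Icc 1 (n+1)) S Y ↔
      (1 ≤ x ∧ x ≤ n) ∧ ∃ y ∈ Y, iord T y = x + 1 - min x S.card := by
  have hsd : Finset.Icc 1 (n+1) \ S = T := by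
    rw [← hU, Finset.union_sdiff_cancel_left hd]
  have hc : S.card + T.card = n + 1 := by
    rw [← Finset.card_union_of_disjoint hd, hU]; simp
  have hS0 : 0 < S.card := Finset.card_pos.2 (Finset.nonempty_iff_ne_empty.2 hS)
  have hr : ∀ y ∈ Y, 1 ≤ iord T y ∧ iord T y ≤ T.card := fun y hy => iord_range (hYT hy)
  have hT1 : 1 ≤ T.card := by
    obtain ⟨y, hy⟩ := Finset.nonempty_iff_ne_empty.2 hY
    have := hr y hy; omega
  unfold lcup
  rw [if_neg (by simp [hS, hY]), hsd]
  split_ifs with h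
  all_goals rw [fmin_eq hY hYT] at h
  · simp only [Finset.mem_union, Finset.mem_image, Finset.mem_Icc]
    constructor
    · rintro (⟨y, hy, rfl⟩ | h')
      · have := hr y hy
        exact ⟨by omega, y, hy, by omega⟩
      · obtain ⟨y, hy, e⟩ := h
        exact ⟨by omega, y, hy, by omega⟩
    · rintro ⟨h', y, hy, e⟩
      by_cases hx : S.card ≤ x
      · left; exact ⟨y, hy, by omega⟩
      · right; omega
  · simp only [Finset.mem_image]
    constructor
    · rintro ⟨y, hy, rfl⟩
      have := hr y hy
      exact ⟨by omega, y, hy, by omega⟩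
    · rintro ⟨h', y, hy, e⟩
      by_cases hx : S.card ≤ x
      · exact ⟨y, hy, by omega⟩
      · exact absurd ⟨y, hy, by omega⟩ h

/-- Abstract correspondence: pulling partitions of `T` back along a surjection. -/
lemma pull {n : ℕ} {T C D : Finset ℕ} (hCD : IsPart2 n C D) (m : ℕ → ℕ)
    (hm : ∀ x, 1 ≤ x → x ≤ n → 1 ≤ m x ∧ m x ≤ T.card)
    (hs : ∀ j, 1 ≤ j → j ≤ T.card → ∃ x, (1 ≤ x ∧ x ≤ n) ∧ m x = j)
    (F : Finset ℕ → Finset ℕ)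
    (hF : ∀ Y, Y ≠ ∅ → Y ⊆ T → ∀ x, x ∈ F Y ↔ (1 ≤ x ∧ x ≤ n) ∧ ∃ y ∈ Y, iord T y = m x) :
    (∃ Y Z, Y ≠ ∅ ∧ Z ≠ ∅ ∧ Disjoint Y Z ∧ T = Y ∪ Z ∧ [C, D] = [F Y, F Z]) ↔
      ∀ x x', (1 ≤ x ∧ x ≤ n) → (1 ≤ x' ∧ x' ≤ n) → m x = m x' → x ∈ C → x' ∈ C := by
  obtain ⟨hC, hD, hdis, hun⟩ := hCD
  have hmem : ∀ x, (x ∈ C ∨ x ∈ D) ↔ 1 ≤ x ∧ x ≤ n := by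
    intro x; rw [← Finset.mem_union, hun, Finset.mem_Icc]
  have hnot : ∀ x, x ∈ C → x ∉ D := fun x h h' => Finset.disjoint_left.1 hdis h h'
  constructor
  · rintro ⟨Y, Z, hY, hZ, hd, rfl, he⟩ x x' hx hx' e hxC
    simp only [List.cons.injEq, and_true] at he
    obtain ⟨rfl, rfl⟩ := he
    rw [hF Y hY Finset.subset_union_left] at hxC ⊢
    rw [← e]
    exact ⟨hx', hxC.2⟩
  · intro h
    have hw : ∀ y ∈ T, ∃ x, (1 ≤ x ∧ x ≤ n) ∧ m x = iord T y := fun y hy =>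
      hs _ (iord_range hy).1 (iord_range hy).2
    have hv : ∀ x, (1 ≤ x ∧ x ≤ n) → ∃ y ∈ T, iord T y = m x := fun x hx =>
      iord_surj (hm x hx.1 hx.2).1 (hm x hx.1 hx.2).2
    let P : Finset ℕ → Finset ℕ := fun E => T.filter (fun y => ∃ x ∈ E, m x = iord T y)
    have hP : ∀ E y, y ∈ P E ↔ y ∈ T ∧ ∃ x ∈ E, m x = iord T y := by
      intro E y; simp [P]
    have hPne : ∀ E, E ≠ ∅ → (∀ x ∈ E, 1 ≤ x ∧ x ≤ n) → P E ≠ ∅ := by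
      intro E hE hEn
      obtain ⟨x, hx⟩ := Finset.nonempty_iff_ne_empty.2 hE
      obtain ⟨y, hy, e⟩ := hv x (hEn x hx)
      exact Finset.nonempty_iff_ne_empty.1 ⟨y, (hP E y).2 ⟨hy, x, hx, e.symm⟩⟩
    have hCn : ∀ x ∈ C, 1 ≤ x ∧ x ≤ n := fun x hx => (hmem x).1 (Or.inl hx)
    have hDn : ∀ x ∈ D, 1 ≤ x ∧ x ≤ n := fun x hx => (hmem x).1 (Or.inr hx)
    have hD' : ∀ x x', (1 ≤ x ∧ x ≤ n) → (1 ≤ x' ∧ x' ≤ n) → m x = m x' → x ∈ D → x' ∈ D := by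
      intro x x' hx hx' e hxD
      rcases (hmem x').2 hx' with h1 | h1
      · exact absurd hxD (hnot x (h x' x hx' hx e.symm h1))
      · exact h1
    have hFP : ∀ E, E ≠ ∅ → (∀ x ∈ E, 1 ≤ x ∧ x ≤ n) →
        (∀ x x', (1 ≤ x ∧ x ≤ n) → (1 ≤ x' ∧ x' ≤ n) → m x = m x' → x ∈ E → x' ∈ E) →
        E = F (P E) := by
      intro E hE hEn hEs
      ext x
      rw [hF (P E) (hPne E hE hEn) (Finset.filter_subset _ _)]
      constructor
      · intro hx
        obtain ⟨y, hy, e⟩ := hv x (hEn x hx)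
        exact ⟨hEn x hx, y, (hP E y).2 ⟨hy, x, hx, e.symm⟩, e⟩
      · rintro ⟨hx, y, hy, e⟩
        obtain ⟨_, x', hx', e'⟩ := (hP E y).1 hy
        exact hEs x' x (hEn x' hx') hx (e'.trans e) hx'
    refine ⟨P C, P D, hPne C hC hCn, hPne D hD hDn, ?_, ?_, ?_⟩
    · rw [Finset.disjoint_left]
      intro y h1 h2
      obtain ⟨_, x, hx, e⟩ := (hP C y).1 h1
      obtain ⟨_, x', hx', e'⟩ := (hP D y).1 h2
      exact hnot x' (h x x' (hCn x hx) (hDn x' hx') (e.trans e'.symm) hx) hx'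
    · ext y
      rw [Finset.mem_union, hP, hP]
      constructor
      · intro hy
        obtain ⟨x, hx, e⟩ := hw y hy
        rcases (hmem x).2 hx with h1 | h1
        · exact Or.inl ⟨hy, x, h1, e⟩
        · exact Or.inr ⟨hy, x, h1, e⟩
      · rintro (h1 | h1) <;> exact h1.1
    · rw [← hFP C hC hCn h, ← hFP D hD hDn hD']

lemma class_iff {n a b : ℕ} {C D : Finset ℕ} (hCD : IsPart2 n C D) (ha : 1 ≤ a) (hb : b ≤ n)
    (hab : a ≤ b) (m : ℕ → ℕ)
    (hm : ∀ x x', (1 ≤ x ∧ x ≤ n) → (1 ≤ x' ∧ x' ≤ n) →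
      (m x = m x' ↔ x = x' ∨ ((a ≤ x ∧ x ≤ b) ∧ (a ≤ x' ∧ x' ≤ b)))) :
    (∀ x x', (1 ≤ x ∧ x ≤ n) → (1 ≤ x' ∧ x' ≤ n) → m x = m x' → x ∈ C → x' ∈ C) ↔
      (Finset.Icc a b ⊆ C ∨ Finset.Icc a b ⊆ D) := by
  obtain ⟨hC, hD, hdis, hun⟩ := hCD
  have hmem : ∀ x, (x ∈ C ∨ x ∈ D) ↔ 1 ≤ x ∧ x ≤ n := by
    intro x; rw [← Finset.mem_union, hun, Finset.mem_Icc]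
  have hnot : ∀ x, x ∈ C → x ∉ D := fun x h h' => Finset.disjoint_left.1 hdis h h'
  constructor
  · intro h
    rcases (hmem a).2 ⟨ha, by omega⟩ with h1 | h1
    · left
      intro x hx
      rw [Finset.mem_Icc] at hx
      exact h a x (by omega) (by omega) ((hm a x (by omega) (by omega)).2 (by omega)) h1
    · right
      intro x hx
      rw [Finset.mem_Icc] at hx
      rcases (hmem x).2 (by omega) with h2 | h2
      · exact absurd h1
          (hnot a (h x a (by omega) (by omega) ((hm x a (by omega) (by omega)).2 (by omega)) h2))
      · exact h2
  · intro h x x' hx hx' e hxC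
    rcases (hm x x' hx hx').1 e with rfl | ⟨h1, h2⟩
    · exact hxC
    · rcases h with h | h
      · exact h (Finset.mem_Icc.2 h2)
      · exact absurd (h (Finset.mem_Icc.2 h1)) (hnot x hxC)

lemma fmax_Icc (n : ℕ) : fmax (Finset.Icc 1 (n+1)) = n + 1 := by
  rw [fmax_eq_iff (Finset.nonempty_iff_ne_empty.1 ⟨1, by simp⟩)]
  exact ⟨by simp, fun x hx => (Finset.mem_Icc.1 hx).2⟩

lemma fmax_part {n : ℕ} {S T : Finset ℕ} (hST : IsPart2 (n+1) S T) :
    fmax S = fmax (Finset.Icc 1 (n+1)) ↔ n + 1 ∈ S := by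
  rw [fmax_Icc, fmax_eq_iff hST.1]
  refine ⟨fun h => h.1, fun h => ⟨h, fun x hx => ?_⟩⟩
  have : x ∈ Finset.Icc 1 (n+1) := by rw [← hST.2.2.2]; exact Finset.mem_union_left _ hx
  exact (Finset.mem_Icc.1 this).2

lemma box_upper {n : ℕ} {S T C D : Finset ℕ} (hST : IsPart2 (n+1) S T) (hCD : IsPart2 n C D)
    (hmax : n + 1 ∈ S) :
    (∃ Y Z, Y ≠ ∅ ∧ Z ≠ ∅ ∧ Disjoint Y Z ∧ T = Y ∪ Z ∧
      [C, D] = box (Finset.Icc 1 (n+1)) S [Y, Z]) ↔ memQ1s S.card n C D := by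
  have hb : ∀ Y Z, box (Finset.Icc 1 (n+1)) S [Y, Z] =
      [ucup (Finset.Icc 1 (n+1)) Y S, ucup (Finset.Icc 1 (n+1)) Z S] := by
    intro Y Z; unfold box; rw [if_pos ((fmax_part hST).2 hmax)]; rfl
  simp only [hb]
  obtain ⟨hS, hT, hd, hU⟩ := hST
  have hc : S.card + T.card = n + 1 := by
    rw [← Finset.card_union_of_disjoint hd, hU]; simp
  have hS0 : 0 < S.card := Finset.card_pos.2 (Finset.nonempty_iff_ne_empty.2 hS)
  have hT0 : 0 < T.card := Finset.card_pos.2 (Finset.nonempty_iff_ne_empty.2 hT)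
  rw [pull hCD (fun x => min x T.card) (fun x h1 h2 => by omega)
    (fun j h1 h2 => ⟨j, by omega, by omega⟩) (fun Y => ucup (Finset.Icc 1 (n+1)) Y S)
    (fun Y hY hYT x => mem_ucup hS hd hU hY hYT x)]
  unfold memQ1s
  rw [class_iff (a := n - S.card + 1) (b := n) hCD (by omega) le_rfl (by omega)
    (fun x => min x T.card) (fun x x' hx hx' => by omega)]
  exact ⟨fun h => ⟨hCD, h⟩, fun h => h.2⟩

lemma box_lower {n : ℕ} {S T C D : Finset ℕ} (hST : IsPart2 (n+1) S T) (hCD : IsPart2 n C D)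
    (hmax : n + 1 ∉ S) :
    (∃ Y Z, Y ≠ ∅ ∧ Z ≠ ∅ ∧ Disjoint Y Z ∧ T = Y ∪ Z ∧
      [C, D] = box (Finset.Icc 1 (n+1)) S [Y, Z]) ↔ memQr1 S.card n C D := by
  have hb : ∀ Y Z, box (Finset.Icc 1 (n+1)) S [Y, Z] =
      [lcup (Finset.Icc 1 (n+1)) S Y, lcup (Finset.Icc 1 (n+1)) S Z] := by
    intro Y Z; unfold box; rw [if_neg (fun h => hmax ((fmax_part hST).1 h))]; rfl
  simp only [hb]
  obtain ⟨hS, hT, hd, hU⟩ := hST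
  have hc : S.card + T.card = n + 1 := by
    rw [← Finset.card_union_of_disjoint hd, hU]; simp
  have hS0 : 0 < S.card := Finset.card_pos.2 (Finset.nonempty_iff_ne_empty.2 hS)
  have hT0 : 0 < T.card := Finset.card_pos.2 (Finset.nonempty_iff_ne_empty.2 hT)
  rw [pull hCD (fun x => x + 1 - min x S.card) (fun x h1 h2 => by omega)
    (fun j h1 h2 => ⟨j + S.card - 1, by omega, by omega⟩)
    (fun Y => lcup (Finset.Icc 1 (n+1)) S Y)
    (fun Y hY hYT x => mem_lcup hS hd hU hY hYT x)]
  unfold memQr1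
  rw [class_iff (a := 1) (b := S.card) hCD (by omega) (by omega) (by omega)
    (fun x => x + 1 - min x S.card) (fun x x' hx hx' => by omega)]
  exact ⟨fun h => ⟨hCD, h⟩, fun h => h.2⟩

/-- Let `A|B` be a 2-block ordered partition of `{1,…,n+1}` with
`#A = p`, `#B = q`, and let `C|D` be a 2-block ordered partition of `{1,…,n}`.  There
is a partition `X|Y|Z` of `{1,…,n+1}` into three nonempty sets with either
(`A = X`, `B = Y∪Z`, `C|D = X□(Y|Z)`) or (`A = X∪Y`, `B = Z`, `C|D = (X|Y)□Z`)
if and only if `C|D ∈ Q_{q,1}(n) ∪ Q_{1,p}(n)` when `n+1 ∈ A`, and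
`C|D ∈ Q_{p,1}(n) ∪ Q_{1,q}(n)` when `n+1 ∈ B`. -/
theorem statement14 (n : ℕ) (hn : 2 ≤ n) (A B C D : Finset ℕ)
    (hAB : IsPart2 (n+1) A B) (hCD : IsPart2 n C D) :
    (∃ X Y Z : Finset ℕ, X ≠ ∅ ∧ Y ≠ ∅ ∧ Z ≠ ∅ ∧
        Disjoint X Y ∧ Disjoint X Z ∧ Disjoint Y Z ∧
        X ∪ Y ∪ Z = Finset.Icc 1 (n+1) ∧
        ((A = X ∧ B = Y ∪ Z ∧ [C, D] = box (Finset.Icc 1 (n+1)) X [Y, Z]) ∨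
         (A = X ∪ Y ∧ B = Z ∧ [C, D] = box (Finset.Icc 1 (n+1)) Z [X, Y]))) ↔
      (((n+1) ∈ A ∧ (memQr1 B.card n C D ∨ memQ1s A.card n C D)) ∨
       ((n+1) ∈ B ∧ (memQr1 A.card n C D ∨ memQ1s B.card n C D))) := by
  have hBA : IsPart2 (n+1) B A :=
    ⟨hAB.2.1, hAB.1, hAB.2.2.1.symm, by rw [Finset.union_comm]; exact hAB.2.2.2⟩
  have hsplit : (∃ X Y Z : Finset ℕ, X ≠ ∅ ∧ Y ≠ ∅ ∧ Z ≠ ∅ ∧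
        Disjoint X Y ∧ Disjoint X Z ∧ Disjoint Y Z ∧
        X ∪ Y ∪ Z = Finset.Icc 1 (n+1) ∧
        ((A = X ∧ B = Y ∪ Z ∧ [C, D] = box (Finset.Icc 1 (n+1)) X [Y, Z]) ∨
         (A = X ∪ Y ∧ B = Z ∧ [C, D] = box (Finset.Icc 1 (n+1)) Z [X, Y]))) ↔
      ((∃ Y Z, Y ≠ ∅ ∧ Z ≠ ∅ ∧ Disjoint Y Z ∧ B = Y ∪ Z ∧
          [C, D] = box (Finset.Icc 1 (n+1)) A [Y, Z]) ∨
        (∃ Y Z, Y ≠ ∅ ∧ Z ≠ ∅ ∧ Disjoint Y Z ∧ A = Y ∪ Z ∧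
          [C, D] = box (Finset.Icc 1 (n+1)) B [Y, Z])) := by
    constructor
    · rintro ⟨X, Y, Z, hX, hY, hZ, hXY, hXZ, hYZ, hU, ⟨rfl, hB, h⟩ | ⟨hA, rfl, h⟩⟩
      · exact Or.inl ⟨Y, Z, hY, hZ, hYZ, hB, h⟩
      · exact Or.inr ⟨X, Y, hX, hY, hXY, hA, h⟩
    · rintro (⟨Y, Z, hY, hZ, hYZ, hB, h⟩ | ⟨X, Y, hX, hY, hXY, hA, h⟩)
      · have hd := hAB.2.2.1
        have hU := hAB.2.2.2
        rw [hB, Finset.disjoint_union_right] at hd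
        rw [hB, ← Finset.union_assoc] at hU
        exact ⟨A, Y, Z, hAB.1, hY, hZ, hd.1, hd.2, hYZ, hU, Or.inl ⟨rfl, hB, h⟩⟩
      · have hd := hAB.2.2.1
        have hU := hAB.2.2.2
        rw [hA, Finset.disjoint_union_left] at hd
        rw [hA] at hU
        exact ⟨X, Y, B, hX, hY, hAB.2.1, hXY, hd.1, hd.2, hU, Or.inr ⟨hA, rfl, h⟩⟩
  rw [hsplit]
  have hor : n + 1 ∈ A ∨ n + 1 ∈ B := by
    rw [← Finset.mem_union, hAB.2.2.2]; simp
  have hno : n + 1 ∈ A → n + 1 ∉ B := fun h h' => Finset.disjoint_left.1 hAB.2.2.1 h h'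
  by_cases hA : n + 1 ∈ A
  · rw [box_upper hAB hCD hA, box_lower hBA hCD (hno hA)]
    have := hno hA
    tauto
  · have hB : n + 1 ∈ B := by tauto
    rw [box_lower hAB hCD hA, box_upper hBA hCD hB]
    tauto

end SU
end
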